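/- Let (R, m, k) be a Noetherian local ring, S := R[X_1,…,X_n] a graded polynomial ring over R with deg X_i > 0 (and R in degree 0), and M a finitely generated graded S-module. Set M̄ := M ⊗_R k and d := dim(M̄). Then: the natural graded map H^d_{S_+}(M) ⊗_R k → H^d_{S_+}(M̄) is an isomorphism; d = max{ i : H^i_{S_+}(M) ≠ 0 } (in particular H^i_{S_+}(M) = 0 for i > d); and a^d(M) = a^d(M̄) ∈ ℤ. -/

import Mathlib

noncomputable section CechCore

variable (A : Type) [CommRing A] {n : ℕ} (x : Fin n → A)
  (M : Type) [AddCommGroup M] [Module A M]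

/-- The localization of `M` at the powers of `∏ i ∈ S, x i`. -/
abbrev cechL (S : Finset (Fin n)) : Type :=
  LocalizedModule (Submonoid.powers (∏ i ∈ S, x i)) M

/-- The `p`-th term of the (stable Koszul/Čech) complex of `M` with respect to `x`. -/
abbrev cechC (p : ℕ) : Type := ∀ S : {S : Finset (Fin n) // S.card = p}, cechL A x M S.1

/-- The localization map between Čech localizations, for `S ⊆ T`. -/
def cechMap (S T : Finset (Fin n)) (h : S ⊆ T) : cechL A x M S →ₗ[A] cechL A x M T :=
  LocalizedModule.lift _ (LocalizedModule.mkLinearMap (Submonoid.powers (∏ i ∈ T, x i)) M)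
    (by
      rintro ⟨s, k, rfl⟩
      simp only [map_pow]
      refine IsUnit.pow k ?_
      have hu : IsUnit ((algebraMap A (Module.End A (cechL A x M T))) (∏ i ∈ T, x i)) :=
        IsLocalizedModule.map_units (LocalizedModule.mkLinearMap _ M)
          ⟨∏ i ∈ T, x i, Submonoid.mem_powers _⟩
      have h2 : (∏ i ∈ T, x i) = (∏ i ∈ T \ S, x i) * ∏ i ∈ S, x i :=
        (Finset.prod_sdiff h).symm
      have hu' : IsUnit ((algebraMap A (Module.End A (cechL A x M T)))
          ((∏ i ∈ T \ S, x i) * ∏ i ∈ S, x i)) := by rw [← h2]; exact hu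
      rw [map_mul] at hu'
      exact (((Commute.all ((∏ i ∈ T \ S, x i)) (∏ i ∈ S, x i)).map
        (algebraMap A (Module.End A (cechL A x M T))).toMonoidHom).isUnit_mul_iff.mp hu').2)

/-- The Čech differential. -/
def cechD (p : ℕ) : cechC A x M p →ₗ[A] cechC A x M (p + 1) :=
  LinearMap.pi fun T =>
    ∑ j ∈ T.1.attach,
      ((-1 : A) ^ (T.1.filter (fun a => a < j.1)).card) •
        ((cechMap A x M (T.1.erase j.1) T.1 (Finset.erase_subset _ _)).comp
          (LinearMap.proj (⟨T.1.erase j.1, by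
            simp [Finset.card_erase_of_mem j.2, T.2]⟩ : {S : Finset (Fin n) // S.card = p})))

/-- `c` is a coboundary in the Čech complex. -/
def cechIsBoundary : (p : ℕ) → cechC A x M p → Prop
  | 0, c => c = 0
  | (q + 1), c => ∃ b : cechC A x M q, cechD A x M q b = c

/-- The degree-`μ` graded piece of a Čech localization, for a grading `ℳ` of `M`
over a grading of `A` in which `x i` has degree `w i`. -/
def cechGrade (ℳ : ℤ → AddSubgroup M) (w : Fin n → ℤ) (μ : ℤ) (S : Finset (Fin n)) :
    AddSubgroup (cechL A x M S) :=
  AddSubgroup.closure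
    {c | ∃ (m : M) (k : ℕ), m ∈ ℳ (μ + k * (∑ i ∈ S, w i)) ∧
      c = LocalizedModule.mk m ⟨(∏ i ∈ S, x i) ^ k, Submonoid.pow_mem _ (Submonoid.mem_powers _) k⟩}

/-- `H^i_{(x)}(M)_μ ≠ 0`: there is a homogeneous degree-`μ` cocycle in the Čech complex
which is not a coboundary.  This is the nonvanishing of the degree-`μ` part of the `i`-th
local cohomology of the graded module `M` supported on the ideal generated by `x`. -/
def lcGradeNonzero (ℳ : ℤ → AddSubgroup M) (w : Fin n → ℤ) (i : ℕ) (μ : ℤ) : Prop :=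
  ∃ c : cechC A x M i, (∀ T, c T ∈ cechGrade A x M ℳ w μ T.1) ∧
    cechD A x M i c = 0 ∧ ¬ cechIsBoundary A x M i c

/-- `H^i_{(x)}(M) = 0` : every Čech cocycle is a coboundary. -/
def lcVanish (i : ℕ) : Prop :=
  ∀ c : cechC A x M i, cechD A x M i c = 0 → cechIsBoundary A x M i c

/-- The map from the previous term of the Čech complex (declared as the zero map in
homological degree `0`). -/
def cechDprev : (i : ℕ) → (cechC A x M (i - 1) →ₗ[A] cechC A x M i)
  | 0 => 0
  | (q + 1) => cechD A x M q

/-- The `i`-th local cohomology module of `M` supported on the ideal generated by `x`,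
defined as cocycles modulo (cocycles ∩ boundaries) of the Čech complex. -/
def lcMod (i : ℕ) : Type :=
  ↥(LinearMap.ker (cechD A x M i)) ⧸
    (Submodule.comap (LinearMap.ker (cechD A x M i)).subtype
      (LinearMap.range (cechDprev A x M i)))

instance (i : ℕ) : AddCommGroup (lcMod A x M i) := by unfold lcMod; infer_instance
instance (i : ℕ) : Module A (lcMod A x M i) := by unfold lcMod; infer_instance

/-- The ideal of elements of positive degree of a graded ring. -/
def irrelevantIdeal (𝒜 : ℤ → AddSubgroup A) : Ideal A :=
  Ideal.span {a : A | ∃ μ > 0, a ∈ 𝒜 μ}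

end CechCore

noncomputable section TmulCore

variable (R : Type) [CommRing R] (S : Type) [CommRing S] [Algebra R S]
variable (M : Type) [AddCommGroup M] [Module R M] [Module S M] [IsScalarTower R S M]
variable (N : Type) [AddCommGroup N] [Module R N]

/-- The `S`-linear map `m ↦ m ⊗ n`. -/
def tmulRightS (nn : N) : M →ₗ[S] TensorProduct R M N where
  toFun := fun m => m ⊗ₜ[R] nn
  map_add' := fun a b => TensorProduct.add_tmul a b nn
  map_smul' := fun s m => by simp [TensorProduct.smul_tmul']

/-- The canonical map `(M_f) ⊗_R N → (M ⊗_R N)_f` at the level of Čech localizations,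
sending `m/f^k ⊗ n` to `(m ⊗ n)/f^k`. -/
def cechTmul {n : ℕ} (x : Fin n → S) (T : Finset (Fin n))
    (c : cechL S x M T) (nn : N) : cechL S x (TensorProduct R M N) T :=
  LocalizedModule.lift _
    ((LocalizedModule.mkLinearMap (Submonoid.powers (∏ i ∈ T, x i))
        (TensorProduct R M N)).comp (tmulRightS R S M N nn))
    (fun s => IsLocalizedModule.map_units
      (LocalizedModule.mkLinearMap (Submonoid.powers (∏ i ∈ T, x i)) (TensorProduct R M N)) s) c

end TmulCore


/-! ### Part 1: functoriality and basic properties of the Čech complex -/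

section CechFunctor

variable {A : Type} [CommRing A] {n : ℕ} (x : Fin n → A)
  {M : Type} [AddCommGroup M] [Module A M]
  {N : Type} [AddCommGroup N] [Module A N]
  {P : Type} [AddCommGroup P] [Module A P]

/-- The fraction `m / (∏ i ∈ S, x i) ^ k`. -/
noncomputable def dv (S : Finset (Fin n)) (m : M) (k : ℕ) : cechL A x M S :=
  LocalizedModule.mk m ⟨(∏ i ∈ S, x i) ^ k, Submonoid.pow_mem _ (Submonoid.mem_powers _) k⟩

theorem exists_dv (S : Finset (Fin n)) (c : cechL A x M S) : ∃ m k, c = dv x S m k := by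
  induction c using LocalizedModule.induction_on with
  | h m s =>
    obtain ⟨s, k, rfl⟩ := s
    exact ⟨m, k, rfl⟩

theorem dv_eq_iff (S : Finset (Fin n)) (m m' : M) (k l : ℕ) :
    dv x S m k = dv x S m' l ↔
      ∃ j, (∏ i ∈ S, x i) ^ (j + l) • m = (∏ i ∈ S, x i) ^ (j + k) • m' := by
  unfold dv
  rw [LocalizedModule.mk_eq]
  constructor
  · rintro ⟨⟨u, j, rfl⟩, h⟩
    refine ⟨j, ?_⟩
    simpa only [Submonoid.smul_def, smul_smul, ← pow_add] using h
  · rintro ⟨j, h⟩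
    refine ⟨⟨(∏ i ∈ S, x i) ^ j, j, rfl⟩, ?_⟩
    simpa only [Submonoid.smul_def, smul_smul, ← pow_add] using h

theorem dv_eq_zero_iff (S : Finset (Fin n)) (m : M) (k : ℕ) :
    dv x S m k = 0 ↔ ∃ j, (∏ i ∈ S, x i) ^ j • m = 0 := by
  have h0 : (0 : cechL A x M S) = dv x S 0 0 := by
    unfold dv; simp
  rw [h0, dv_eq_iff]
  simp

theorem dv_smul (S : Finset (Fin n)) (a : A) (m : M) (k : ℕ) :
    a • dv x S m k = dv x S (a • m) k := by
  unfold dv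
  rw [LocalizedModule.smul'_mk]

theorem dv_add (S : Finset (Fin n)) (m m' : M) (k : ℕ) :
    dv x S m k + dv x S m' k = dv x S (m + m') k := by
  unfold dv
  rw [LocalizedModule.mk_add_mk, LocalizedModule.mk_eq]
  refine ⟨1, ?_⟩
  simp only [one_smul, Submonoid.smul_def, Submonoid.coe_mul, smul_add, smul_smul]

theorem dv_zero (S : Finset (Fin n)) (k : ℕ) : dv x S (0 : M) k = 0 := by
  unfold dv; simp

theorem dv_shift (S : Finset (Fin n)) (m : M) (k l : ℕ) :
    dv x S ((∏ i ∈ S, x i) ^ l • m) (k + l) = dv x S m k := by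
  rw [dv_eq_iff]
  refine ⟨0, ?_⟩
  simp only [smul_smul, zero_add, ← pow_add]

theorem exists_dv₂ (S : Finset (Fin n)) (c : cechL A x M S) (c' : cechL A x M S) :
    ∃ m m' k, c = dv x S m k ∧ c' = dv x S m' k := by
  obtain ⟨m, k, rfl⟩ := exists_dv x S c
  obtain ⟨m', l, rfl⟩ := exists_dv x S c'
  refine ⟨(∏ i ∈ S, x i) ^ l • m, (∏ i ∈ S, x i) ^ k • m', k + l, ?_, ?_⟩
  · rw [dv_shift]
  · rw [add_comm, dv_shift]

/-- The map on Čech localizations induced by a linear map. -/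
noncomputable def locMap (S : Finset (Fin n)) (φ : M →ₗ[A] N) :
    cechL A x M S →ₗ[A] cechL A x N S :=
  IsLocalizedModule.map (Submonoid.powers (∏ i ∈ S, x i))
    (LocalizedModule.mkLinearMap _ M) (LocalizedModule.mkLinearMap _ N) φ

theorem locMap_dv (S : Finset (Fin n)) (φ : M →ₗ[A] N) (m : M) (k : ℕ) :
    locMap x S φ (dv x S m k) = dv x S (φ m) k :=
  IsLocalizedModule.map_LocalizedModules _ _ _ _

theorem cechMap_dv (S T : Finset (Fin n)) (h : S ⊆ T) (m : M) (k : ℕ) :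
    cechMap A x M S T h (dv x S m k) = dv x T ((∏ i ∈ T \ S, x i) ^ k • m) k := by
  have key : (∏ i ∈ S, x i) ^ k • cechMap A x M S T h (dv x S m k) =
      (∏ i ∈ S, x i) ^ k • dv x T ((∏ i ∈ T \ S, x i) ^ k • m) k := by
    rw [← map_smul, dv_smul, dv_smul, smul_smul, ← mul_pow, mul_comm, Finset.prod_sdiff h]
    have e1 : dv x S ((∏ i ∈ S, x i) ^ k • m) k = dv x S m 0 := by
      simpa using dv_shift x S m 0 k
    have e2 : dv x T ((∏ i ∈ T, x i) ^ k • m) k = dv x T m 0 := by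
      simpa using dv_shift x T m 0 k
    rw [e1, e2]
    have e3 : ∀ U : Finset (Fin n), dv x U m 0 = LocalizedModule.mkLinearMap _ M m := by
      intro U
      unfold dv
      simp [LocalizedModule.mkLinearMap_apply]
      rfl
    rw [e3, e3]
    unfold cechMap
    rw [LocalizedModule.mkLinearMap_apply, LocalizedModule.lift_mk_one]
  have hu : IsUnit ((algebraMap A (Module.End A (cechL A x M T))) (∏ i ∈ T, x i)) :=
    IsLocalizedModule.map_units (LocalizedModule.mkLinearMap _ M)
      ⟨∏ i ∈ T, x i, Submonoid.mem_powers _⟩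
  have hinj : Function.Injective fun u : cechL A x M T => (∏ i ∈ T, x i) • u :=
    ((Module.End.isUnit_iff _).mp hu).1
  have hinj' : ∀ k : ℕ, Function.Injective fun u : cechL A x M T => (∏ i ∈ S, x i) ^ k • u := by
    intro k
    induction k with
    | zero => intro u v huv; simpa using huv
    | succ k ih =>
      intro u v huv
      apply ih
      apply hinj
      simp only [pow_succ, ← Finset.prod_sdiff h, mul_smul] at huv ⊢
      have := congrArg (fun u => (∏ i ∈ T \ S, x i) • u) huv
      simp only [smul_smul] at this ⊢
      convert this using 2 <;> ring
  exact hinj' k key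

theorem cechMap_cechMap (S T U : Finset (Fin n)) (h : S ⊆ T) (h' : T ⊆ U) (c : cechL A x M S) :
    cechMap A x M T U h' (cechMap A x M S T h c) = cechMap A x M S U (h.trans h') c := by
  obtain ⟨m, k, rfl⟩ := exists_dv x S c
  rw [cechMap_dv, cechMap_dv, cechMap_dv, smul_smul, ← mul_pow]
  congr 3
  rw [← Finset.prod_union]
  · congr 1
    ext a
    simp only [Finset.mem_union, Finset.mem_sdiff]
    have := @h a; have := @h' a; tauto
  · rw [Finset.disjoint_left]
    intro a
    simp only [Finset.mem_sdiff]
    tauto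

theorem locMap_cechMap (S T : Finset (Fin n)) (h : S ⊆ T) (φ : M →ₗ[A] N) (c : cechL A x M S) :
    locMap x T φ (cechMap A x M S T h c) = cechMap A x N S T h (locMap x S φ c) := by
  obtain ⟨m, k, rfl⟩ := exists_dv x S c
  rw [cechMap_dv, locMap_dv, locMap_dv, cechMap_dv, map_smul]

/-- The map on Čech cochains induced by a linear map. -/
noncomputable def cechF (p : ℕ) (φ : M →ₗ[A] N) : cechC A x M p →ₗ[A] cechC A x N p :=
  LinearMap.pi fun T => (locMap x T.1 φ).comp (LinearMap.proj T)

theorem cechF_apply (p : ℕ) (φ : M →ₗ[A] N) (c : cechC A x M p) (T) :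
    cechF x p φ c T = locMap x T.1 φ (c T) := rfl

theorem cechD_def (p : ℕ) (c : cechC A x M p) (T) :
    cechD A x M p c T = ∑ j ∈ T.1.attach,
      ((-1 : A) ^ (T.1.filter (fun a => a < j.1)).card) •
        (cechMap A x M (T.1.erase j.1) T.1 (Finset.erase_subset _ _))
          (c ⟨T.1.erase j.1, by simp [Finset.card_erase_of_mem j.2, T.2]⟩) := by
  simp [cechD, LinearMap.sum_apply]

theorem cechD_cechF (p : ℕ) (φ : M →ₗ[A] N) (c : cechC A x M p) :
    cechD A x N p (cechF x p φ c) = cechF x (p + 1) φ (cechD A x M p c) := by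
  funext T
  rw [cechF_apply, cechD_def, cechD_def, map_sum]
  refine Finset.sum_congr rfl fun j _ => ?_
  rw [map_smul, cechF_apply, locMap_cechMap]

theorem cechDprev_cechF (p : ℕ) (φ : M →ₗ[A] N) (c : cechC A x M (p - 1)) :
    cechDprev A x N p (cechF x (p - 1) φ c) = cechF x p φ (cechDprev A x M p c) := by
  cases p with
  | zero => simp [cechDprev]
  | succ q => exact cechD_cechF x q φ c

theorem cechF_comp (p : ℕ) (φ : M →ₗ[A] N) (ψ : N →ₗ[A] P) (c : cechC A x M p) :
    cechF x p ψ (cechF x p φ c) = cechF x p (ψ.comp φ) c := by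
  funext T
  simp only [cechF_apply]
  obtain ⟨m, k, h⟩ := exists_dv x T.1 (c T)
  rw [h, locMap_dv, locMap_dv, locMap_dv, LinearMap.comp_apply]

theorem cechF_add (p : ℕ) (φ ψ : M →ₗ[A] N) (c : cechC A x M p) :
    cechF x p (φ + ψ) c = cechF x p φ c + cechF x p ψ c := by
  funext T
  simp only [cechF_apply, Pi.add_apply]
  obtain ⟨m, k, h⟩ := exists_dv x T.1 (c T)
  rw [h, locMap_dv, locMap_dv, locMap_dv, dv_add]
  rfl

theorem cechF_zero (p : ℕ) (c : cechC A x M p) :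
    cechF x p (0 : M →ₗ[A] N) c = 0 := by
  funext T
  simp only [cechF_apply]
  obtain ⟨m, k, h⟩ := exists_dv x T.1 (c T)
  rw [h, locMap_dv, LinearMap.zero_apply, dv_zero]
  rfl

theorem cechF_smul (p : ℕ) (a : A) (φ : M →ₗ[A] N) (c : cechC A x M p) :
    cechF x p (a • φ) c = a • cechF x p φ c := by
  funext T
  simp only [cechF_apply, Pi.smul_apply]
  obtain ⟨m, k, h⟩ := exists_dv x T.1 (c T)
  rw [h, locMap_dv, locMap_dv, dv_smul]
  rfl

theorem cechF_id (p : ℕ) (c : cechC A x M p) :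
    cechF x p (LinearMap.id : M →ₗ[A] M) c = c := by
  funext T
  simp only [cechF_apply]
  obtain ⟨m, k, h⟩ := exists_dv x T.1 (c T)
  rw [h, locMap_dv]
  rfl

theorem cechF_sum (p : ℕ) {ι : Type} (s : Finset ι) (φ : ι → (M →ₗ[A] N)) (c : cechC A x M p) :
    cechF x p (∑ i ∈ s, φ i) c = ∑ i ∈ s, cechF x p (φ i) c := by
  classical
  induction s using Finset.induction_on with
  | empty => simp [cechF_zero]
  | insert a s ha ih => rw [Finset.sum_insert ha, Finset.sum_insert ha, cechF_add, ih]

theorem cechF_injective (p : ℕ) (φ : M →ₗ[A] N) (h : Function.Injective φ) :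
    Function.Injective (cechF x p φ) := by
  intro c c' hcc
  funext T
  exact IsLocalizedModule.map_injective _ _ _ φ h (congrFun hcc T)

theorem cechF_surjective (p : ℕ) (φ : M →ₗ[A] N) (h : Function.Surjective φ) :
    Function.Surjective (cechF x p φ) := by
  intro c
  have h' : ∀ T : {S : Finset (Fin n) // S.card = p}, ∃ b, locMap x T.1 φ b = c T := by
    intro T
    exact IsLocalizedModule.map_surjective (Submonoid.powers (∏ i ∈ T.1, x i))
      (LocalizedModule.mkLinearMap _ M) (LocalizedModule.mkLinearMap _ N) φ h (c T)
  choose b hb using h'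
  exact ⟨b, funext hb⟩

theorem cechF_exact (p : ℕ) (φ : M →ₗ[A] N) (ψ : N →ₗ[A] P) (h : Function.Exact φ ψ)
    (c : cechC A x N p) (hc : cechF x p ψ c = 0) : ∃ b, cechF x p φ b = c := by
  have h' : ∀ T : {S : Finset (Fin n) // S.card = p}, ∃ b, locMap x T.1 φ b = c T := by
    intro T
    exact (IsLocalizedModule.map_exact (Submonoid.powers (∏ i ∈ T.1, x i))
      (LocalizedModule.mkLinearMap _ M) (LocalizedModule.mkLinearMap _ N)
      (LocalizedModule.mkLinearMap _ P) φ ψ h (c T)).mp (congrFun hc T)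
  choose b hb using h'
  exact ⟨b, funext hb⟩

/-- The value of a cochain at `S`, restricted to `T` (zero if this makes no sense). -/
noncomputable def cval {p : ℕ} (c : cechC A x M p) (T S : Finset (Fin n)) : cechL A x M T :=
  open Classical in
  if h : S ⊆ T ∧ S.card = p then cechMap A x M S T h.1 (c ⟨S, h.2⟩) else 0

theorem cval_of {p : ℕ} (c : cechC A x M p) (T S : Finset (Fin n)) (h : S ⊆ T) (h' : S.card = p) :
    cval x c T S = cechMap A x M S T h (c ⟨S, h'⟩) := by
  unfold cval
  rw [dif_pos ⟨h, h'⟩]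

theorem cechMap_self (S : Finset (Fin n)) (h : S ⊆ S) (c : cechL A x M S) :
    cechMap A x M S S h c = c := by
  obtain ⟨m, k, rfl⟩ := exists_dv x S c
  rw [cechMap_dv]
  simp

theorem cval_self {p : ℕ} (c : cechC A x M p) (T : {S : Finset (Fin n) // S.card = p}) :
    cval x c T.1 T.1 = c T := by
  rw [cval_of x c _ _ subset_rfl T.2, cechMap_self]

/-- The sign appearing in the Čech differential. -/
def csgn (A : Type) [CommRing A] {n : ℕ} (j : Fin n) (T : Finset (Fin n)) : A :=
  (-1 : A) ^ (T.filter (fun a => a < j)).card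

theorem cechD_apply' (p : ℕ) (c : cechC A x M p) (T) :
    cechD A x M p c T = ∑ j ∈ T.1, csgn A j T.1 • cval x c T.1 (T.1.erase j) := by
  rw [cechD_def, ← Finset.sum_attach T.1]
  refine Finset.sum_congr rfl fun j _ => ?_
  rw [cval_of x c T.1 _ (Finset.erase_subset _ _)
    (by simp [Finset.card_erase_of_mem j.2, T.2])]
  rfl

theorem cechMap_cval {p : ℕ} (c : cechC A x M p) (S T U : Finset (Fin n)) (h : S ⊆ T)
    (h' : T ⊆ U) : cechMap A x M T U h' (cval x c T S) = cval x c U S := by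
  by_cases hS : S.card = p
  · rw [cval_of x c T S h hS, cval_of x c U S (h.trans h') hS, cechMap_cechMap]
  · unfold cval
    rw [dif_neg (by tauto), dif_neg (by tauto), map_zero]

theorem cval_cechD (p : ℕ) (c : cechC A x M p) (T U : Finset (Fin n)) (h : T ⊆ U)
    (hT : T.card = p + 1) :
    cval x (cechD A x M p c) U T = ∑ j ∈ T, csgn A j T • cval x c U (T.erase j) := by
  rw [cval_of x _ U T h hT, cechD_apply', map_sum]
  refine Finset.sum_congr rfl fun j _ => ?_
  rw [map_smul, cechMap_cval x c _ _ _ (Finset.erase_subset _ _)]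

theorem csgn_erase_of_lt (i j : Fin n) (T : Finset (Fin n)) (hi : i ∈ T) (h : i < j) :
    csgn A j T = - csgn A j (T.erase i) := by
  unfold csgn
  rw [← Finset.insert_erase hi, Finset.filter_insert, if_pos h, Finset.card_insert_of_notMem,
    Finset.erase_insert (by simp), pow_succ]
  · ring
  · simp

theorem csgn_erase_of_le (i j : Fin n) (T : Finset (Fin n)) (h : j ≤ i) :
    csgn A j (T.erase i) = csgn A j T := by
  unfold csgn
  congr 2
  ext a
  simp only [Finset.mem_filter, Finset.mem_erase]
  constructor
  · tauto
  · rintro ⟨h1, h2⟩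
    exact ⟨⟨(h2.trans_le h).ne, h1⟩, h2⟩

theorem csgn_mul_self (j : Fin n) (T : Finset (Fin n)) : csgn A j T * csgn A j T = 1 := by
  unfold csgn
  rw [← mul_pow]
  simp

theorem csgn_swap (i j : Fin n) (T : Finset (Fin n)) (hi : i ∈ T) (hj : j ∈ T) (hij : i ≠ j) :
    csgn A j T * csgn A i (T.erase j) = - (csgn A i T * csgn A j (T.erase i)) := by
  rcases lt_or_gt_of_ne hij with h | h
  · rw [csgn_erase_of_lt i j T hi h, csgn_erase_of_le j i T h.le]
    ring
  · rw [csgn_erase_of_lt j i T hj h, csgn_erase_of_le i j T h.le]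
    ring

theorem cechD_cechD (p : ℕ) (c : cechC A x M p) :
    cechD A x M (p + 1) (cechD A x M p c) = 0 := by
  funext T
  rw [cechD_apply']
  have h1 : ∀ j ∈ T.1, csgn A j T.1 • cval x (cechD A x M p c) T.1 (T.1.erase j) =
      ∑ i ∈ T.1.erase j, (csgn A j T.1 * csgn A i (T.1.erase j)) •
        cval x c T.1 ((T.1.erase j).erase i) := by
    intro j hj
    rw [cval_cechD x p c _ _ (Finset.erase_subset _ _)
      (by rw [Finset.card_erase_of_mem hj, T.2]; rfl), Finset.smul_sum]
    simp only [smul_smul]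
  rw [Finset.sum_congr rfl h1, Finset.sum_sigma']
  refine Finset.sum_involution (fun a _ => ⟨a.2, a.1⟩) ?_ ?_ ?_ ?_
  · rintro ⟨j, i⟩ h
    simp only [Finset.mem_sigma, Finset.mem_erase] at h
    simp only
    rw [csgn_swap i j T.1 h.2.2 h.1 h.2.1, Finset.erase_right_comm]
    simp
  · rintro ⟨j, i⟩ h _ h'
    simp only [Finset.mem_sigma, Finset.mem_erase] at h
    simp only [Sigma.mk.injEq] at h'
    exact h.2.1 h'.1
  · rintro ⟨j, i⟩ h
    simp only [Finset.mem_sigma, Finset.mem_erase] at h ⊢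
    exact ⟨h.2.2, fun e => h.2.1 e.symm, h.1⟩
  · intro a _
    rfl

theorem cechD_cechDprev (p : ℕ) (c : cechC A x M (p - 1)) :
    cechD A x M p (cechDprev A x M p c) = 0 := by
  cases p with
  | zero => simp [cechDprev]
  | succ q => exact cechD_cechD x q c

end CechFunctor


/-! ### Part 2: vanishing, long exact sequence chases, torsion, comparison of sequences -/

section CechVanish

variable {A : Type} [CommRing A] {n : ℕ} (x : Fin n → A)
  {M : Type} [AddCommGroup M] [Module A M]
  {N : Type} [AddCommGroup N] [Module A N]
  {P : Type} [AddCommGroup P] [Module A P]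

/-- Vanishing of the `i`-th Čech cohomology. -/
def CV (N : Type) [AddCommGroup N] [Module A N] (i : ℕ) : Prop :=
  ∀ c : cechC A x N i, cechD A x N i c = 0 → ∃ b, cechDprev A x N i b = c

theorem CV_left (φ : M →ₗ[A] N) (ψ : N →ₗ[A] P) (hφ : Function.Injective φ)
    (hψ : Function.Surjective ψ) (hex : Function.Exact φ ψ) (i : ℕ)
    (h1 : CV x N (i + 1)) (h2 : CV x P i) : CV x M (i + 1) := by
  have hz : ∀ p (c : cechC A x M p), cechF x p ψ (cechF x p φ c) = 0 := by
    intro p c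
    rw [cechF_comp, hex.linearMap_comp_eq_zero, cechF_zero]
  intro z hzc
  obtain ⟨b, hb⟩ : ∃ b : cechC A x N i, cechD A x N i b = cechF x _ φ z :=
    h1 (cechF x _ φ z) (by rw [cechD_cechF, hzc, map_zero])
  obtain ⟨e, he⟩ := h2 (cechF x i ψ b) (by rw [cechD_cechF, hb, hz])
  obtain ⟨e, rfl⟩ := cechF_surjective x _ ψ hψ e
  rw [cechDprev_cechF] at he
  obtain ⟨a, ha⟩ := cechF_exact x i φ ψ hex (b - cechDprev A x N i e)
    (by rw [map_sub, he, sub_self])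
  refine ⟨a, ?_⟩
  change cechD A x M i a = z
  apply cechF_injective x _ φ hφ
  rw [← cechD_cechF, ha, map_sub, cechD_cechDprev, sub_zero, hb]

theorem CV_right (φ : M →ₗ[A] N) (ψ : N →ₗ[A] P) (hφ : Function.Injective φ)
    (hψ : Function.Surjective ψ) (hex : Function.Exact φ ψ) (i : ℕ)
    (h1 : CV x N i) (h2 : CV x M (i + 1)) : CV x P i := by
  have hz : ∀ p (c : cechC A x M p), cechF x p ψ (cechF x p φ c) = 0 := by
    intro p c
    rw [cechF_comp, hex.linearMap_comp_eq_zero, cechF_zero]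
  intro z hzc
  obtain ⟨b, rfl⟩ := cechF_surjective x _ ψ hψ z
  rw [cechD_cechF] at hzc
  obtain ⟨a, ha⟩ := cechF_exact x (i + 1) φ ψ hex _ hzc
  have hda : cechD A x M (i + 1) a = 0 := by
    apply cechF_injective x _ φ hφ
    rw [← cechD_cechF, ha, cechD_cechD, map_zero]
  obtain ⟨e, he⟩ : ∃ e : cechC A x M i, cechD A x M i e = a := h2 a hda
  obtain ⟨g, hg⟩ := h1 (b - cechF x i φ e) (by rw [map_sub, cechD_cechF, he, ha, sub_self])
  refine ⟨cechF x _ ψ g, ?_⟩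
  rw [cechDprev_cechF, hg, map_sub, hz, sub_zero]

/-- lifting of cocycles -/
theorem cocycle_lift (φ : M →ₗ[A] N) (ψ : N →ₗ[A] P) (hφ : Function.Injective φ)
    (hψ : Function.Surjective ψ) (hex : Function.Exact φ ψ) (i : ℕ)
    (h2 : CV x M (i + 1)) (z : cechC A x P i) (hz : cechD A x P i z = 0) :
    ∃ b, cechD A x N i b = 0 ∧ cechF x i ψ b = z := by
  obtain ⟨b, rfl⟩ := cechF_surjective x _ ψ hψ z
  rw [cechD_cechF] at hz
  obtain ⟨a, ha⟩ := cechF_exact x (i + 1) φ ψ hex _ hz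
  have hda : cechD A x M (i + 1) a = 0 := by
    apply cechF_injective x _ φ hφ
    rw [← cechD_cechF, ha, cechD_cechD, map_zero]
  obtain ⟨e, he⟩ : ∃ e : cechC A x M i, cechD A x M i e = a := h2 a hda
  refine ⟨b - cechF x i φ e, by rw [map_sub, cechD_cechF, he, ha, sub_self], ?_⟩
  rw [map_sub, cechF_comp, hex.linearMap_comp_eq_zero, cechF_zero, sub_zero]

theorem CV_mid (φ : M →ₗ[A] N) (ψ : N →ₗ[A] P) (hφ : Function.Injective φ)
    (hψ : Function.Surjective ψ) (hex : Function.Exact φ ψ) (i : ℕ)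
    (h1 : CV x M i) (h2 : CV x P i) : CV x N i := by
  intro z hz
  obtain ⟨e, he⟩ := h2 (cechF x i ψ z) (by rw [cechD_cechF, hz, map_zero])
  obtain ⟨e, rfl⟩ := cechF_surjective x _ ψ hψ e
  rw [cechDprev_cechF] at he
  obtain ⟨a, ha⟩ := cechF_exact x i φ ψ hex (z - cechDprev A x N i e)
    (by rw [map_sub, he, sub_self])
  obtain ⟨g, hg⟩ := h1 a (by
    apply cechF_injective x _ φ hφ
    rw [← cechD_cechF, ha, map_sub, hz, cechD_cechDprev, sub_zero, map_zero])
  refine ⟨e + cechF x _ φ g, ?_⟩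
  rw [map_add, cechDprev_cechF, hg, ha]
  abel

theorem exists_lift_insert (j : Fin n) (S : Finset (Fin n)) (hj : j ∉ S)
    (u : cechL A x M (insert j S)) :
    ∃ k b, cechMap A x M S (insert j S) (Finset.subset_insert _ _) b = x j ^ k • u := by
  obtain ⟨m, k, rfl⟩ := exists_dv x _ u
  refine ⟨k, dv x S m k, ?_⟩
  rw [cechMap_dv, dv_smul, Finset.insert_sdiff_cancel hj, Finset.prod_singleton]

theorem ker_insert (j : Fin n) (S : Finset (Fin n)) (hj : j ∉ S) (u : cechL A x M S)
    (hu : cechMap A x M S (insert j S) (Finset.subset_insert _ _) u = 0) :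
    ∃ k, x j ^ k • u = 0 := by
  obtain ⟨m, k, rfl⟩ := exists_dv x _ u
  rw [cechMap_dv, dv_eq_zero_iff, Finset.insert_sdiff_cancel hj, Finset.prod_singleton,
    Finset.prod_insert hj] at hu
  obtain ⟨l, hl⟩ := hu
  refine ⟨l + k, ?_⟩
  rw [dv_smul, dv_eq_zero_iff]
  refine ⟨l, ?_⟩
  rw [← hl, smul_smul, smul_smul]
  congr 1
  ring

theorem smul_ge_zero {a : A} {k K : ℕ} (h : k ≤ K) {u : M} (hu : a ^ k • u = 0) :
    a ^ K • u = 0 := by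
  obtain ⟨e, rfl⟩ := Nat.exists_eq_add_of_le h
  rw [add_comm, pow_add, mul_smul, hu, smul_zero]

theorem csgn_insert (a j : Fin n) (T : Finset (Fin n)) (ha : a ∈ T) (hj : j ∉ T) :
    csgn A a T * csgn A j (T.erase a) = - (csgn A j T * csgn A a (insert j T)) := by
  have hne : a ≠ j := fun h => hj (h ▸ ha)
  have h := csgn_swap (A := A) j a (insert j T) (by simp) (by simp [ha]) hne.symm
  rw [Finset.erase_insert hj] at h
  have h1 : csgn A j (insert j T) = csgn A j T := by
    have := csgn_erase_of_le (A := A) j j (insert j T) le_rfl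
    rw [Finset.erase_insert hj] at this
    exact this.symm
  have h2 : csgn A j ((insert j T).erase a) = csgn A j (T.erase a) := by
    have := csgn_erase_of_le (A := A) j j ((insert j T).erase a) le_rfl
    rw [← this, Finset.erase_right_comm, Finset.erase_insert hj]
  rw [h1, h2] at h
  -- `h : s_a(jT) s_j(T∖a) = - (s_j(T) s_a(T))`
  have e1 := csgn_mul_self (A := A) a T
  have e2 := csgn_mul_self (A := A) a (insert j T)
  have : csgn A a T * csgn A a (insert j T) * (csgn A a (insert j T) * csgn A j (T.erase a)) =
      csgn A a T * csgn A a (insert j T) * (-(csgn A j T * csgn A a T)) := by rw [h]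
  calc csgn A a T * csgn A j (T.erase a)
      = (csgn A a (insert j T) * csgn A a (insert j T)) * (csgn A a T * csgn A j (T.erase a)) := by
        rw [e2, one_mul]
    _ = _ := by linear_combination this - csgn A j T * csgn A a (insert j T) * e1

/-- Čech cohomology is torsion with respect to each of the elements of the sequence. -/
theorem cech_torsion (p : ℕ) (z : cechC A x M p) (hz : cechD A x M p z = 0) (j : Fin n) :
    ∃ k b, cechDprev A x M p b = x j ^ k • z := by
  classical
  cases p with
  | zero =>
    have h1 : ∀ T : {S : Finset (Fin n) // S.card = 0}, ∃ k, x j ^ k • z T = 0 := by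
      intro T
      have hT : T.1 = ∅ := Finset.card_eq_zero.mp T.2
      have hj : j ∉ T.1 := by simp [hT]
      apply ker_insert x j T.1 hj
      rw [← cval_of x z (insert j T.1) T.1 (Finset.subset_insert _ _) T.2]
      have h3 := congrArg (fun u => csgn A j (insert j T.1) • u)
        (cechD_apply' x 0 z ⟨insert j T.1, by simp [hT]⟩)
      rw [hz] at h3
      simp only [Pi.zero_apply, smul_zero] at h3
      rw [Finset.sum_eq_single j, smul_smul, csgn_mul_self, one_smul, Finset.erase_insert hj] at h3
      · exact h3.symm
      · intro b hb hbj
        simp [hT] at hb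
        exact absurd hb hbj
      · intro h; simp at h
    choose k hk using h1
    refine ⟨Finset.univ.sup k, 0, ?_⟩
    rw [map_zero]
    funext T
    exact (smul_ge_zero (Finset.le_sup (Finset.mem_univ T)) (hk T)).symm
  | succ q =>
    have h1 : ∀ S : {S : Finset (Fin n) // S.card = q}, ∃ k b, j ∉ S.1 →
        cechMap A x M S.1 (insert j S.1) (Finset.subset_insert _ _) b =
          x j ^ k • cval x z (insert j S.1) (insert j S.1) := by
      intro S
      by_cases hj : j ∈ S.1
      · exact ⟨0, 0, fun h => absurd hj h⟩
      · obtain ⟨k, b, h⟩ := exists_lift_insert x j S.1 hj (cval x z (insert j S.1) (insert j S.1))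
        exact ⟨k, b, fun _ => h⟩
    choose k b hb using h1
    set K := Finset.univ.sup k with hK
    let b' : cechC A x M q := fun S =>
      if j ∈ S.1 then 0 else csgn A j S.1 • x j ^ (K - k S) • b S
    have hb' : ∀ (S U : Finset (Fin n)) (hS : S.card = q) (hj : j ∉ S) (hU : insert j S ⊆ U),
        cval x b' U S = csgn A j S • x j ^ K • cval x z U (insert j S) := by
      intro S U hS hj hU
      rw [cval_of x b' U S ((Finset.subset_insert _ _).trans hU) hS]
      simp only [b', if_neg hj]
      have hb1 : cechMap A x M S (insert j S) (Finset.subset_insert _ _) (b ⟨S, hS⟩) =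
          x j ^ k ⟨S, hS⟩ • cval x z (insert j S) (insert j S) := hb ⟨S, hS⟩ hj
      rw [← cechMap_cechMap x S (insert j S) U (Finset.subset_insert _ _) hU, map_smul, map_smul,
        map_smul, hb1, smul_smul (x j ^ _), ← pow_add,
        Nat.sub_add_cancel (Finset.le_sup (Finset.mem_univ _)), map_smul,
        cechMap_cval x z _ _ _ subset_rfl]
    have hb0 : ∀ (S U : Finset (Fin n)), j ∈ S → cval x b' U S = 0 := by
      intro S U hj
      unfold cval
      split_ifs with h
      · simp only [b', if_pos hj, map_zero]
      · rfl
    have key : ∀ T : {S : Finset (Fin n) // S.card = q + 1}, ∃ l,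
        x j ^ l • (cechD A x M q b' T - x j ^ K • z T) = 0 := by
      intro T
      by_cases hj : j ∈ T.1
      · refine ⟨0, ?_⟩
        rw [cechD_apply', Finset.sum_eq_single j, hb' (T.1.erase j) T.1 _ (by simp) _,
          Finset.insert_erase hj, cval_self, smul_smul, csgn_erase_of_le _ _ _ le_rfl,
          csgn_mul_self, one_smul, sub_self, smul_zero]
        · rw [Finset.card_erase_of_mem hj, T.2]; rfl
        · rw [Finset.insert_erase hj]
        · intro a ha haj
          rw [hb0 _ _ (by simp [hj, haj.symm]), smul_zero]
        · intro h; exact absurd hj h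
      · apply ker_insert x j T.1 hj
        rw [map_sub, map_smul, cechD_apply', map_sum, ← cval_of x z _ _ _ T.2]
        have hU := cechD_apply' x (q + 1) z ⟨insert j T.1, by
          rw [Finset.card_insert_of_notMem hj, T.2]⟩
        rw [hz] at hU
        simp only [Pi.zero_apply] at hU
        rw [Finset.sum_insert hj, Finset.erase_insert hj] at hU
        have e1 : ∀ a ∈ T.1, cechMap A x M T.1 (insert j T.1) (Finset.subset_insert _ _)
            (csgn A a T.1 • cval x b' T.1 (T.1.erase a)) =
            -(csgn A j T.1 * x j ^ K) • (csgn A a (insert j T.1) •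
              cval x z (insert j T.1) ((insert j T.1).erase a)) := by
          intro a ha
          have hne : a ≠ j := fun h => hj (h ▸ ha)
          have hins : insert j (T.1.erase a) = (insert j T.1).erase a := by
            rw [Finset.erase_insert_of_ne hne.symm]
          rw [map_smul, cechMap_cval x b' _ _ _ (Finset.erase_subset _ _), hb' (T.1.erase a) _ _
            (fun h => hj (Finset.mem_of_mem_erase h)) (by rw [hins]; exact Finset.erase_subset _ _),
            hins, smul_smul, smul_smul, smul_smul, csgn_insert a j T.1 ha hj]
          · congr 1; ring
          · rw [Finset.card_erase_of_mem ha, T.2]; rfl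
        rw [Finset.sum_congr rfl e1, ← Finset.smul_sum]
        have h1 : csgn A j (insert j T.1) = csgn A j T.1 := by
          have := csgn_erase_of_le (A := A) j j (insert j T.1) le_rfl
          rw [Finset.erase_insert hj] at this
          exact this.symm
        rw [h1] at hU
        rw [eq_neg_of_add_eq_zero_right hU.symm, smul_neg, neg_smul, neg_neg, smul_smul,
          mul_right_comm, csgn_mul_self, one_mul, sub_self]
    choose l hl using key
    refine ⟨Finset.univ.sup l + K, x j ^ (Finset.univ.sup l) • b', ?_⟩
    change cechD A x M q _ = _
    rw [map_smul, pow_add, mul_smul, ← sub_eq_zero, ← smul_sub]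
    funext T
    exact smul_ge_zero (Finset.le_sup (Finset.mem_univ T)) (hl T)

/-- The ideal of elements which kill the class of a cochain. -/
noncomputable def bdIdeal (p : ℕ) (z : cechC A x M p) : Ideal A :=
  (LinearMap.range (cechDprev A x M p)).comap (LinearMap.toSpanSingleton A _ z)

theorem mem_bdIdeal (p : ℕ) (z : cechC A x M p) (a : A) :
    a ∈ bdIdeal x p z ↔ ∃ b, cechDprev A x M p b = a • z := by
  simp [bdIdeal]

theorem smul_cech_of_kill (p : ℕ) (z : cechC A x M p) (a : A) (ha : ∀ m : M, a • m = 0) :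
    a • z = 0 := by
  funext T
  obtain ⟨m, k, h⟩ := exists_dv x T.1 (z T)
  rw [Pi.smul_apply, h, dv_smul, ha, dv_zero]
  rfl

theorem cech_torsion_radical (J : Ideal A) (hJ : ∀ a ∈ J, ∀ m : M, a • m = 0) (p : ℕ)
    (z : cechC A x M p) (hz : cechD A x M p z = 0) (f : A)
    (hf : f ∈ (Ideal.span (Set.range x) ⊔ J).radical) :
    ∃ k b, cechDprev A x M p b = f ^ k • z := by
  have h : (Ideal.span (Set.range x) ⊔ J).radical ≤ (bdIdeal x p z).radical := by
    apply Ideal.radical_le_radical_iff.mpr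
    refine sup_le (Ideal.span_le.mpr ?_) ?_
    · rintro _ ⟨j, rfl⟩
      obtain ⟨k, b, hb⟩ := cech_torsion x p z hz j
      exact ⟨k, (mem_bdIdeal x p z _).mpr ⟨b, hb⟩⟩
    · intro a ha
      refine Ideal.le_radical ((mem_bdIdeal x p z _).mpr ⟨0, ?_⟩)
      rw [map_zero, smul_cech_of_kill x p z a (hJ a ha)]
  obtain ⟨k, hk⟩ := h hf
  exact ⟨k, (mem_bdIdeal x p z _).mp hk⟩

/-- If an element of the radical acts invertibly, then all Čech cohomology vanishes. -/
theorem CV_of_unit (J : Ideal A) (hJ : ∀ a ∈ J, ∀ m : M, a • m = 0) (f : A)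
    (hf : f ∈ (Ideal.span (Set.range x) ⊔ J).radical)
    (g : M →ₗ[A] M) (hg : ∀ m, f • g m = m) (p : ℕ) : CV x M p := by
  intro z hz
  obtain ⟨k, b, hb⟩ := cech_torsion_radical x J hJ p z hz f hf
  have hg1 : f • g = LinearMap.id := LinearMap.ext hg
  have hgk : ∀ k : ℕ, f ^ k • g ^ k = LinearMap.id := by
    intro k
    induction k with
    | zero => simp; rfl
    | succ k ih =>
      ext m
      have := congrArg (fun φ : M →ₗ[A] M => φ m) ih
      simp only [LinearMap.smul_apply, LinearMap.id_apply] at this ⊢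
      rw [pow_succ, mul_smul, pow_succ, Module.End.mul_apply, ← map_smul, hg]
      exact this
  refine ⟨cechF x _ (g ^ k) b, ?_⟩
  rw [cechDprev_cechF, hb, map_smul, ← cechF_smul, hgk, cechF_id]

theorem CV_pi {ι : Type} [Fintype ι] [DecidableEq ι] (L : ι → Type) [∀ i, AddCommGroup (L i)]
    [∀ i, Module A (L i)] (p : ℕ) (h : ∀ i, CV x (L i) p) : CV x (∀ i, L i) p := by
  intro z hz
  have hb : ∀ i, ∃ b, cechDprev A x (L i) p b = cechF x p (LinearMap.proj i) z := fun i =>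
    h i _ (by rw [cechD_cechF, hz, map_zero])
  choose b hb using hb
  refine ⟨∑ i, cechF x _ (LinearMap.single A L i) (b i), ?_⟩
  rw [map_sum]
  simp only [cechDprev_cechF, hb, cechF_comp]
  rw [← cechF_sum]
  convert cechF_id x p z
  ext m i
  simp [LinearMap.sum_apply, Finset.sum_apply, Finset.sum_pi_single]

/-- The submodule of elements killed by powers of each `x j`. -/
def tors (M : Type) [AddCommGroup M] [Module A M] : Submodule A M where
  carrier := {m | ∀ j, ∃ k, x j ^ k • m = 0}
  zero_mem' := fun j => ⟨0, by simp⟩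
  add_mem' := by
    intro a b ha hb j
    obtain ⟨k, hk⟩ := ha j
    obtain ⟨l, hl⟩ := hb j
    exact ⟨k + l, by rw [smul_add, smul_ge_zero (Nat.le_add_right k l) hk,
      smul_ge_zero (Nat.le_add_left l k) hl, add_zero]⟩
  smul_mem' := by
    intro c a ha j
    obtain ⟨k, hk⟩ := ha j
    exact ⟨k, by rw [smul_comm, hk, smul_zero]⟩

theorem mem_tors (m : M) : m ∈ tors x M ↔ ∀ j, ∃ k, x j ^ k • m = 0 := Iff.rfl

theorem CV_of_tors (h : ∀ m : M, m ∈ tors x M) (i : ℕ) : CV x M (i + 1) := by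
  intro z _
  refine ⟨0, ?_⟩
  rw [map_zero]
  funext T
  obtain ⟨j, hj⟩ : T.1.Nonempty := by
    rw [← Finset.card_pos, T.2]; omega
  obtain ⟨m, k, hm⟩ := exists_dv x T.1 (z T)
  rw [hm]
  obtain ⟨l, hl⟩ := h m j
  symm
  apply (dv_eq_zero_iff x T.1 m k).mpr
  refine ⟨l, ?_⟩
  rw [← Finset.mul_prod_erase _ _ hj, mul_pow, mul_comm, mul_smul, hl, smul_zero]

theorem CV_zero_iff : CV x M 0 ↔ ∀ m ∈ tors x M, m = 0 := by
  constructor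
  · intro h m hm
    obtain ⟨b, hb⟩ := h (fun T => dv x T.1 m 0) (by
      funext T
      rw [cechD_def]
      refine Finset.sum_eq_zero fun j _ => ?_
      rw [cechMap_dv, pow_zero, one_smul]
      obtain ⟨l, hl⟩ := hm j.1
      rw [(dv_eq_zero_iff x T.1 m 0).mpr ⟨l, ?_⟩, smul_zero]
      rw [← Finset.mul_prod_erase _ _ j.2, mul_pow, mul_comm, mul_smul, hl, smul_zero])
    have := congrFun hb ⟨∅, rfl⟩
    simp only [cechDprev, LinearMap.zero_apply, Pi.zero_apply] at this
    obtain ⟨j, hj⟩ := (dv_eq_zero_iff x ∅ m 0).mp this.symm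
    simpa using hj
  · intro h z hz
    refine ⟨0, ?_⟩
    rw [map_zero]
    funext T
    obtain ⟨m, k, hm⟩ := exists_dv x T.1 (z T)
    have hT : T.1 = ∅ := Finset.card_eq_zero.mp T.2
    have : m = 0 := by
      apply h
      intro j
      obtain ⟨l, b, hb⟩ := cech_torsion x 0 z hz j
      simp only [cechDprev, LinearMap.zero_apply] at hb
      have := congrFun hb T
      rw [Pi.smul_apply, hm, dv_smul] at this
      obtain ⟨i, hi⟩ := (dv_eq_zero_iff x T.1 _ k).mp this.symm
      refine ⟨l, ?_⟩
      rw [hT] at hi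
      simpa using hi
    rw [hm, this, dv_zero]
    rfl

theorem tors_eq {n' : ℕ} (y : Fin n' → A) (J : Ideal A) (hJ : ∀ a ∈ J, ∀ m : M, a • m = 0)
    (hy : ∀ j, y j ∈ (Ideal.span (Set.range x) ⊔ J).radical) : tors x M ≤ tors y M := by
  intro m hm j
  have h : (Ideal.span (Set.range x) ⊔ J).radical ≤
      Ideal.radical (LinearMap.ker (LinearMap.toSpanSingleton A M m)) := by
    apply Ideal.radical_le_radical_iff.mpr
    refine sup_le (Ideal.span_le.mpr ?_) ?_
    · rintro _ ⟨j, rfl⟩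
      obtain ⟨k, hk⟩ := hm j
      exact ⟨k, by simpa using hk⟩
    · intro a ha
      exact Ideal.le_radical (by simpa using hJ a ha m)
  obtain ⟨k, hk⟩ := h (hy j)
  exact ⟨k, by simpa using hk⟩

end CechVanish

section CechCompare

variable {A : Type} [CommRing A] {n n' : ℕ} (x : Fin n → A) (y : Fin n' → A)

/-- Čech cohomology vanishing only depends on the ideal up to radical. -/
theorem CV_compare (J : Ideal A)
    (hx : ∀ j, x j ∈ (Ideal.span (Set.range y) ⊔ J).radical)
    (hy : ∀ j, y j ∈ (Ideal.span (Set.range x) ⊔ J).radical) (i : ℕ) :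
    ∀ (N : Type) [AddCommGroup N] [Module A N], (∀ a ∈ J, ∀ m : N, a • m = 0) →
      (CV x N i ↔ CV y N i) := by
  induction i with
  | zero =>
    intro N _ _ hJ
    rw [CV_zero_iff, CV_zero_iff, le_antisymm (tors_eq x y J hJ hy) (tors_eq y x J hJ hx)]
  | succ i ih =>
    intro N _ _ hJ
    have hT : tors x N = tors y N := le_antisymm (tors_eq x y J hJ hy) (tors_eq y x J hJ hx)
    have hyy : ∀ j, y j ∈ (Ideal.span (Set.range y) ⊔ J).radical := fun j =>
      Ideal.le_radical (Ideal.mem_sup_left (Ideal.subset_span ⟨j, rfl⟩))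
    -- the torsion submodule
    let T := tors y N
    have hTx : ∀ m : T, m ∈ tors x T := by
      rintro ⟨m, hm⟩ j
      change m ∈ tors y N at hm
      rw [← hT] at hm
      obtain ⟨k, hk⟩ := hm j
      exact ⟨k, Subtype.ext hk⟩
    have hTy : ∀ m : T, m ∈ tors y T := by
      rintro ⟨m, hm⟩ j
      obtain ⟨k, hk⟩ := hm j
      exact ⟨k, Subtype.ext hk⟩
    have hexT : Function.Exact T.subtype T.mkQ := LinearMap.exact_subtype_mkQ T
    have s1 : CV x N (i + 1) ↔ CV x (N ⧸ T) (i + 1) :=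
      ⟨fun h => CV_right x T.subtype T.mkQ T.injective_subtype T.mkQ_surjective hexT _ h
        (CV_of_tors x hTx _), fun h => CV_mid x T.subtype T.mkQ T.injective_subtype
        T.mkQ_surjective hexT _ (CV_of_tors x hTx _) h⟩
    have s2 : CV y N (i + 1) ↔ CV y (N ⧸ T) (i + 1) :=
      ⟨fun h => CV_right y T.subtype T.mkQ T.injective_subtype T.mkQ_surjective hexT _ h
        (CV_of_tors y hTy _), fun h => CV_mid y T.subtype T.mkQ T.injective_subtype
        T.mkQ_surjective hexT _ (CV_of_tors y hTy _) h⟩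
    -- the product of localizations
    let L : Fin n' → Type := fun j => LocalizedModule (Submonoid.powers (y j)) N
    have hLJ : ∀ j, ∀ a ∈ J, ∀ m : L j, a • m = 0 := by
      intro j a ha m
      induction m using LocalizedModule.induction_on with
      | h m s => rw [LocalizedModule.smul'_mk, hJ a ha, LocalizedModule.zero_mk]
    have hunit : ∀ j, ∃ g : L j →ₗ[A] L j, ∀ m, y j • g m = m := by
      intro j
      have hu : IsUnit ((algebraMap A (Module.End A (L j))) (y j)) :=
        IsLocalizedModule.map_units (LocalizedModule.mkLinearMap (Submonoid.powers (y j)) N)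
          ⟨y j, Submonoid.mem_powers _⟩
      obtain ⟨u, hu⟩ := hu
      refine ⟨(u⁻¹ : (Module.End A (L j))ˣ).1, fun m => ?_⟩
      have := congrArg (fun φ : Module.End A (L j) => φ m) u.mul_inv
      rw [hu] at this
      exact this
    let ψ : N →ₗ[A] (∀ j, L j) :=
      LinearMap.pi fun j => LocalizedModule.mkLinearMap (Submonoid.powers (y j)) N
    have hker : LinearMap.ker ψ = T := by
      ext m
      change ψ m = 0 ↔ m ∈ tors y N
      rw [mem_tors, funext_iff]
      refine forall_congr' fun j => ?_
      change LocalizedModule.mkLinearMap (Submonoid.powers (y j)) N m = 0 ↔ _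
      rw [IsLocalizedModule.eq_zero_iff (Submonoid.powers (y j))]
      constructor
      · rintro ⟨⟨_, ⟨k, rfl⟩⟩, hk⟩
        exact ⟨k, hk⟩
      · rintro ⟨k, hk⟩
        exact ⟨⟨_, ⟨k, rfl⟩⟩, hk⟩
    let φ : (N ⧸ T) →ₗ[A] (∀ j, L j) := T.liftQ ψ hker.ge
    have hφ : Function.Injective φ := by
      rw [← LinearMap.ker_eq_bot]
      exact Submodule.ker_liftQ_eq_bot _ _ _ hker.le
    let Q := (∀ j, L j) ⧸ LinearMap.range φ
    have hexL : Function.Exact φ (LinearMap.range φ).mkQ :=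
      LinearMap.exact_map_mkQ_range φ
    have hLx : ∀ p, CV x (∀ j, L j) p := fun p => CV_pi x L p fun j => by
      obtain ⟨g, hg⟩ := hunit j
      exact CV_of_unit x J (hLJ j) (y j) (hy j) g hg p
    have hLy : ∀ p, CV y (∀ j, L j) p := fun p => CV_pi y L p fun j => by
      obtain ⟨g, hg⟩ := hunit j
      exact CV_of_unit y J (hLJ j) (y j) (hyy j) g hg p
    have hQJ : ∀ a ∈ J, ∀ m : Q, a • m = 0 := by
      intro a ha m
      obtain ⟨m, rfl⟩ := Submodule.mkQ_surjective _ m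
      rw [← map_smul, show a • m = 0 from funext fun j => hLJ j a ha (m j), map_zero]
    have hsurj := (LinearMap.range φ).mkQ_surjective
    have t1 : CV x (N ⧸ T) (i + 1) ↔ CV x Q i :=
      ⟨fun h => CV_right x φ _ hφ hsurj hexL i (hLx _) h,
        fun h => CV_left x φ _ hφ hsurj hexL i (hLx _) h⟩
    have t2 : CV y (N ⧸ T) (i + 1) ↔ CV y Q i :=
      ⟨fun h => CV_right y φ _ hφ hsurj hexL i (hLy _) h,
        fun h => CV_left y φ _ hφ hsurj hexL i (hLy _) h⟩
    rw [s1, s2, t1, t2]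
    exact ih Q hQJ

theorem CV_of_card_lt (M : Type) [AddCommGroup M] [Module A M] (i : ℕ) (h : n < i) : CV x M i := by
  intro z _
  refine ⟨0, ?_⟩
  funext T
  have := Finset.card_le_univ T.1
  rw [T.2, Fintype.card_fin] at this
  omega

end CechCompare


/-! ### Part 3: graded structures -/

set_option linter.unusedSectionVars false

section GradedStructure

open MvPolynomial

/-- A graded structure on a module over a weighted polynomial ring, given by its projections. -/
structure GS {R : Type} [CommRing R] {n : ℕ} (w : Fin n → ℤ) (N : Type) [AddCommGroup N]
    [Module (MvPolynomial (Fin n) R) N] [Module R N]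
    [IsScalarTower R (MvPolynomial (Fin n) R) N] where
  p : ℤ → N →ₗ[R] N
  p_X : ∀ μ i m, p (μ + w i) ((X i : MvPolynomial (Fin n) R) • m) =
    (X i : MvPolynomial (Fin n) R) • p μ m
  p_p : ∀ μ ν m, p μ (p ν m) = if μ = ν then p ν m else 0
  p_sum : ∀ m, ∃ s : Finset ℤ, ∑ μ ∈ s, p μ m = m

variable {R : Type} [CommRing R] {n : ℕ} {w : Fin n → ℤ} {N : Type} [AddCommGroup N]
    [Module (MvPolynomial (Fin n) R) N] [Module R N]
    [IsScalarTower R (MvPolynomial (Fin n) R) N] (G : GS (R := R) w N)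

namespace GS

theorem p_zero_of (m : N) : ∃ s : Finset ℤ, ∀ ν, ν ∉ s → G.p ν m = 0 := by
  obtain ⟨s, hs⟩ := G.p_sum m
  refine ⟨s, fun ν hν => ?_⟩
  rw [← hs, map_sum]
  refine Finset.sum_eq_zero fun μ hμ => ?_
  rw [G.p_p, if_neg (fun h : ν = μ => hν (h ▸ hμ))]

theorem p_sum_ge (m : N) : ∃ s : Finset ℤ, ∀ s', s ⊆ s' → ∑ μ ∈ s', G.p μ m = m := by
  obtain ⟨s, hs⟩ := G.p_sum m
  refine ⟨s, fun s' h => ?_⟩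
  rw [← Finset.sum_subset h, hs]
  intro ν _ hν
  rw [← hs, map_sum]
  refine Finset.sum_eq_zero fun μ hμ => ?_
  rw [G.p_p, if_neg (fun h : ν = μ => hν (h ▸ hμ))]

theorem p_ext (m m' : N) (h : ∀ μ, G.p μ m = G.p μ m') : m = m' := by
  obtain ⟨s, hs⟩ := G.p_sum_ge m
  obtain ⟨s', hs'⟩ := G.p_sum_ge m'
  classical
  rw [← hs (s ∪ s') Finset.subset_union_left, ← hs' (s ∪ s') Finset.subset_union_right]
  exact Finset.sum_congr rfl fun μ _ => h μ

theorem p_monomial (e : Fin n →₀ ℕ) (r : R) (μ : ℤ) (m : N) :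
    G.p (μ + Finsupp.weight w e) (monomial e r • m) = monomial e r • G.p μ m := by
  induction e using Finsupp.induction generalizing μ m r with
  | zero =>
    rw [map_zero, add_zero, ← C_apply, ← algebraMap_eq, algebraMap_smul, algebraMap_smul, map_smul]
  | single_add i k e hi hk ih =>
    clear hi hk
    induction k with
    | zero => simpa using ih r μ m
    | succ k ihk =>
      have e1 : (monomial (Finsupp.single i (k + 1) + e) r : MvPolynomial (Fin n) R) =
          X i * monomial (Finsupp.single i k + e) r := by
        rw [X, monomial_mul, one_mul, ← add_assoc, ← Finsupp.single_add, add_comm 1 k]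
      have e2 : μ + Finsupp.weight w (Finsupp.single i (k + 1) + e) =
          (μ + Finsupp.weight w (Finsupp.single i k + e)) + w i := by
        simp only [map_add, Finsupp.weight_single]
        rw [succ_nsmul]
        abel
      rw [e1, e2, mul_smul, G.p_X, ihk, mul_smul]

theorem p_hom {f : MvPolynomial (Fin n) R} {δ : ℤ} (hf : IsWeightedHomogeneous w f δ) (μ : ℤ)
    (m : N) : G.p (μ + δ) (f • m) = f • G.p μ m := by
  conv_lhs => rw [f.as_sum, Finset.sum_smul, map_sum]
  conv_rhs => rw [f.as_sum, Finset.sum_smul]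
  refine Finset.sum_congr rfl fun e he => ?_
  have : Finsupp.weight w e = δ := hf (by simpa using he)
  rw [← this, p_monomial]

end GS

noncomputable abbrev XX (R : Type) [CommRing R] (n : ℕ) : Fin n → MvPolynomial (Fin n) R := fun j => X j

theorem hom_prod (S : Finset (Fin n)) (k : ℕ) :
    IsWeightedHomogeneous w ((∏ i ∈ S, XX R n i) ^ k) (k * ∑ i ∈ S, w i) := by
  have h := IsWeightedHomogeneous.prod S (fun i => XX R n i) w
    (fun i _ => isWeightedHomogeneous_X R w i)
  have := h.pow k
  rwa [nsmul_eq_mul] at this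

theorem pL_wd (μ : ℤ) (T : Finset (Fin n)) (m m' : N) (k l : ℕ)
    (h : dv (XX R n) T m k = dv (XX R n) T m' l) :
    dv (XX R n) T (G.p (μ + k * ∑ i ∈ T, w i) m) k =
      dv (XX R n) T (G.p (μ + l * ∑ i ∈ T, w i) m') l := by
  rw [dv_eq_iff] at h ⊢
  obtain ⟨j, hj⟩ := h
  refine ⟨j, ?_⟩
  rw [← G.p_hom (hom_prod T (j + l)), ← G.p_hom (hom_prod T (j + k)), hj]
  congr 2
  push_cast
  ring

/-- projections on the Čech localizations -/
noncomputable def pL (μ : ℤ) (T : Finset (Fin n)) :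
    cechL _ (XX R n) N T → cechL _ (XX R n) N T := fun c =>
  dv (XX R n) T (G.p (μ + (exists_dv (XX R n) T c).choose_spec.choose * ∑ i ∈ T, w i)
    (exists_dv (XX R n) T c).choose) (exists_dv (XX R n) T c).choose_spec.choose

theorem pL_dv (μ : ℤ) (T : Finset (Fin n)) (m : N) (k : ℕ) :
    pL G μ T (dv (XX R n) T m k) = dv (XX R n) T (G.p (μ + k * ∑ i ∈ T, w i) m) k :=
  pL_wd G _ _ _ _ _ _ (exists_dv (XX R n) T (dv (XX R n) T m k)).choose_spec.choose_spec.symm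

theorem pL_hom {f : MvPolynomial (Fin n) R} {δ : ℤ} (hf : IsWeightedHomogeneous w f δ) (μ : ℤ)
    (T : Finset (Fin n)) (c : cechL _ (XX R n) N T) :
    pL G (μ + δ) T (f • c) = f • pL G μ T c := by
  obtain ⟨m, k, rfl⟩ := exists_dv _ _ c
  rw [dv_smul, pL_dv, pL_dv, dv_smul, ← G.p_hom hf]
  congr 2
  ring

theorem pL_add (μ : ℤ) (T : Finset (Fin n)) (c c' : cechL _ (XX R n) N T) :
    pL G μ T (c + c') = pL G μ T c + pL G μ T c' := by
  obtain ⟨m, m', k, rfl, rfl⟩ := exists_dv₂ _ _ c c'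
  rw [dv_add, pL_dv, pL_dv, pL_dv, dv_add, map_add]

/-- projections on the Čech cochains -/
noncomputable def pC (i : ℕ) (μ : ℤ) : cechC _ (XX R n) N i →ₗ[R] cechC _ (XX R n) N i where
  toFun c := fun T => pL G μ T.1 (c T)
  map_add' c c' := funext fun T => pL_add G μ T.1 _ _
  map_smul' r c := by
    funext T
    have := pL_hom G (isWeightedHomogeneous_C w r) μ T.1 (c T)
    rw [add_zero, ← algebraMap_eq, algebraMap_smul, algebraMap_smul] at this
    exact this

theorem pC_apply (i : ℕ) (μ : ℤ) (c : cechC _ (XX R n) N i) (T) :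
    pC G i μ c T = pL G μ T.1 (c T) := rfl

theorem pC_hom {f : MvPolynomial (Fin n) R} {δ : ℤ} (hf : IsWeightedHomogeneous w f δ) (i : ℕ)
    (μ : ℤ) (c : cechC _ (XX R n) N i) :
    pC G i (μ + δ) (f • c) = f • pC G i μ c :=
  funext fun T => pL_hom G hf μ T.1 (c T)

theorem pC_pC (i : ℕ) (μ ν : ℤ) (c : cechC _ (XX R n) N i) :
    pC G i μ (pC G i ν c) = if μ = ν then pC G i ν c else 0 := by
  funext T
  obtain ⟨m, k, h⟩ := exists_dv _ _ (c T)
  rw [pC_apply, pC_apply, h, pL_dv, pL_dv, G.p_p]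
  by_cases hμ : μ = ν
  · rw [if_pos hμ, if_pos (by rw [hμ]), pC_apply, h, pL_dv]
  · rw [if_neg hμ, if_neg (fun h => hμ (add_right_cancel h)), dv_zero]
    rfl

theorem dv_sum {ι : Type} (T : Finset (Fin n)) (s : Finset ι) (m : ι → N) (k : ℕ) :
    ∑ i ∈ s, dv (XX R n) T (m i) k = dv (XX R n) T (∑ i ∈ s, m i) k := by
  classical
  induction s using Finset.induction_on with
  | empty => simp [dv_zero]
  | insert a s ha ih => rw [Finset.sum_insert ha, Finset.sum_insert ha, ih, dv_add]

theorem pC_sum (i : ℕ) (c : cechC _ (XX R n) N i) :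
    ∃ s : Finset ℤ, ∑ μ ∈ s, pC G i μ c = c := by
  classical
  have h : ∀ T : {S : Finset (Fin n) // S.card = i}, ∃ s : Finset ℤ, ∀ s', s ⊆ s' →
      ∑ μ ∈ s', pL G μ T.1 (c T) = c T := by
    intro T
    obtain ⟨m, k, h⟩ := exists_dv _ _ (c T)
    obtain ⟨s, hs⟩ := G.p_sum_ge m
    refine ⟨s.image (fun μ => μ - k * ∑ i ∈ T.1, w i), fun s' hs' => ?_⟩
    rw [h]
    simp only [pL_dv]
    rw [dv_sum, ← Finset.sum_image (s := s') (g := fun μ => μ + k * ∑ i ∈ T.1, w i)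
      (f := fun μ => G.p μ m), hs]
    · intro μ hμ
      refine Finset.mem_image.mpr ⟨μ - k * ∑ i ∈ T.1, w i, hs' (Finset.mem_image_of_mem _ hμ), ?_⟩
      ring
    · intro a _ b _ hab
      exact add_right_cancel hab
  choose s hs using h
  refine ⟨Finset.univ.biUnion s, ?_⟩
  funext T
  rw [Finset.sum_apply]
  exact hs T _ (Finset.subset_biUnion_of_mem s (Finset.mem_univ T))

theorem cechMap_pL (S T : Finset (Fin n)) (h : S ⊆ T) (μ : ℤ) (c : cechL _ (XX R n) N S) :
    cechMap _ (XX R n) N S T h (pL G μ S c) = pL G μ T (cechMap _ (XX R n) N S T h c) := by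
  obtain ⟨m, k, rfl⟩ := exists_dv _ _ c
  rw [pL_dv, cechMap_dv, cechMap_dv, pL_dv, ← G.p_hom (hom_prod (T \ S) k)]
  congr 2
  rw [add_assoc, ← mul_add, add_comm (∑ i ∈ S, w i), Finset.sum_sdiff h]

theorem cechD_pC (i : ℕ) (μ : ℤ) (c : cechC _ (XX R n) N i) :
    cechD _ (XX R n) N i (pC G i μ c) = pC G (i + 1) μ (cechD _ (XX R n) N i c) := by
  funext T
  let φ : cechL _ (XX R n) N T.1 →+ cechL _ (XX R n) N T.1 :=
    AddMonoidHom.mk' (pL G μ T.1) (pL_add G μ T.1)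
  rw [pC_apply, cechD_def, cechD_def]
  change _ = φ _
  rw [map_sum]
  refine Finset.sum_congr rfl fun j _ => ?_
  rw [pC_apply, cechMap_pL]
  have h1 : IsWeightedHomogeneous w ((-1 : MvPolynomial (Fin n) R) ^
      (T.1.filter (fun a => a < j.1)).card) 0 := by
    rw [show ((-1 : MvPolynomial (Fin n) R) ^ (T.1.filter (fun a => a < j.1)).card) =
      C ((-1) ^ (T.1.filter (fun a => a < j.1)).card) by simp]
    exact isWeightedHomogeneous_C w _
  have := pL_hom G h1 μ T.1 (cechMap _ (XX R n) N (T.1.erase j.1) T.1 (Finset.erase_subset _ _)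
    (c ⟨T.1.erase j.1, by simp [Finset.card_erase_of_mem j.2, T.2]⟩))
  rw [add_zero] at this
  exact this.symm

theorem cechDprev_pC (i : ℕ) (μ : ℤ) (c : cechC _ (XX R n) N (i - 1)) :
    cechDprev _ (XX R n) N i (pC G (i - 1) μ c) = pC G i μ (cechDprev _ (XX R n) N i c) := by
  cases i with
  | zero => simp [cechDprev]
  | succ q => exact cechD_pC G q μ c

variable {N' : Type} [AddCommGroup N']
    [Module (MvPolynomial (Fin n) R) N'] [Module R N']
    [IsScalarTower R (MvPolynomial (Fin n) R) N'] (G' : GS (R := R) w N')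

theorem cechF_pC (φ : N →ₗ[MvPolynomial (Fin n) R] N') (hφ : ∀ μ m, φ (G.p μ m) = G'.p μ (φ m))
    (i : ℕ) (μ : ℤ) (c : cechC _ (XX R n) N i) :
    cechF (XX R n) i φ (pC G i μ c) = pC G' i μ (cechF (XX R n) i φ c) := by
  funext T
  obtain ⟨m, k, h⟩ := exists_dv _ _ (c T)
  rw [cechF_apply, pC_apply, pC_apply, cechF_apply, h, pL_dv, locMap_dv, locMap_dv, pL_dv, hφ]

/-- The graded structure on the quotient by a homogeneous element. -/
noncomputable def GS.quot {f : MvPolynomial (Fin n) R} {δ : ℤ} (hf : IsWeightedHomogeneous w f δ) :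
    GS (R := R) w (N ⧸ LinearMap.range (LinearMap.lsmul (MvPolynomial (Fin n) R) N f)) where
  p μ := Submodule.mapQ
    ((LinearMap.range (LinearMap.lsmul (MvPolynomial (Fin n) R) N f)).restrictScalars R)
    ((LinearMap.range (LinearMap.lsmul (MvPolynomial (Fin n) R) N f)).restrictScalars R) (G.p μ) (by
      rintro _ ⟨m, rfl⟩
      refine ⟨G.p (μ - δ) m, ?_⟩
      rw [LinearMap.lsmul_apply, LinearMap.lsmul_apply, ← G.p_hom hf, sub_add_cancel])
  p_X μ i m := by
    obtain ⟨m, rfl⟩ := Submodule.mkQ_surjective _ m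
    exact congrArg (Submodule.mkQ _) (G.p_X μ i m)
  p_p μ ν m := by
    obtain ⟨m, rfl⟩ := Submodule.mkQ_surjective _ m
    refine (congrArg (Submodule.mkQ _) (G.p_p μ ν m)).trans ?_
    split_ifs
    · rfl
    · rfl
  p_sum m := by
    obtain ⟨m, rfl⟩ := Submodule.mkQ_surjective _ m
    obtain ⟨s, hs⟩ := G.p_sum m
    refine ⟨s, ?_⟩
    conv_rhs => rw [← hs, map_sum]
    rfl

theorem GS.quot_mk {f : MvPolynomial (Fin n) R} {δ : ℤ} (hf : IsWeightedHomogeneous w f δ)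
    (μ : ℤ) (m : N) :
    (LinearMap.range (LinearMap.lsmul (MvPolynomial (Fin n) R) N f)).mkQ (G.p μ m) =
      (G.quot hf).p μ
        ((LinearMap.range (LinearMap.lsmul (MvPolynomial (Fin n) R) N f)).mkQ m) := rfl

open TensorProduct in
/-- The graded structure on the tensor product with an `R`-module. -/
noncomputable def GS.tens (k : Type) [AddCommGroup k] [Module R k] :
    GS (R := R) w (N ⊗[R] k) where
  p μ := LinearMap.rTensor k (G.p μ)
  p_X μ i m := by
    induction m using TensorProduct.induction_on with
    | zero => simp
    | tmul m c => simp [TensorProduct.smul_tmul', G.p_X]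
    | add a b ha hb => simp only [smul_add, map_add, ha, hb]
  p_p μ ν m := by
    induction m using TensorProduct.induction_on with
    | zero => simp
    | tmul m c =>
      simp only [LinearMap.rTensor_tmul, G.p_p]
      split_ifs <;> simp
    | add a b ha hb =>
      simp only [map_add, ha, hb]
      split_ifs <;> simp
  p_sum m := by
    classical
    suffices h : ∃ s : Finset ℤ, ∀ s', s ⊆ s' →
        ∑ μ ∈ s', LinearMap.rTensor k (G.p μ) m = m by
      obtain ⟨s, hs⟩ := h
      exact ⟨s, hs s subset_rfl⟩
    induction m using TensorProduct.induction_on with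
    | zero => exact ⟨∅, fun s' _ => by simp⟩
    | tmul m c =>
      obtain ⟨s, hs⟩ := G.p_sum_ge m
      refine ⟨s, fun s' h => ?_⟩
      simp only [LinearMap.rTensor_tmul]
      rw [← TensorProduct.sum_tmul, hs s' h]
    | add a b ha hb =>
      obtain ⟨s, hs⟩ := ha
      obtain ⟨s₂, hs₂⟩ := hb
      refine ⟨s ∪ s₂, fun s' h => ?_⟩
      simp only [map_add, Finset.sum_add_distrib]
      rw [hs s' (Finset.union_subset_left h), hs₂ s' (Finset.union_subset_right h)]

/-- The graded structure from a decomposition. -/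
noncomputable def GS.ofDecomp (ℳ : ℤ → AddSubgroup N) [DirectSum.Decomposition ℳ]
    [SetLike.GradedSMul (weightedHomogeneousSubmodule R w) ℳ] : GS (R := R) w N where
  p μ :=
    { toFun := fun m => (DirectSum.decompose ℳ m μ : N)
      map_add' := fun a b => by simp
      map_smul' := fun r m => by
        classical
        induction m using DirectSum.Decomposition.inductionOn ℳ with
        | zero => simp
        | homogeneous m =>
          rename_i ν
          have h : r • (m : N) ∈ ℳ ν := by
            have := SetLike.GradedSMul.smul_mem (A := weightedHomogeneousSubmodule R w) (B := ℳ)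
              ((mem_weightedHomogeneousSubmodule R w 0 (C r)).mpr (isWeightedHomogeneous_C w r)) m.2
            rw [← algebraMap_eq, algebraMap_smul, vadd_eq_add, zero_add] at this
            exact this
          by_cases hμ : ν = μ
          · subst hμ
            rw [DirectSum.decompose_of_mem_same _ h, DirectSum.decompose_of_mem_same _ m.2]
            rfl
          · rw [DirectSum.decompose_of_mem_ne _ h hμ, DirectSum.decompose_of_mem_ne _ m.2 hμ,
              smul_zero]
        | add a b ha hb =>
          simp only [smul_add, DirectSum.decompose_add, DirectSum.add_apply,
            AddSubgroup.coe_add, ha, hb] }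
  p_X μ i m := by
    classical
    simp only [LinearMap.coe_mk, AddHom.coe_mk]
    induction m using DirectSum.Decomposition.inductionOn ℳ with
    | zero => simp
    | homogeneous m =>
      rename_i ν
      have h : (X i : MvPolynomial (Fin n) R) • (m : N) ∈ ℳ (w i + ν) := by
        have := SetLike.GradedSMul.smul_mem (A := weightedHomogeneousSubmodule R w) (B := ℳ)
          ((mem_weightedHomogeneousSubmodule R w (w i) (X i)).mpr (isWeightedHomogeneous_X R w i))
          m.2
        rwa [vadd_eq_add] at this
      by_cases hμ : ν = μ
      · subst hμ
        rw [add_comm ν, DirectSum.decompose_of_mem_same _ h, DirectSum.decompose_of_mem_same _ m.2]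
      · rw [DirectSum.decompose_of_mem_ne _ h (by omega), DirectSum.decompose_of_mem_ne _ m.2 hμ,
          smul_zero]
    | add a b ha hb =>
      simp only [smul_add, DirectSum.decompose_add, DirectSum.add_apply,
            AddSubgroup.coe_add, ha, hb]
  p_p μ ν m := by
    simp only [LinearMap.coe_mk, AddHom.coe_mk]
    by_cases h : μ = ν
    · subst h
      rw [if_pos rfl, DirectSum.decompose_of_mem_same _ (DirectSum.decompose ℳ m μ).2]
    · rw [if_neg h, DirectSum.decompose_of_mem_ne _ (DirectSum.decompose ℳ m ν).2 (Ne.symm h)]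
  p_sum m := by
    classical
    exact ⟨_, DirectSum.sum_support_decompose ℳ m⟩

theorem GS.ofDecomp_mem (ℳ : ℤ → AddSubgroup N) [DirectSum.Decomposition ℳ]
    [SetLike.GradedSMul (weightedHomogeneousSubmodule R w) ℳ] (μ : ℤ) (m : N) :
    m ∈ ℳ μ ↔ (GS.ofDecomp (R := R) (w := w) ℳ).p μ m = m := by
  constructor
  · intro h
    exact DirectSum.decompose_of_mem_same _ h
  · intro h
    rw [← h]
    exact (DirectSum.decompose ℳ m μ).2

/-- the graded pieces of the Čech localizations -/
theorem cechGrade_iff (ℳ : ℤ → AddSubgroup N) (hℳ : ∀ μ m, m ∈ ℳ μ ↔ G.p μ m = m) (μ : ℤ)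
    (T : Finset (Fin n)) (c : cechL _ (XX R n) N T) :
    c ∈ cechGrade _ (XX R n) N ℳ w μ T ↔ pL G μ T c = c := by
  constructor
  · intro h
    let φ : cechL _ (XX R n) N T →+ cechL _ (XX R n) N T :=
      AddMonoidHom.mk' (pL G μ T) (pL_add G μ T)
    have : cechGrade _ (XX R n) N ℳ w μ T ≤ (φ - AddMonoidHom.id _).ker := by
      refine (AddSubgroup.closure_le _).mpr ?_
      rintro _ ⟨m, k, hm, rfl⟩
      change pL G μ T _ - _ = 0
      rw [sub_eq_zero]
      change pL G μ T (dv (XX R n) T m k) = dv (XX R n) T m k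
      rw [pL_dv, (hℳ _ _).mp hm]
    exact sub_eq_zero.mp (this h)
  · intro h
    obtain ⟨m, k, hc⟩ := exists_dv _ _ c
    rw [hc, pL_dv] at h
    rw [hc, ← h]
    refine AddSubgroup.subset_closure ⟨_, k, (hℳ _ _).mpr ?_, rfl⟩
    rw [G.p_p, if_pos rfl]

theorem GS.tens_mem (ℳ : ℤ → AddSubgroup N) (hℳ : ∀ μ m, m ∈ ℳ μ ↔ G.p μ m = m)
    (k : Type) [AddCommGroup k] [Module R k] (μ : ℤ) (z : TensorProduct R N k) :
    z ∈ AddSubgroup.closure {z : TensorProduct R N k | ∃ m ∈ ℳ μ, ∃ c, z = m ⊗ₜ[R] c} ↔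
      (G.tens k).p μ z = z := by
  constructor
  · intro h
    induction h using AddSubgroup.closure_induction with
    | mem z hz =>
      obtain ⟨m, hm, c, rfl⟩ := hz
      change LinearMap.rTensor k (G.p μ) _ = _
      rw [LinearMap.rTensor_tmul, (hℳ _ _).mp hm]
    | zero => simp
    | add a b _ _ ha hb => rw [map_add, ha, hb]
    | neg a _ ha => rw [map_neg, ha]
  · intro h
    rw [← h]
    clear h
    induction z using TensorProduct.induction_on with
    | zero => rw [map_zero]; exact AddSubgroup.zero_mem _
    | tmul m c =>
      refine AddSubgroup.subset_closure ⟨G.p μ m, (hℳ _ _).mpr ?_, c, rfl⟩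
      rw [G.p_p, if_pos rfl]
    | add a b ha hb => rw [map_add]; exact AddSubgroup.add_mem _ ha hb

end GradedStructure


/-! ### Part 4: finiteness and boundedness of the graded pieces of the top cohomology -/

set_option linter.unusedSectionVars false

section Finiteness

open MvPolynomial

variable {R : Type} [CommRing R] {n : ℕ} {w : Fin n → ℤ}

theorem finite_of_rad (N : Type) [AddCommGroup N]
    [Module (MvPolynomial (Fin n) R) N] [Module R N]
    [IsScalarTower R (MvPolynomial (Fin n) R) N] [Module.Finite (MvPolynomial (Fin n) R) N]
    (J : Ideal (MvPolynomial (Fin n) R)) (hJ : ∀ a ∈ J, ∀ m : N, a • m = 0)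
    (hX : ∀ j, XX R n j ∈ J.radical) : Module.Finite R N := by
  have hintg : ∀ a : MvPolynomial (Fin n) R, IsIntegral R (Ideal.Quotient.mk J a) := by
    intro a
    induction a using MvPolynomial.induction_on with
    | C r =>
      have : Ideal.Quotient.mk J (C r) = algebraMap R (MvPolynomial (Fin n) R ⧸ J) r := rfl
      rw [this]
      exact isIntegral_algebraMap
    | add a b ha hb => rw [map_add]; exact ha.add hb
    | mul_X a j ha =>
      rw [map_mul]
      refine ha.mul ?_
      obtain ⟨k, hk⟩ := hX j
      have h0 : (Ideal.Quotient.mk J (X j)) ^ (k + 1) = 0 := by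
        rw [← map_pow, Ideal.Quotient.eq_zero_iff_mem, pow_succ]
        exact Ideal.mul_mem_right _ _ hk
      exact IsIntegral.of_pow (Nat.succ_pos k) (h0 ▸ isIntegral_zero)
  have : Algebra.IsIntegral R (MvPolynomial (Fin n) R ⧸ J) := by
    constructor
    intro a
    obtain ⟨a, rfl⟩ := Ideal.Quotient.mk_surjective a
    exact hintg a
  have hfin : Module.Finite R (MvPolynomial (Fin n) R ⧸ J) := Algebra.IsIntegral.finite
  have ht : Module.IsTorsionBySet (MvPolynomial (Fin n) R) N J := fun m a => hJ a.1 a.2 m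
  let := ht.module
  have : IsScalarTower (MvPolynomial (Fin n) R) (MvPolynomial (Fin n) R ⧸ J) N := ht.isScalarTower
  have : IsScalarTower R (MvPolynomial (Fin n) R ⧸ J) N := ht.isScalarTower
  have : Module.Finite (MvPolynomial (Fin n) R ⧸ J) N :=
    Module.Finite.of_restrictScalars_finite (MvPolynomial (Fin n) R) _ N
  exact Module.Finite.trans (MvPolynomial (Fin n) R ⧸ J) N

theorem fg_range_of_ker_le {P X Y : Type} [AddCommGroup P] [Module R P] [AddCommGroup X]
    [Module R X] [AddCommGroup Y] [Module R Y] (φ : P →ₗ[R] X) (ψ : P →ₗ[R] Y)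
    (h : LinearMap.ker φ ≤ LinearMap.ker ψ) (hφ : (LinearMap.range φ).FG) :
    (LinearMap.range ψ).FG := by
  have : Module.Finite R (LinearMap.range φ) := Module.Finite.iff_fg.mpr hφ
  have : Module.Finite R (P ⧸ LinearMap.ker φ) :=
    Module.Finite.equiv (φ.quotKerEquivRange).symm
  have := Module.Finite.range ((LinearMap.ker φ).liftQ ψ h)
  rw [Submodule.range_liftQ] at this
  exact Module.Finite.iff_fg.mp this

variable {N : Type} [AddCommGroup N]
    [Module (MvPolynomial (Fin n) R) N] [Module R N]
    [IsScalarTower R (MvPolynomial (Fin n) R) N] (G : GS (R := R) w N)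

/-- homogeneous cocycles -/
noncomputable def Zgr (i : ℕ) (μ : ℤ) : Submodule R (cechC _ (XX R n) N i) :=
  LinearMap.ker ((cechD _ (XX R n) N i).restrictScalars R) ⊓
    LinearMap.ker (pC G i μ - LinearMap.id)

theorem mem_Zgr (i : ℕ) (μ : ℤ) (c : cechC _ (XX R n) N i) :
    c ∈ Zgr G i μ ↔ cechD _ (XX R n) N i c = 0 ∧ pC G i μ c = c := by
  simp [Zgr, sub_eq_zero]

variable (R n N) in
/-- boundaries, as an `R`-submodule -/
noncomputable def Bd (i : ℕ) : Submodule R (cechC _ (XX R n) N i) :=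
  (LinearMap.range (cechDprev _ (XX R n) N i)).restrictScalars R

theorem mem_Bd (i : ℕ) (c : cechC _ (XX R n) N i) :
    c ∈ Bd R n N i ↔ ∃ b, cechDprev _ (XX R n) N i b = c := Iff.rfl

theorem smul_mem_Bd (i : ℕ) (c : cechC _ (XX R n) N i) (f : MvPolynomial (Fin n) R)
    (h : c ∈ Bd R n N i) : f • c ∈ Bd R n N i :=
  (LinearMap.range (cechDprev _ (XX R n) N i)).smul_mem f h

/-- graded pieces of the cohomology -/
noncomputable def Hgr (i : ℕ) (μ : ℤ) : Submodule R (cechC _ (XX R n) N i ⧸ Bd R n N i) :=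
  (Zgr G i μ).map (Bd R n N i).mkQ

theorem Hgr_eq_bot (i : ℕ) (μ : ℤ) : Hgr G i μ = ⊥ ↔ ∀ c ∈ Zgr G i μ, c ∈ Bd R n N i := by
  rw [Hgr, eq_bot_iff, Submodule.map_le_iff_le_comap, Submodule.comap_bot, Submodule.ker_mkQ]
  rfl

theorem smul_Zgr {f : MvPolynomial (Fin n) R} {δ : ℤ} (hf : IsWeightedHomogeneous w f δ)
    (i : ℕ) (μ : ℤ) (c : cechC _ (XX R n) N i) (hc : c ∈ Zgr G i μ) :
    f • c ∈ Zgr G i (μ + δ) := by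
  rw [mem_Zgr] at hc ⊢
  rw [map_smul, hc.1, smul_zero, pC_hom G hf, hc.2]
  exact ⟨rfl, rfl⟩

/-- multiplication on cochains modulo boundaries -/
noncomputable def mulQ (f : MvPolynomial (Fin n) R) (i : ℕ) :
    (cechC _ (XX R n) N i ⧸ Bd R n N i) →ₗ[R] (cechC _ (XX R n) N i ⧸ Bd R n N i) :=
  (Bd R n N i).mapQ (Bd R n N i)
    ((LinearMap.lsmul (MvPolynomial (Fin n) R) (cechC _ (XX R n) N i) f).restrictScalars R)
    (fun c hc => smul_mem_Bd i c f hc)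

theorem mulQ_mk (f : MvPolynomial (Fin n) R) (i : ℕ) (c : cechC _ (XX R n) N i) :
    mulQ f i ((Bd R n N i).mkQ c) = (Bd R n N i).mkQ (f • c) := rfl

theorem FG_base [IsNoetherianRing R] [Module.Finite R N] :
    (∀ μ, (Hgr G 0 μ).FG) ∧ ∃ a, ∀ μ, a ≤ μ → Hgr G 0 μ = ⊥ := by
  let θ : N →ₗ[R] cechC _ (XX R n) N 0 :=
    { toFun := fun m T => dv (XX R n) T.1 m 0
      map_add' := fun a b => funext fun T => (dv_add _ _ _ _ _).symm
      map_smul' := fun r m => by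
        funext T
        have := (dv_smul (XX R n) T.1 (algebraMap R _ r) m 0).symm
        rw [algebraMap_smul, algebraMap_smul] at this
        exact this }
  have hθ : Function.Surjective θ := by
    intro c
    obtain ⟨m, k, h⟩ := exists_dv _ _ (c ⟨∅, rfl⟩)
    refine ⟨m, ?_⟩
    funext T
    obtain ⟨T, hT⟩ := T
    obtain rfl := Finset.card_eq_zero.mp hT
    rw [h]
    change dv (XX R n) ∅ m 0 = dv (XX R n) ∅ m k
    rw [dv_eq_iff]
    exact ⟨0, by simp⟩
  have : Module.Finite R (cechC _ (XX R n) N 0) := Module.Finite.of_surjective θ hθ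
  have : IsNoetherian R (cechC _ (XX R n) N 0) := isNoetherian_of_isNoetherianRing_of_finite R _
  refine ⟨fun μ => (IsNoetherian.noetherian (Zgr G 0 μ)).map _, ?_⟩
  obtain ⟨s, hs⟩ := Module.finite_def.mp (inferInstance : Module.Finite R N)
  have h1 : ∀ m : N, ∃ a : ℤ, ∀ μ, a ≤ μ → G.p μ m = 0 := by
    intro m
    obtain ⟨t, ht⟩ := G.p_zero_of m
    obtain ⟨a, ha⟩ := t.exists_le
    obtain ⟨a, ha⟩ : ∃ a, ∀ μ ∈ t, μ ≤ a := t.exists_le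
    refine ⟨a + 1, fun μ hμ => ht μ fun h => ?_⟩
    have := ha μ h
    omega
  choose a ha using h1
  obtain ⟨b, hb⟩ : ∃ b, ∀ m ∈ s, a m ≤ b := by
    obtain ⟨b, hb⟩ := (s.image a).exists_le
    exact ⟨b, fun m hm => hb _ (Finset.mem_image_of_mem _ hm)⟩
  have h2 : ∀ μ, b ≤ μ → ∀ m : N, G.p μ m = 0 := by
    intro μ hμ m
    have : (⊤ : Submodule R N) ≤ LinearMap.ker (G.p μ) := by
      rw [← hs]
      refine Submodule.span_le.mpr fun m hm => ?_
      exact ha m μ ((hb m hm).trans hμ)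
    exact this (Submodule.mem_top (x := m))
  refine ⟨b, fun μ hμ => ?_⟩
  rw [Hgr_eq_bot]
  intro c hc
  obtain ⟨-, hc⟩ := (mem_Zgr _ _ _ _).mp hc
  obtain ⟨m, rfl⟩ := hθ c
  refine ⟨0, ?_⟩
  rw [map_zero, ← hc]
  funext T
  obtain ⟨T, hT⟩ := T
  obtain rfl := Finset.card_eq_zero.mp hT
  rw [pC_apply]
  change _ = pL G μ ∅ (dv (XX R n) ∅ m 0)
  rw [pL_dv, h2 _ (by simpa using hμ), dv_zero]
  rfl

/-- A homogeneous cocycle killed by `f` in cohomology is controlled by the cohomology of `N/f`. -/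
theorem FG_step [IsNoetherianRing R] (d : ℕ) {f : MvPolynomial (Fin n) R} {δ : ℤ}
    (hf : IsWeightedHomogeneous w f δ)
    (hK : CV (XX R n) (LinearMap.ker (LinearMap.lsmul (MvPolynomial (Fin n) R) N f)) (d + 1))
    (μ : ℤ) :
    ((Hgr (G.quot hf) d (μ + δ)).FG →
      (Hgr G (d + 1) μ ⊓ LinearMap.ker (mulQ f (d + 1))).FG) ∧
    ((Hgr (G.quot hf) d (μ + δ)) = ⊥ → ∀ c ∈ Zgr G (d + 1) μ, f • c ∈ Bd R n N (d + 1) →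
      c ∈ Bd R n N (d + 1)) := by
  set L := LinearMap.lsmul (MvPolynomial (Fin n) R) N f with hL
  let q := (LinearMap.range L).mkQ
  have hfF : ∀ p (g : cechC _ (XX R n) N p), cechF (XX R n) p L g = f • g := by
    intro p g
    have : L = f • LinearMap.id := by ext m; simp [hL]
    rw [this, cechF_smul, cechF_id]
  have hkill : ∀ m : N ⧸ LinearMap.range L, f • m = 0 := by
    intro m
    obtain ⟨m, rfl⟩ := Submodule.mkQ_surjective _ m
    rw [← map_smul]
    exact (Submodule.Quotient.mk_eq_zero _).mpr ⟨m, rfl⟩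
  let C1 := cechC _ (XX R n) N (d + 1)
  let C0 := cechC _ (XX R n) N d
  let P : Submodule R (C1 × C0) :=
    { carrier := {u | u.1 ∈ Zgr G (d + 1) μ ∧ pC G d (μ + δ) u.2 = u.2 ∧
        f • u.1 = cechD _ (XX R n) N d u.2}
      zero_mem' := by simp
      add_mem' := by
        rintro u v ⟨h1, h2, h3⟩ ⟨h4, h5, h6⟩
        refine ⟨add_mem h1 h4, ?_, ?_⟩
        · rw [Prod.snd_add, map_add, h2, h5]
        · rw [Prod.fst_add, Prod.snd_add, smul_add, h3, h6, map_add]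
      smul_mem' := by
        rintro r u ⟨h1, h2, h3⟩
        refine ⟨Submodule.smul_mem _ r h1, ?_, ?_⟩
        · rw [Prod.smul_snd, map_smul, h2]
        · rw [Prod.smul_fst, Prod.smul_snd, smul_comm, h3]
          exact (((cechD _ (XX R n) N d).restrictScalars R).map_smul r u.2).symm }
  let φ : P →ₗ[R] (cechC _ (XX R n) (N ⧸ LinearMap.range L) d ⧸ Bd R n _ d) :=
    (Bd R n _ d).mkQ ∘ₗ (cechF (XX R n) d q).restrictScalars R ∘ₗ LinearMap.snd R C1 C0 ∘ₗ P.subtype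
  let ψ : P →ₗ[R] (C1 ⧸ Bd R n N (d + 1)) :=
    (Bd R n N (d + 1)).mkQ ∘ₗ LinearMap.fst R C1 C0 ∘ₗ P.subtype
  have hφr : LinearMap.range φ ≤ Hgr (G.quot hf) d (μ + δ) := by
    rintro _ ⟨⟨⟨c, b⟩, h1, h2, h3⟩, rfl⟩
    refine ⟨cechF (XX R n) d q b, ?_, rfl⟩
    refine (mem_Zgr _ _ _ _).mpr ⟨?_, ?_⟩
    · change f • c = cechD _ (XX R n) N d b at h3
      rw [cechD_cechF, ← h3, map_smul]
      exact smul_cech_of_kill _ _ _ _ hkill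
    · change pC G d (μ + δ) b = b at h2
      rw [← cechF_pC G (G.quot hf) q (fun μ m => G.quot_mk hf μ m), h2]
  have hker : LinearMap.ker φ ≤ LinearMap.ker ψ := by
    rintro ⟨⟨c, b⟩, h1, h2, h3⟩ h
    change f • c = cechD _ (XX R n) N d b at h3
    have h1' : cechD _ (XX R n) N (d + 1) c = 0 := ((mem_Zgr _ _ _ _).mp h1).1
    obtain ⟨e, he⟩ : cechF (XX R n) d q b ∈ Bd R n _ d :=
      (Submodule.Quotient.mk_eq_zero _).mp h
    obtain ⟨e, rfl⟩ := cechF_surjective (XX R n) _ q (Submodule.mkQ_surjective _) e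
    rw [cechDprev_cechF] at he
    obtain ⟨g, hg⟩ := cechF_exact (XX R n) d L q (LinearMap.exact_map_mkQ_range L)
      (b - cechDprev _ (XX R n) N d e) (by rw [map_sub, he, sub_self])
    rw [hfF] at hg
    have h4 : f • c = f • cechD _ (XX R n) N d g := by
      rw [← map_smul, hg, map_sub, cechD_cechDprev, sub_zero, h3]
    have h5 : cechF (XX R n) (d + 1) L (c - cechD _ (XX R n) N d g) = 0 := by
      rw [hfF, smul_sub, h4, sub_self]
    obtain ⟨a, ha⟩ := cechF_exact (XX R n) (d + 1) (LinearMap.ker L).subtype L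
      (LinearMap.exact_subtype_ker_map L) _ h5
    obtain ⟨h, hh⟩ : ∃ h : cechC _ (XX R n) (LinearMap.ker L) d, cechD _ (XX R n) _ d h = a :=
      hK a (by
        apply cechF_injective (XX R n) _ _ (LinearMap.ker L).injective_subtype
        rw [← cechD_cechF, ha, map_sub, h1', cechD_cechD, sub_zero, map_zero])
    refine (Submodule.Quotient.mk_eq_zero _).mpr ⟨g + cechF (XX R n) d (LinearMap.ker L).subtype h, ?_⟩
    change cechD _ (XX R n) N d _ = c
    rw [map_add, cechD_cechF, hh, ha, add_sub_cancel]
  have hψ : ∀ c ∈ Zgr G (d + 1) μ, f • c ∈ Bd R n N (d + 1) →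
      (Bd R n N (d + 1)).mkQ c ∈ LinearMap.range ψ := by
    intro c hc hfc
    obtain ⟨b, hb⟩ : ∃ b : cechC _ (XX R n) N d, cechD _ (XX R n) N d b = f • c := hfc
    refine ⟨⟨(c, pC G d (μ + δ) b), hc, ?_, ?_⟩, rfl⟩
    · change pC G d (μ + δ) (pC G d (μ + δ) b) = pC G d (μ + δ) b
      rw [pC_pC, if_pos rfl]
    · change f • c = cechD _ (XX R n) N d (pC G d (μ + δ) b)
      rw [cechD_pC, hb, pC_hom G hf, ((mem_Zgr _ _ _ _).mp hc).2]
  constructor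
  · intro hfg
    have h1 : (LinearMap.range φ).FG := by
      have : IsNoetherian R (Hgr (G.quot hf) d (μ + δ)) := isNoetherian_of_fg_of_noetherian _ hfg
      exact isNoetherian_submodule.mp this _ hφr
    have h2 := fg_range_of_ker_le φ ψ hker h1
    have : IsNoetherian R (LinearMap.range ψ) := isNoetherian_of_fg_of_noetherian _ h2
    refine isNoetherian_submodule.mp this _ ?_
    rintro _ ⟨⟨c, hc, rfl⟩, h⟩
    exact hψ c hc ((Submodule.Quotient.mk_eq_zero _).mp h)
  · intro hbot c hc hfc
    obtain ⟨u, hu⟩ := hψ c hc hfc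
    have h1 : φ u = 0 := by
      have := hφr ⟨u, rfl⟩
      rw [hbot] at this
      exact this
    have h2 : ψ u = 0 := hker h1
    rw [h2] at hu
    exact (Submodule.Quotient.mk_eq_zero _).mp hu.symm

theorem FG_bound [IsNoetherianRing R] (d : ℕ) : ∀ (y : Fin d → MvPolynomial (Fin n) R)
    (δ : Fin d → ℤ) (_ : ∀ j, 0 < δ j) (_ : ∀ j, IsWeightedHomogeneous w (y j) (δ j))
    (_ : ∀ j, y j ∈ Ideal.span (Set.range (XX R n))) (J : Ideal (MvPolynomial (Fin n) R))
    (_ : ∀ j, XX R n j ∈ (Ideal.span (Set.range y) ⊔ J).radical)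
    (N : Type) [AddCommGroup N]
    [Module (MvPolynomial (Fin n) R) N] [Module R N]
    [IsScalarTower R (MvPolynomial (Fin n) R) N] [Module.Finite (MvPolynomial (Fin n) R) N]
    (G : GS (R := R) w N) (_ : ∀ a ∈ J, ∀ m : N, a • m = 0),
    (∀ μ, (Hgr G d μ).FG) ∧ ∃ a, ∀ μ, a ≤ μ → Hgr G d μ = ⊥ := by
  induction d with
  | zero =>
    intro y δ hδ hy hyX J hX N _ _ _ _ _ G hJ
    have := finite_of_rad N J hJ (fun j => by simpa using hX j)
    exact FG_base G
  | succ d ih =>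
    intro y δ hδ hy hyX J hX N _ _ _ _ _ G hJ
    set f := y (Fin.last d) with hfdef
    set e := δ (Fin.last d) with hedef
    have hf : IsWeightedHomogeneous w f e := hy _
    have he : 0 < e := hδ _
    let y' : Fin d → MvPolynomial (Fin n) R := fun j => y j.castSucc
    let J' := J ⊔ Ideal.span {f}
    have hle : Ideal.span (Set.range y) ⊔ J ≤ Ideal.span (Set.range y') ⊔ J' := by
      refine sup_le (Ideal.span_le.mpr ?_) (le_sup_left.trans le_sup_right)
      rintro _ ⟨j, rfl⟩
      induction j using Fin.lastCases with
      | last => exact Ideal.mem_sup_right (Ideal.mem_sup_right (Ideal.subset_span rfl))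
      | cast j => exact Ideal.mem_sup_left (Ideal.subset_span ⟨j, rfl⟩)
    have hX' : ∀ j, XX R n j ∈ (Ideal.span (Set.range y') ⊔ J').radical :=
      fun j => Ideal.radical_mono hle (hX j)
    have hJ'of : ∀ (Q : Type) [AddCommGroup Q] [Module (MvPolynomial (Fin n) R) Q],
        (∀ a ∈ J, ∀ m : Q, a • m = 0) → (∀ m : Q, f • m = 0) → ∀ a ∈ J', ∀ m : Q, a • m = 0 := by
      intro Q _ _ h1 h2 a ha m
      obtain ⟨a, ha1, b, hb, rfl⟩ := Submodule.mem_sup.mp ha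
      obtain ⟨c, rfl⟩ := Ideal.mem_span_singleton'.mp hb
      rw [add_smul, h1 a ha1, mul_smul, h2, smul_zero, add_zero]
    have hK : CV (XX R n)
        (LinearMap.ker (LinearMap.lsmul (MvPolynomial (Fin n) R) N f)) (d + 1) := by
      refine (CV_compare (XX R n) y' J' hX' (fun j => Ideal.le_radical
        (Ideal.mem_sup_left (hyX _))) (d + 1) _ (hJ'of _ ?_ ?_)).mpr
        (CV_of_card_lt y' _ _ (Nat.lt_succ_self d))
      · rintro a ha ⟨m, hm⟩
        exact Subtype.ext (hJ a ha m)
      · rintro ⟨m, hm⟩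
        exact Subtype.ext hm
    obtain ⟨ihF, a, iha⟩ := ih y' (fun j => δ j.castSucc) (fun j => hδ _) (fun j => hy _)
      (fun j => hyX _) J' hX'
      (N ⧸ LinearMap.range (LinearMap.lsmul (MvPolynomial (Fin n) R) N f)) (G.quot hf)
      (hJ'of _ (by
        intro a ha m
        obtain ⟨m, rfl⟩ := Submodule.mkQ_surjective _ m
        rw [← map_smul, hJ a ha, map_zero]) (by
        intro m
        obtain ⟨m, rfl⟩ := Submodule.mkQ_surjective _ m
        rw [← map_smul]
        exact (Submodule.Quotient.mk_eq_zero _).mpr ⟨m, rfl⟩))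
    have hb : ∀ μ, a ≤ μ → Hgr G (d + 1) μ = ⊥ := by
      have hpow : ∀ k : ℕ, ∀ μ, a ≤ μ → ∀ c ∈ Zgr G (d + 1) μ, f ^ k • c ∈ Bd R n N (d + 1) →
          c ∈ Bd R n N (d + 1) := by
        intro k
        induction k with
        | zero => intro μ _ c _ h; simpa using h
        | succ k ihk =>
          intro μ hμ c hc h
          refine (FG_step G d hf hK μ).2 (iha _ (by omega)) c hc ?_
          refine ihk (μ + e) (by omega) _ (smul_Zgr G hf _ _ _ hc) ?_
          rwa [smul_smul, ← pow_succ]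
      intro μ hμ
      rw [Hgr_eq_bot]
      intro c hc
      obtain ⟨k, b, hkb⟩ := cech_torsion_radical (XX R n) J hJ (d + 1) c
        ((mem_Zgr _ _ _ _).mp hc).1 f (Ideal.le_radical (Ideal.mem_sup_left (hyX _)))
      exact hpow k μ hμ c hc ⟨b, hkb⟩
    refine ⟨?_, a, hb⟩
    have hFG : ∀ t : ℕ, ∀ μ, a - t * e ≤ μ → (Hgr G (d + 1) μ).FG := by
      intro t
      induction t with
      | zero =>
        intro μ hμ
        rw [hb μ (by simpa using hμ)]
        exact Submodule.fg_bot
      | succ t iht =>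
        intro μ hμ
        refine Submodule.fg_of_fg_map_of_fg_inf_ker (mulQ f (d + 1)) ?_
          ((FG_step G d hf hK μ).1 (ihF _))
        have h1 : (Hgr G (d + 1) (μ + e)).FG := iht _ (by push_cast at hμ; linarith)
        have : IsNoetherian R (Hgr G (d + 1) (μ + e)) := isNoetherian_of_fg_of_noetherian _ h1
        refine isNoetherian_submodule.mp this _ ?_
        rintro _ ⟨_, ⟨c, hc, rfl⟩, rfl⟩
        rw [mulQ_mk]
        exact ⟨_, smul_Zgr G hf _ _ _ hc, rfl⟩
    intro μ
    refine hFG (a - μ).toNat μ ?_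
    have := Int.self_le_toNat (a - μ)
    nlinarith

end Finiteness


/-! ### Part 5: comparison of the top cohomology with that of the special fibre -/

set_option linter.unusedSectionVars false

section LcMod

variable {A : Type} [CommRing A] {n : ℕ} (x : Fin n → A)
  {M : Type} [AddCommGroup M] [Module A M]
  {N : Type} [AddCommGroup N] [Module A N]

/-- the class of a cocycle -/
noncomputable def lcmk (M : Type) [AddCommGroup M] [Module A M] (i : ℕ) :
    LinearMap.ker (cechD A x M i) →ₗ[A] lcMod A x M i :=
  Submodule.mkQ (Submodule.comap (LinearMap.ker (cechD A x M i)).subtype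
      (LinearMap.range (cechDprev A x M i)))

theorem lcmk_surjective (i : ℕ) : Function.Surjective (lcmk x M i) :=
  Submodule.mkQ_surjective _

theorem lcmk_eq_zero (i : ℕ) (z : LinearMap.ker (cechD A x M i)) :
    lcmk x M i z = 0 ↔ ∃ b, cechDprev A x M i b = z.1 :=
  Submodule.Quotient.mk_eq_zero _

/-- the map induced on cocycles -/
noncomputable def kerMap (i : ℕ) (φ : M →ₗ[A] N) :
    LinearMap.ker (cechD A x M i) →ₗ[A] LinearMap.ker (cechD A x N i) :=
  (cechF x i φ).restrict (fun c hc => by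
    rw [LinearMap.mem_ker] at hc ⊢
    rw [cechD_cechF, hc, map_zero])

theorem kerMap_val (i : ℕ) (φ : M →ₗ[A] N) (z : LinearMap.ker (cechD A x M i)) :
    (kerMap x i φ z).1 = cechF x i φ z.1 := rfl

/-- the map induced on cohomology -/
noncomputable def Hmap (i : ℕ) (φ : M →ₗ[A] N) : lcMod A x M i →ₗ[A] lcMod A x N i :=
  Submodule.liftQ (Submodule.comap (LinearMap.ker (cechD A x M i)).subtype
      (LinearMap.range (cechDprev A x M i))) (lcmk x N i ∘ₗ kerMap x i φ) (by
    rintro z ⟨b, hb⟩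
    rw [LinearMap.mem_ker]
    refine (lcmk_eq_zero x i _).mpr ⟨cechF x _ φ b, ?_⟩
    rw [cechDprev_cechF, hb]
    rfl)

theorem Hmap_mk (i : ℕ) (φ : M →ₗ[A] N) (z : LinearMap.ker (cechD A x M i)) :
    Hmap x i φ (lcmk x M i z) = lcmk x N i (kerMap x i φ z) := rfl

theorem subsingleton_lcMod (i : ℕ) (h : CV x M i) : Subsingleton (lcMod A x M i) := by
  refine subsingleton_of_forall_eq 0 fun u => ?_
  obtain ⟨z, rfl⟩ := lcmk_surjective x i u
  exact (lcmk_eq_zero x i z).mpr (h z.1 z.2)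

theorem CV_of_subsingleton (i : ℕ) [Subsingleton (lcMod A x M i)] : CV x M i := fun z hz =>
  (lcmk_eq_zero x i ⟨z, hz⟩).mp (Subsingleton.elim _ _)

theorem cechIsBoundary_iff (i : ℕ) (c : cechC A x M i) :
    cechIsBoundary A x M i c ↔ ∃ b, cechDprev A x M i b = c := by
  cases i with
  | zero =>
    constructor
    · intro h; exact ⟨0, by rw [map_zero]; exact h.symm⟩
    · rintro ⟨b, hb⟩; exact hb.symm
  | succ q => exact Iff.rfl

end LcMod

section TensorBij

open TensorProduct

theorem tensor_bij {R : Type} [CommRing R] {A : Type} [CommRing A] [Algebra R A]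
    {L L' : Type} [AddCommGroup L] [Module A L] [AddCommGroup L'] [Module A L'] (I : Ideal R)
    (Φ : (R ⧸ I) → L →ₗ[A] L') (hadd : ∀ c c' l, Φ (c + c') l = Φ c l + Φ c' l)
    (hsm : ∀ (r : R) c l, Φ (r • c) l = algebraMap R A r • Φ c l)
    (hsurj : Function.Surjective (Φ 1))
    (hker : ∀ l, Φ 1 l = 0 → ∃ (s : ℕ) (r : Fin s → R) (v : Fin s → L),
      (∀ i, r i ∈ I) ∧ l = ∑ i, algebraMap R A (r i) • v i) :
    ∃ g : TensorProduct R (RestrictScalars R A L) (R ⧸ I) →ₗ[R] RestrictScalars R A L',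
      (∀ (l : RestrictScalars R A L) c, g (l ⊗ₜ[R] c) = Φ c l) ∧ Function.Bijective g := by
  let H := RestrictScalars R A L
  let H' := RestrictScalars R A L'
  let β : H →ₗ[R] (R ⧸ I) →ₗ[R] H' := LinearMap.mk₂ R
    (fun (h : H) c => (Φ c (show L from h) : L'))
    (fun h h' c => (Φ c).map_add (show L from h) (show L from h'))
    (fun r h c => (Φ c).map_smul (algebraMap R A r) (show L from h))
    (fun h c c' => hadd c c' h)
    (fun r h c => by first | exact hsm r c h | exact hsm h c r | exact hsm r h c)
  let g := TensorProduct.lift β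
  have hg : ∀ (l : H) (c : R ⧸ I), g (l ⊗ₜ[R] c) = Φ c l :=
    fun z c => TensorProduct.lift.tmul _ _
  have hone : ∀ u : H ⊗[R] (R ⧸ I), ∃ h : H, u = h ⊗ₜ[R] (1 : R ⧸ I) := by
    intro u
    induction u using TensorProduct.induction_on with
    | zero => exact ⟨0, (TensorProduct.zero_tmul _ _).symm⟩
    | tmul m c =>
      obtain ⟨r, rfl⟩ := Ideal.Quotient.mk_surjective c
      refine ⟨r • m, ?_⟩
      rw [TensorProduct.smul_tmul, Algebra.smul_def, mul_one]
      rfl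
    | add a b ha hb =>
      obtain ⟨a, rfl⟩ := ha
      obtain ⟨b, rfl⟩ := hb
      exact ⟨a + b, (TensorProduct.add_tmul _ _ _).symm⟩
  refine ⟨g, hg, ?_, ?_⟩
  · intro u u' huu
    obtain ⟨h, rfl⟩ := hone u
    obtain ⟨h', rfl⟩ := hone u'
    obtain ⟨l, rfl⟩ : ∃ l : L, l = h := ⟨h, rfl⟩
    obtain ⟨l', rfl⟩ : ∃ l : L, l = h' := ⟨h', rfl⟩
    have e : Φ 1 l = Φ 1 l' := (hg l 1).symm.trans (huu.trans (hg l' 1))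
    obtain ⟨s, r, v, hr, hh⟩ := hker (l - l') (by rw [map_sub, e, sub_self])
    have h2 : (show H from l) = (show H from l') + ∑ i, r i • (show H from v i) :=
      (sub_eq_iff_eq_add'.mp hh)
    change (show H from l) ⊗ₜ[R] (1 : R ⧸ I) = (show H from l') ⊗ₜ[R] (1 : R ⧸ I)
    rw [h2, TensorProduct.add_tmul, TensorProduct.sum_tmul]
    have h3 : ∀ i, (r i • (show H from v i)) ⊗ₜ[R] (1 : R ⧸ I) = 0 := by
      intro i
      have hz : algebraMap R (R ⧸ I) (r i) = 0 := Ideal.Quotient.eq_zero_iff_mem.mpr (hr i)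
      rw [TensorProduct.smul_tmul, Algebra.smul_def, hz, zero_mul, TensorProduct.tmul_zero]
    rw [Finset.sum_congr rfl fun i _ => h3 i, Finset.sum_const_zero, add_zero]
  · intro u
    obtain ⟨h, hh⟩ := hsurj u
    exact ⟨(show H from h) ⊗ₜ[R] 1, (hg h 1).trans hh⟩

end TensorBij

section Special

open TensorProduct

variable {R : Type} [CommRing R] {A : Type} [CommRing A] [Algebra R A] {n : ℕ} (x : Fin n → A)
  {M : Type} [AddCommGroup M] [Module R M] [Module A M] [IsScalarTower R A M]

theorem cechTmul_eq (k : Type) [AddCommGroup k] [Module R k] (T : Finset (Fin n))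
    (c : cechL A x M T) (c' : k) :
    cechTmul R A M k x T c c' = locMap x T (tmulRightS R A M k c') c := by
  unfold cechTmul locMap
  refine LinearMap.congr_fun ?_ c
  refine IsLocalizedModule.ext (Submonoid.powers (∏ i ∈ T, x i)) (LocalizedModule.mkLinearMap _ M)
    (IsLocalizedModule.map_units (LocalizedModule.mkLinearMap _ _)) ?_
  rw [LocalizedModule.lift_comp, IsLocalizedModule.map_comp]

variable (I : Ideal R)

/-- the map to the special fibre -/
noncomputable abbrev sfib (I : Ideal R) : M →ₗ[A] M ⊗[R] (R ⧸ I) := tmulRightS R A M (R ⧸ I) 1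

theorem sfib_surjective : Function.Surjective (sfib (A := A) (M := M) I) := by
  intro z
  induction z using TensorProduct.induction_on with
  | zero => exact ⟨0, map_zero _⟩
  | tmul m c =>
    obtain ⟨r, rfl⟩ := Ideal.Quotient.mk_surjective c
    refine ⟨r • m, ?_⟩
    change (r • m) ⊗ₜ[R] (1 : R ⧸ I) = _
    rw [TensorProduct.smul_tmul, Algebra.smul_def, mul_one]
    rfl
  | add a b ha hb =>
    obtain ⟨a, rfl⟩ := ha
    obtain ⟨b, rfl⟩ := hb
    exact ⟨a + b, map_add _ _ _⟩

theorem sfib_eq_zero (m : M) (h : sfib (A := A) I m = 0) : m ∈ I • (⊤ : Submodule R M) := by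
  have h1 := congrArg (TensorProduct.tensorQuotEquivQuotSMul M I) h
  rw [map_zero] at h1
  have h2 := TensorProduct.tensorQuotEquivQuotSMul_tmul_mk I m 1
  rw [map_one, one_smul] at h2
  have h3 : (Submodule.Quotient.mk m : M ⧸ I • (⊤ : Submodule R M)) = 0 := h2.symm.trans h1
  exact (Submodule.Quotient.mk_eq_zero _).mp h3

theorem sfib_smul {r : R} (hr : r ∈ I) (m : M) : sfib (A := A) I (algebraMap R A r • m) = 0 := by
  change (algebraMap R A r • m) ⊗ₜ[R] (1 : R ⧸ I) = 0
  rw [algebraMap_smul, TensorProduct.smul_tmul, Algebra.smul_def, mul_one]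
  have : algebraMap R (R ⧸ I) r = 0 := Ideal.Quotient.eq_zero_iff_mem.mpr hr
  rw [this, TensorProduct.tmul_zero]

variable (d : ℕ) (J : Ideal A) (hJ : ∀ a ∈ J, ∀ m : M, a • m = 0)
  (hvan : ∀ (K : Type) [AddCommGroup K] [Module A K], (∀ a ∈ J, ∀ m : K, a • m = 0) →
    CV x K (d + 1))

include hJ hvan

theorem sfib_lift (z : cechC A x (M ⊗[R] (R ⧸ I)) d) (hz : cechD A x _ d z = 0) :
    ∃ b : cechC A x M d, cechD A x M d b = 0 ∧ cechF x d (sfib I) b = z := by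
  refine cocycle_lift x (LinearMap.ker (sfib (A := A) (M := M) I)).subtype (sfib I)
    (Submodule.injective_subtype _) (sfib_surjective I) (LinearMap.exact_subtype_ker_map _) d
    (hvan _ ?_) z hz
  rintro a ha ⟨m, hm⟩
  exact Subtype.ext (hJ a ha m)

theorem sfib_ker {s : ℕ} (r : Fin s → R) (hr : Ideal.span (Set.range r) = I)
    (z : cechC A x M d) (hz : cechD A x M d z = 0)
    (hb : ∃ b, cechDprev A x _ d b = cechF x d (sfib (A := A) I) z) :
    ∃ v : Fin s → cechC A x M d, (∀ i, cechD A x M d (v i) = 0) ∧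
      ∃ b, cechDprev A x M d b = z - ∑ i, algebraMap R A (r i) • v i := by
  let Ψ0 : (Fin s → M) →ₗ[A] M := ∑ i, algebraMap R A (r i) • LinearMap.proj i
  have hΨ0 : ∀ v, Ψ0 v = ∑ i, r i • v i := by
    intro v
    simp [Ψ0, LinearMap.sum_apply]
  let K1 := LinearMap.ker (sfib (A := A) (M := M) I)
  have hmem : ∀ v, Ψ0 v ∈ K1 := by
    intro v
    rw [hΨ0, LinearMap.mem_ker, map_sum]
    refine Finset.sum_eq_zero fun i _ => ?_
    rw [← algebraMap_smul A (r i) (v i)]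
    exact sfib_smul I (hr ▸ Ideal.subset_span ⟨i, rfl⟩) _
  let Ψ : (Fin s → M) →ₗ[A] K1 := Ψ0.codRestrict K1 hmem
  have hΨ : Function.Surjective Ψ := by
    rintro ⟨m, hm⟩
    have h1 := sfib_eq_zero (A := A) I m hm
    let P : Submodule R M := (LinearMap.range Ψ0).restrictScalars R
    have h2 : I • (⊤ : Submodule R M) ≤ P := by
      refine Submodule.smul_le.mpr fun a ha m _ => ?_
      rw [← hr] at ha
      obtain ⟨c, rfl⟩ := Ideal.mem_span_range_iff_exists_fun.mp ha
      refine ⟨fun i => c i • m, ?_⟩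
      rw [hΨ0, Finset.sum_smul]
      refine Finset.sum_congr rfl fun i _ => ?_
      rw [smul_smul, mul_comm]
    obtain ⟨v, hv⟩ := h2 h1
    exact ⟨v, Subtype.ext hv⟩
  obtain ⟨b, hb⟩ := hb
  obtain ⟨b, rfl⟩ := cechF_surjective x _ (sfib (A := A) I) (sfib_surjective I) b
  rw [cechDprev_cechF] at hb
  obtain ⟨a, ha⟩ := cechF_exact x d K1.subtype (sfib I) (LinearMap.exact_subtype_ker_map _)
    (z - cechDprev A x M d b) (by rw [map_sub, hb, sub_self])
  have had : cechD A x K1 d a = 0 := by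
    apply cechF_injective x _ _ K1.injective_subtype
    rw [← cechD_cechF, ha, map_sub, hz, cechD_cechDprev, sub_zero, map_zero]
  obtain ⟨v, hv, hva⟩ := cocycle_lift x (LinearMap.ker Ψ).subtype Ψ
    (Submodule.injective_subtype _) hΨ (LinearMap.exact_subtype_ker_map _) d
    (hvan _ (by
      rintro a ha ⟨m, hm⟩
      exact Subtype.ext (funext fun i => hJ a ha (m i)))) a had
  refine ⟨fun i => cechF x d (LinearMap.proj i) v, fun i => by
    rw [cechD_cechF, hv, map_zero], b, ?_⟩
  have h1 : ∑ i, algebraMap R A (r i) • cechF x d (LinearMap.proj i) v = cechF x d Ψ0 v := by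
    simp only [Ψ0, cechF_sum, cechF_smul]
  rw [h1]
  have h2 : Ψ0 = K1.subtype ∘ₗ Ψ := rfl
  rw [h2, ← cechF_comp, hva, ha, sub_sub_cancel]

/-- The natural map is an isomorphism. -/
theorem special_iso [IsNoetherianRing R] :
    ∃ g : TensorProduct R (RestrictScalars R A (lcMod A x M d)) (R ⧸ I) →ₗ[R]
      RestrictScalars R A (lcMod A x (M ⊗[R] (R ⧸ I)) d),
      (∀ (z : LinearMap.ker (cechD A x M d)) (c : R ⧸ I),
        ∃ zz : LinearMap.ker (cechD A x (M ⊗[R] (R ⧸ I)) d),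
          (∀ T, zz.1 T = cechTmul R A M (R ⧸ I) x T.1 (z.1 T) c) ∧
          g ((Submodule.Quotient.mk z : lcMod A x M d) ⊗ₜ[R] c) =
            (Submodule.Quotient.mk zz : lcMod A x (M ⊗[R] (R ⧸ I)) d)) ∧
      Function.Bijective g := by
  let q : (R ⧸ I) → (M →ₗ[A] M ⊗[R] (R ⧸ I)) := fun c => tmulRightS R A M (R ⧸ I) c
  have hqadd : ∀ c c', q (c + c') = q c + q c' := fun c c' =>
    LinearMap.ext fun m => TensorProduct.tmul_add _ _ _
  have hqsmul : ∀ (r : R) c, q (r • c) = algebraMap R A r • q c := fun r c =>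
    LinearMap.ext fun m => by
      change m ⊗ₜ[R] (r • c) = algebraMap R A r • (m ⊗ₜ[R] c)
      rw [algebraMap_smul, TensorProduct.tmul_smul]
  obtain ⟨g, hg, hbij⟩ := tensor_bij (R := R) (A := A) (L := lcMod A x M d)
    (L' := lcMod A x (M ⊗[R] (R ⧸ I)) d) I (fun c => Hmap x d (q c))
    (fun c c' h => by
      obtain ⟨z, rfl⟩ := lcmk_surjective x d h
      rw [Hmap_mk, Hmap_mk, Hmap_mk, ← map_add]
      congr 1
      exact Subtype.ext (by
        change cechF x d (q (c + c')) z.1 = cechF x d (q c) z.1 + cechF x d (q c') z.1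
        rw [hqadd, cechF_add]))
    (fun r c h => by
      obtain ⟨z, rfl⟩ := lcmk_surjective x d h
      rw [Hmap_mk, Hmap_mk, ← map_smul]
      congr 1
      exact Subtype.ext (by
        change cechF x d (q (r • c)) z.1 = algebraMap R A r • cechF x d (q c) z.1
        rw [hqsmul, cechF_smul]))
    (fun u => by
      obtain ⟨z, rfl⟩ := lcmk_surjective x d u
      obtain ⟨b, hb, hbz⟩ := sfib_lift x I d J hJ hvan z.1 z.2
      refine ⟨lcmk x M d ⟨b, hb⟩, ?_⟩
      rw [Hmap_mk]
      congr 1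
      exact Subtype.ext hbz)
    (fun h hh => by
      obtain ⟨z, rfl⟩ := lcmk_surjective x d h
      rw [Hmap_mk] at hh
      obtain ⟨s, r, hr⟩ := Submodule.fg_iff_exists_fin_generating_family.mp
        (IsNoetherian.noetherian I)
      obtain ⟨v, hv, hb⟩ := sfib_ker x I d J hJ hvan r hr z.1 z.2 ((lcmk_eq_zero x d _).mp hh)
      let v' : Fin s → LinearMap.ker (cechD A x M d) := fun i => ⟨v i, hv i⟩
      have h1 : lcmk x M d (z - ∑ i, algebraMap R A (r i) • v' i) = 0 := by
        rw [lcmk_eq_zero]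
        obtain ⟨b, hb⟩ := hb
        refine ⟨b, ?_⟩
        rw [hb]
        simp [v']
      rw [map_sub, sub_eq_zero, map_sum] at h1
      refine ⟨s, r, fun i => lcmk x M d (v' i), fun i => hr ▸ Ideal.subset_span ⟨i, rfl⟩, ?_⟩
      rw [h1]
      exact Finset.sum_congr rfl fun i _ => map_smul _ _ _)
  refine ⟨g, fun z c => ⟨kerMap x d (q c) z, fun T => ?_, hg (lcmk x M d z) c⟩, hbij⟩
  rw [cechTmul_eq]; rfl

end Special

section SpecialGraded

open MvPolynomial TensorProduct

variable {R : Type} [CommRing R] {n : ℕ} {w : Fin n → ℤ}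
  {M : Type} [AddCommGroup M] [Module (MvPolynomial (Fin n) R) M] [Module R M]
  [IsScalarTower R (MvPolynomial (Fin n) R) M] (G : GS (R := R) w M)

theorem lcGradeNonzero_iff (ℳ : ℤ → AddSubgroup M) (hℳ : ∀ μ m, m ∈ ℳ μ ↔ G.p μ m = m)
    (d : ℕ) (μ : ℤ) :
    lcGradeNonzero (MvPolynomial (Fin n) R) (XX R n) M ℳ w d μ ↔ Hgr G d μ ≠ ⊥ := by
  rw [Ne, Hgr_eq_bot]
  have key : ∀ c : cechC (MvPolynomial (Fin n) R) (XX R n) M d,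
      (∀ T, c T ∈ cechGrade (MvPolynomial (Fin n) R) (XX R n) M ℳ w μ T.1) ↔
        pC G d μ c = c := by
    intro c
    constructor
    · intro h
      exact funext fun T => (cechGrade_iff G ℳ hℳ _ _ _).mp (h T)
    · intro h T
      exact (cechGrade_iff G ℳ hℳ _ _ _).mpr (congrFun h T)
  constructor
  · rintro ⟨c, hc1, hc2, hc3⟩ hall
    exact hc3 ((cechIsBoundary_iff _ _ _).mpr (hall c ((mem_Zgr _ _ _ _).mpr
      ⟨hc2, (key c).mp hc1⟩)))
  · intro h
    by_contra hcon
    apply h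
    intro z hz
    by_contra hb
    apply hcon
    obtain ⟨hz1, hz2⟩ := (mem_Zgr _ _ _ _).mp hz
    exact ⟨z, (key z).mpr hz2, hz1, fun h => hb ((cechIsBoundary_iff _ _ _).mp h)⟩

theorem exists_Hgr_ne_bot (d : ℕ) (h : ∀ μ, Hgr G d μ = ⊥) : CV (XX R n) M d := by
  intro z hz
  obtain ⟨s, hs⟩ := pC_sum G d z
  rw [← mem_Bd, ← hs]
  refine Submodule.sum_mem _ fun μ _ => ?_
  refine (Hgr_eq_bot G d μ).mp (h μ) _ ((mem_Zgr _ _ _ _).mpr ⟨?_, ?_⟩)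
  · rw [cechD_pC, hz, map_zero]
  · rw [pC_pC, if_pos rfl]

theorem special_graded [IsNoetherianRing R] [IsLocalRing R] (d : ℕ)
    (J : Ideal (MvPolynomial (Fin n) R)) (hJ : ∀ a ∈ J, ∀ m : M, a • m = 0)
    (hvan : ∀ (K : Type) [AddCommGroup K] [Module (MvPolynomial (Fin n) R) K],
      (∀ a ∈ J, ∀ m : K, a • m = 0) → CV (XX R n) K (d + 1)) (μ : ℤ) (hfg : (Hgr G d μ).FG) :
    Hgr G d μ = ⊥ ↔ Hgr (G.tens (R ⧸ IsLocalRing.maximalIdeal R)) d μ = ⊥ := by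
  set I := IsLocalRing.maximalIdeal R with hI
  have hq : ∀ μ m, sfib (A := MvPolynomial (Fin n) R) I (G.p μ m) =
      (G.tens (R ⧸ I)).p μ (sfib (A := MvPolynomial (Fin n) R) I m) := fun μ m => rfl
  constructor
  · intro h
    rw [Hgr_eq_bot] at h ⊢
    intro z hz
    obtain ⟨hz1, hz2⟩ := (mem_Zgr _ _ _ _).mp hz
    obtain ⟨b, hb, hbz⟩ := sfib_lift (XX R n) I d J hJ hvan z hz1
    obtain ⟨e, he⟩ := h (pC G d μ b) ((mem_Zgr _ _ _ _).mpr
      ⟨by rw [cechD_pC, hb, map_zero], by rw [pC_pC, if_pos rfl]⟩)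
    refine ⟨cechF (XX R n) _ (sfib I) e, ?_⟩
    rw [cechDprev_cechF, he, cechF_pC G (G.tens (R ⧸ I)) _ hq, hbz, hz2]
  · intro h
    rw [Hgr_eq_bot] at h
    refine Submodule.eq_bot_of_le_smul_of_le_jacobson_bot I _ hfg ?_
      (IsLocalRing.maximalIdeal_le_jacobson _)
    rintro _ ⟨z, hz, rfl⟩
    obtain ⟨hz1, hz2⟩ := (mem_Zgr _ _ _ _).mp hz
    obtain ⟨s, r, hr⟩ := Submodule.fg_iff_exists_fin_generating_family.mp
      (IsNoetherian.noetherian I)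
    obtain ⟨v, hv, b, hb⟩ := sfib_ker (XX R n) I d J hJ hvan r hr z hz1
      (h _ ((mem_Zgr _ _ _ _).mpr ⟨by rw [cechD_cechF, hz1, map_zero], by
        rw [← cechF_pC G (G.tens (R ⧸ I)) _ hq, hz2]⟩))
    have h1 : z - ∑ i, r i • pC G d μ (v i) ∈ Bd R n M d := by
      refine ⟨pC G _ μ b, ?_⟩
      rw [cechDprev_pC, hb, map_sub, map_sum, hz2]
      congr 1
      refine Finset.sum_congr rfl fun i _ => ?_
      rw [algebraMap_smul, map_smul]
    have h2 : (Bd R n M d).mkQ z = ∑ i, r i • (Bd R n M d).mkQ (pC G d μ (v i)) := by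
      have := (Submodule.Quotient.mk_eq_zero _).mpr h1
      change (Bd R n M d).mkQ _ = 0 at this
      rw [map_sub, sub_eq_zero, map_sum] at this
      rw [this]
      simp only [map_smul]
    rw [h2]
    refine Submodule.sum_mem _ fun i _ => Submodule.smul_mem_smul
      (hr ▸ Ideal.subset_span ⟨i, rfl⟩) ⟨_, (mem_Zgr _ _ _ _).mpr
      ⟨by rw [cechD_pC, hv, map_zero], by rw [pC_pC, if_pos rfl]⟩, rfl⟩

end SpecialGraded


/-! ### Part 6: homogeneous systems of parameters -/

section Param

open MvPolynomial

variable {R : Type} [CommRing R] {n : ℕ} (w : Fin n → ℤ)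

/-- homogeneous ideals -/
def hid (I : Ideal (MvPolynomial (Fin n) R)) : Prop :=
  ∀ f ∈ I, ∀ μ : ℤ, weightedHomogeneousComponent w μ f ∈ I

attribute [local instance] MvPolynomial.weightedGradedAlgebra

theorem hid_iff (I : Ideal (MvPolynomial (Fin n) R)) :
    hid w I ↔ I.IsHomogeneous (weightedHomogeneousSubmodule R w) := by
  constructor
  · intro h μ f hf
    have := h f hf μ
    rw [← weightedDecomposition.decompose'_apply] at this
    exact this
  · intro h f hf μ
    exact weightedHomogeneousComponent_mem_of_mem R w h hf μ

theorem hid_sup {I J : Ideal (MvPolynomial (Fin n) R)} (hI : hid w I) (hJ : hid w J) :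
    hid w (I ⊔ J) := by
  rw [hid_iff] at *
  exact hI.sup hJ

theorem hid_span {s : Set (MvPolynomial (Fin n) R)}
    (h : ∀ f ∈ s, ∃ δ, IsWeightedHomogeneous w f δ) : hid w (Ideal.span s) := by
  rw [hid_iff]
  exact Ideal.homogeneous_span _ _ h

theorem hid_minimalPrimes {I : Ideal (MvPolynomial (Fin n) R)} (hI : hid w I)
    {p : Ideal (MvPolynomial (Fin n) R)} (hp : p ∈ I.minimalPrimes) : hid w p := by
  rw [hid_iff] at hI ⊢
  have hpp : p.IsPrime := hp.1.1
  have h1 := Ideal.IsPrime.homogeneousCore (𝒜 := weightedHomogeneousSubmodule R w) hpp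
  have h2 : I ≤ (p.homogeneousCore (weightedHomogeneousSubmodule R w)).toIdeal := by
    rw [← hI.toIdeal_homogeneousCore_eq_self]
    exact Ideal.homogeneousCore_mono _ hp.1.2
  have h3 := hp.2 ⟨h1, h2⟩ (Ideal.toIdeal_homogeneousCore_le _ p)
  rw [Ideal.IsHomogeneous.iff_eq]
  exact le_antisymm (Ideal.toIdeal_homogeneousCore_le _ p) h3

/-- an element not in a homogeneous ideal has a component not in it -/
theorem exists_comp_notMem {p q : Ideal (MvPolynomial (Fin n) R)} (hq : hid w q)
    (h : ¬ q ≤ p) : ∃ f ∈ q, f ∉ p ∧ ∃ δ, IsWeightedHomogeneous w f δ := by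
  by_contra hcon
  push Not at hcon
  apply h
  intro f hf
  rw [← sum_weightedHomogeneousComponent w f]
  rw [finsum_eq_sum _ (weightedHomogeneousComponent_finsupp f)]
  refine Ideal.sum_mem _ fun μ _ => ?_
  by_contra hn
  exact hcon _ (hq f hf μ) hn μ (weightedHomogeneousComponent_isWeightedHomogeneous μ f)

variable {w} (hw : ∀ i, 0 < w i)
include hw

theorem weight_nonneg (β : Fin n →₀ ℕ) : 0 ≤ Finsupp.weight w β := by
  rw [Finsupp.weight_apply]
  exact Finsupp.sum_nonneg fun i _ => by
    have := (hw i).le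
    positivity

theorem weight_eq_zero {β : Fin n →₀ ℕ} (h : Finsupp.weight w β = 0) : β = 0 := by
  rw [Finsupp.weight_apply, Finsupp.sum_fintype _ _ (by simp)] at h
  rw [Finset.sum_eq_zero_iff_of_nonneg (fun i _ => by have := (hw i).le; positivity)] at h
  ext i
  have := h i (Finset.mem_univ i)
  have h2 := (hw i).ne'
  simp only [nsmul_eq_mul, mul_eq_zero, Nat.cast_eq_zero] at this
  tauto

theorem hom_nonneg {f : MvPolynomial (Fin n) R} {δ : ℤ} (hf : IsWeightedHomogeneous w f δ)
    (h0 : f ≠ 0) : 0 ≤ δ := by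
  obtain ⟨β, hβ⟩ := MvPolynomial.ne_zero_iff.mp h0
  rw [← hf hβ]
  exact weight_nonneg hw β

/-- the degree zero part is the constant term -/
theorem comp_zero (f : MvPolynomial (Fin n) R) :
    weightedHomogeneousComponent w 0 f = C (constantCoeff f) := by
  classical
  ext β
  rw [coeff_weightedHomogeneousComponent, coeff_C]
  by_cases h : β = 0
  · subst h
    simp [constantCoeff_eq]
  · rw [if_neg (fun h' => h (weight_eq_zero hw h')), if_neg (Ne.symm h)]

/-- every proper homogeneous ideal lies in the maximal homogeneous ideal -/
theorem hid_le [IsLocalRing R] {p : Ideal (MvPolynomial (Fin n) R)} (hp : hid w p) (hne : p ≠ ⊤) :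
    p ≤ (IsLocalRing.maximalIdeal R).comap constantCoeff := by
  intro f hf
  rw [Ideal.mem_comap, IsLocalRing.mem_maximalIdeal, mem_nonunits_iff]
  intro hu
  apply hne
  have := hp f hf 0
  rw [comp_zero hw] at this
  exact Ideal.eq_top_of_isUnit_mem _ this (hu.map C)

omit hw in
theorem eq_max_of_X_mem [IsLocalRing R] {p : Ideal (MvPolynomial (Fin n) R)}
    (hm : (IsLocalRing.maximalIdeal R).map C ≤ p) (hX : ∀ i, X i ∈ p) :
    (IsLocalRing.maximalIdeal R).comap constantCoeff ≤ p := by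
  intro f hf
  rw [Ideal.mem_comap] at hf
  have h1 : f - C (constantCoeff f) ∈ p := by
    clear hf
    induction f using MvPolynomial.induction_on with
    | C r => simp
    | add a b ha hb =>
      have : a + b - C (constantCoeff (a + b)) =
        (a - C (constantCoeff a)) + (b - C (constantCoeff b)) := by
        simp only [map_add]; ring
      rw [this]
      exact Ideal.add_mem _ ha hb
    | mul_X a i ha => simpa using Ideal.mul_mem_left _ _ (hX i)
  have h2 : C (constantCoeff f) ∈ p := hm (Ideal.mem_map_of_mem _ hf)
  simpa using Ideal.add_mem _ h1 h2

/-- homogeneous prime avoidance -/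
theorem hom_avoid (P : Finset (Ideal (MvPolynomial (Fin n) R)))
    (hP : ∀ p ∈ P, p.IsPrime) (hh : ∀ p ∈ P, hid w p)
    (hanti : ∀ p ∈ P, ∀ q ∈ P, p ≤ q → p = q)
    (hX : ∀ p ∈ P, ∃ i, X i ∉ p) :
    ∃ f : MvPolynomial (Fin n) R, ∃ δ, 0 < δ ∧ IsWeightedHomogeneous w f δ ∧
      f ∈ Ideal.span (Set.range (XX R n)) ∧ ∀ p ∈ P, f ∉ p := by
  classical
  induction P using Finset.induction_on with
  | empty =>
    exact ⟨0, 1, one_pos, isWeightedHomogeneous_zero _ _ _, Ideal.zero_mem _, by simp⟩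
  | insert p P hpP ih =>
    obtain ⟨f, a, ha, hfa, hfX, hf⟩ := ih (fun q hq => hP q (Finset.mem_insert_of_mem hq))
      (fun q hq => hh q (Finset.mem_insert_of_mem hq))
      (fun q hq q' hq' => hanti q (Finset.mem_insert_of_mem hq) q' (Finset.mem_insert_of_mem hq'))
      (fun q hq => hX q (Finset.mem_insert_of_mem hq))
    by_cases hfp : f ∈ p
    · have hpp : p.IsPrime := hP p (Finset.mem_insert_self _ _)
      obtain ⟨i, hi⟩ := hX p (Finset.mem_insert_self _ _)
      have h1 : ∀ q ∈ P, ∃ g ∈ q, g ∉ p ∧ ∃ δ, IsWeightedHomogeneous w g δ := by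
        intro q hq
        apply exists_comp_notMem w (hh q (Finset.mem_insert_of_mem hq))
        intro hle
        have := hanti q (Finset.mem_insert_of_mem hq) p (Finset.mem_insert_self _ _) hle
        exact hpP (this ▸ hq)
      choose! g hgq hgp δ hgδ using h1
      let G : MvPolynomial (Fin n) R := (∏ q ∈ P, g q) * X i
      have hGp : G ∉ p := by
        intro h
        rcases hpp.mem_or_mem h with h | h
        · obtain ⟨q, hq, hq'⟩ := hpp.prod_mem_iff.mp h
          exact hgp q hq hq'
        · exact hi h
      have hGq : ∀ q ∈ P, G ∈ q := fun q hq =>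
        Ideal.mul_mem_right _ _ (Ideal.mem_of_dvd _ (Finset.dvd_prod_of_mem _ hq) (hgq q hq))
      have hGh : IsWeightedHomogeneous w G (∑ q ∈ P, δ q + w i) :=
        (IsWeightedHomogeneous.prod P g δ (fun q hq => hgδ q hq)).mul
          (isWeightedHomogeneous_X R w i)
      have hprod0 : (∏ q ∈ P, g q) ≠ 0 := by
        intro h
        apply hGp
        simp only [G]
        rw [h, zero_mul]
        exact Ideal.zero_mem _
      have hb : 0 < ∑ q ∈ P, δ q + w i := by
        have := hom_nonneg hw (IsWeightedHomogeneous.prod P g δ (fun q hq => hgδ q hq)) hprod0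
        have := hw i
        omega
      set b := ∑ q ∈ P, δ q + w i with hbdef
      obtain ⟨a', rfl⟩ := Int.eq_ofNat_of_zero_le ha.le
      obtain ⟨b', hb'⟩ := Int.eq_ofNat_of_zero_le hb.le
      rw [hb'] at hGh hb
      have ha0 : a' ≠ 0 := by omega
      have hb0 : b' ≠ 0 := by omega
      refine ⟨f ^ b' + G ^ a', a' * b', mul_pos ha hb, ?_, ?_, ?_⟩
      · refine IsWeightedHomogeneous.add ?_ ?_
        · have := hfa.pow b'
          rwa [nsmul_eq_mul, mul_comm] at this
        · have := hGh.pow a'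
          rwa [nsmul_eq_mul] at this
      · refine Ideal.add_mem _ (Ideal.pow_mem_of_mem _ hfX _ (Nat.pos_of_ne_zero hb0))
          (Ideal.pow_mem_of_mem _ ?_ _ (Nat.pos_of_ne_zero ha0))
        exact Ideal.mul_mem_left _ _ (Ideal.subset_span ⟨i, rfl⟩)
      · intro q hq
        rcases Finset.mem_insert.mp hq with rfl | hq
        · intro h
          have h2 := (Ideal.add_mem_iff_right _ (Ideal.pow_mem_of_mem _ hfp _
            (Nat.pos_of_ne_zero hb0))).mp h
          exact hGp (hpp.mem_of_pow_mem _ h2)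
        · intro h
          have h2 := (Ideal.add_mem_iff_left _ (Ideal.pow_mem_of_mem _ (hGq q hq) _
            (Nat.pos_of_ne_zero ha0))).mp h
          exact hf q hq ((hP q (Finset.mem_insert_of_mem hq)).mem_of_pow_mem _ h2)
    · refine ⟨f, a, ha, hfa, hfX, fun q hq => ?_⟩
      rcases Finset.mem_insert.mp hq with rfl | hq
      · exact hfp
      · exact hf q hq

theorem le_max_chain [IsLocalRing R] {I : Ideal (MvPolynomial (Fin n) R)} (hI : hid w I)
    (hm : (IsLocalRing.maximalIdeal R).map C ≤ I)
    {p : Ideal (MvPolynomial (Fin n) R)} (hp : p ∈ I.minimalPrimes) (hX : ∀ i, X i ∈ p) :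
    p = (IsLocalRing.maximalIdeal R).comap constantCoeff :=
  le_antisymm (hid_le hw (hid_minimalPrimes w hI hp) hp.1.1.ne_top)
    (eq_max_of_X_mem (hm.trans hp.1.2) hX)

omit hw in
theorem max_isMaximal [IsLocalRing R] :
    ((IsLocalRing.maximalIdeal R).comap
      (constantCoeff : MvPolynomial (Fin n) R →+* R)).IsMaximal :=
  Ideal.comap_isMaximal_of_surjective _ (fun r => ⟨C r, constantCoeff_C _ _⟩)

theorem param [IsLocalRing R] [IsNoetherianRing R] (d : ℕ) :
    ∀ I : Ideal (MvPolynomial (Fin n) R), hid w I → (IsLocalRing.maximalIdeal R).map C ≤ I →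
      ringKrullDim (MvPolynomial (Fin n) R ⧸ I) ≤ d →
      ∃ (y : Fin d → MvPolynomial (Fin n) R) (δ : Fin d → ℤ), (∀ j, 0 < δ j) ∧
        (∀ j, IsWeightedHomogeneous w (y j) (δ j)) ∧
        (∀ j, y j ∈ Ideal.span (Set.range (XX R n))) ∧
        ∀ i, XX R n i ∈ (Ideal.span (Set.range y) ⊔ I).radical := by
  classical
  induction d with
  | zero =>
    intro I hI hm hd
    refine ⟨Fin.elim0, Fin.elim0, fun j => j.elim0, fun j => j.elim0, fun j => j.elim0, ?_⟩
    intro i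
    refine Ideal.radical_mono le_sup_right ?_
    rw [← Ideal.sInf_minimalPrimes, Ideal.mem_sInf]
    intro p hp
    have hle := hid_le hw (hid_minimalPrimes w hI hp) hp.1.1.ne_top
    have heq : p = (IsLocalRing.maximalIdeal R).comap constantCoeff := by
      by_contra hne
      have hlt := lt_of_le_of_ne hle hne
      rw [ringKrullDim_quotient] at hd
      have hx : (⟨p, hp.1.1⟩ : PrimeSpectrum _) ∈
        PrimeSpectrum.zeroLocus (I : Set (MvPolynomial (Fin n) R)) := hp.1.2
      have hy : (⟨_, max_isMaximal.isPrime⟩ : PrimeSpectrum (MvPolynomial (Fin n) R)) ∈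
        PrimeSpectrum.zeroLocus (I : Set (MvPolynomial (Fin n) R)) := hp.1.2.trans hle
      have h1 : (1 : WithBot ℕ∞) ≤ Order.krullDim
          (PrimeSpectrum.zeroLocus (I : Set (MvPolynomial (Fin n) R))) :=
        Order.one_le_krullDim_iff.mpr ⟨⟨_, hx⟩, ⟨_, hy⟩, hlt⟩
      have := h1.trans hd
      exact absurd this (by simp)
    rw [heq, Ideal.mem_comap]
    simp [XX]
  | succ d ih =>
    intro I hI hm hd
    have hfin := Ideal.finite_minimalPrimes_of_isNoetherianRing (MvPolynomial (Fin n) R) I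
    let P : Finset (Ideal (MvPolynomial (Fin n) R)) :=
      hfin.toFinset.filter (fun p => ∃ i, X i ∉ p)
    have hPm : ∀ p ∈ P, p ∈ I.minimalPrimes := fun p hp =>
      hfin.mem_toFinset.mp (Finset.mem_filter.mp hp).1
    obtain ⟨f, δ, hδ, hf, hfX, hfP⟩ := hom_avoid hw P (fun p hp => (hPm p hp).1.1)
      (fun p hp => hid_minimalPrimes w hI (hPm p hp))
      (fun p hp q hq hpq => le_antisymm hpq ((hPm q hq).2 (hPm p hp).1 hpq))
      (fun p hp => (Finset.mem_filter.mp hp).2)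
    obtain ⟨y, δ', h1, h2, h3, h4⟩ := ih (I ⊔ Ideal.span {f})
      (hid_sup w hI (hid_span w (by rintro g rfl; exact ⟨δ, hf⟩))) (hm.trans le_sup_left) (by
        rw [ringKrullDim_quotient] at hd ⊢
        refine iSup_le fun l => ?_
        obtain ⟨p, hp, hp'⟩ := Ideal.exists_minimalPrimes_le (I := I) (J := l.head.1.asIdeal)
          (le_sup_left.trans (show I ⊔ Ideal.span {f} ≤ _ from l.head.2))
        have hfl : f ∈ l.head.1.asIdeal := 
          (show I ⊔ Ideal.span {f} ≤ l.head.1.asIdeal from l.head.2)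
            (Ideal.mem_sup_right (Ideal.mem_span_singleton_self f))
        have := hp.1.1
        by_cases heq : p = l.head.1.asIdeal
        · have hX : ∀ i, X i ∈ p := by
            by_contra hcon
            push Not at hcon
            exact hfP p (Finset.mem_filter.mpr ⟨hfin.mem_toFinset.mpr hp, hcon⟩) (heq ▸ hfl)
          have hmax : l.head.1.asIdeal.IsMaximal := by
            rw [← heq, le_max_chain hw hI hm hp hX]
            exact max_isMaximal
          have hl : l.length = 0 := by
            by_contra hl
            have hlt : l.head < l.last := l.strictMono (Fin.lt_def.mpr (Nat.pos_of_ne_zero hl))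
            have h1 : l.head.1.asIdeal < l.last.1.asIdeal := hlt
            exact l.last.1.2.ne_top (hmax.1.2 _ h1)
          rw [hl]
          exact_mod_cast Nat.zero_le d
        · let p' : PrimeSpectrum.zeroLocus (I : Set (MvPolynomial (Fin n) R)) :=
            ⟨⟨p, this⟩, hp.1.2⟩
          let ι : PrimeSpectrum.zeroLocus ((I ⊔ Ideal.span {f} : Ideal _) :
              Set (MvPolynomial (Fin n) R)) →
              PrimeSpectrum.zeroLocus (I : Set (MvPolynomial (Fin n) R)) := fun q =>
            ⟨q.1, le_sup_left.trans (show I ⊔ Ideal.span {f} ≤ _ from q.2)⟩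
          have hlt : p' < (l.map ι (fun _ _ h => h)).head := lt_of_le_of_ne hp' fun h =>
            heq (congrArg (fun q => q.1.asIdeal) h)
          have := (Order.LTSeries.length_le_krullDim ((l.map ι (fun _ _ h => h)).cons p' hlt)).trans hd
          rw [RelSeries.cons_length] at this
          have h' : ((l.length + 1 : ℕ) : WithBot ℕ∞) ≤ ((d + 1 : ℕ) : WithBot ℕ∞) := this
          have hbis : l.length + 1 ≤ d + 1 := by exact_mod_cast h'
          have h3 : l.length ≤ d := by omega
          exact_mod_cast h3)
    refine ⟨Fin.cons f y, Fin.cons δ δ', fun j => ?_, fun j => ?_, fun j => ?_, fun i => ?_⟩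
    · refine Fin.cases ?_ (fun j => ?_) j
      · simpa using hδ
      · simpa using h1 j
    · refine Fin.cases ?_ (fun j => ?_) j
      · simpa using hf
      · simpa using h2 j
    · refine Fin.cases ?_ (fun j => ?_) j
      · simpa using hfX
      · simpa using h3 j
    · refine Ideal.radical_mono ?_ (h4 i)
      rw [Fin.range_cons, Ideal.span_insert]
      refine sup_le (le_sup_of_le_left le_sup_right) (sup_le le_sup_right ?_)
      exact le_sup_of_le_left le_sup_left

end Param


/-! ### Part 7: parameters for the module -/

section Nak

open MvPolynomial

variable {R : Type} [CommRing R] {n : ℕ} {w : Fin n → ℤ}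

theorem sum_comp (w : Fin n → ℤ) (f : MvPolynomial (Fin n) R) :
    ∃ s : Finset ℤ, ∀ s', s ⊆ s' → ∑ μ ∈ s', weightedHomogeneousComponent w μ f = f := by
  classical
  have hf : (Function.support fun m => weightedHomogeneousComponent w m f).Finite :=
    weightedHomogeneousComponent_finsupp f
  refine ⟨hf.toFinset, fun s' hs' => ?_⟩
  conv_rhs => rw [← sum_weightedHomogeneousComponent w f, finsum_eq_sum _ hf]
  refine (Finset.sum_subset hs' fun μ _ hμ => ?_).symm
  by_contra h
  exact hμ (hf.mem_toFinset.mpr h)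

theorem comp_mul {f : MvPolynomial (Fin n) R} {δ : ℤ} (hf : IsWeightedHomogeneous w f δ) (μ : ℤ)
    (g : MvPolynomial (Fin n) R) : weightedHomogeneousComponent w (μ + δ) (f * g) =
      f * weightedHomogeneousComponent w μ g := by
  classical
  obtain ⟨s, hs⟩ := sum_comp w g
  conv_lhs => rw [← hs (insert μ s) (Finset.subset_insert _ _), Finset.mul_sum, map_sum]
  rw [Finset.sum_eq_single_of_mem μ (Finset.mem_insert_self _ _)]
  · apply IsWeightedHomogeneous.weightedHomogeneousComponent_same
    rw [add_comm]
    exact hf.mul (weightedHomogeneousComponent_isWeightedHomogeneous μ g)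
  · intro ν _ hν
    apply IsWeightedHomogeneous.weightedHomogeneousComponent_ne (m := δ + ν)
    · exact hf.mul (weightedHomogeneousComponent_isWeightedHomogeneous ν g)
    · intro h
      apply hν
      omega

variable (hw : ∀ i, 0 < w i)
include hw

theorem le_weight (β : Fin n →₀ ℕ) (i : Fin n) : (β i : ℤ) ≤ Finsupp.weight w β := by
  rw [Finsupp.weight_apply, Finsupp.sum_fintype _ _ (by simp)]
  have h1 : β i • w i ≤ ∑ j, β j • w j :=
    Finset.single_le_sum (f := fun j => β j • w j)
      (fun j _ => by have := (hw j).le; positivity) (Finset.mem_univ i)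
  refine le_trans ?_ h1
  have := hw i
  simp only [nsmul_eq_mul]
  nlinarith [Int.natCast_nonneg (β i)]

theorem homSub_fg (μ : ℤ) : (weightedHomogeneousSubmodule R w μ).FG := by
  have hfin : {d : Fin n →₀ ℕ | Finsupp.weight w d = μ}.Finite := by
    refine (Set.finite_Iic (Finsupp.equivFunOnFinite.symm fun _ => μ.toNat)).subset ?_
    intro β hβ i
    have := le_weight hw β i
    rw [show Finsupp.weight w β = μ from hβ] at this
    simp
    omega
  have := hfin.to_subtype
  rw [weightedHomogeneousSubmodule_eq_finsupp_supported, ← Module.Finite.iff_fg]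
  exact Module.Finite.of_basis (basisRestrictSupport R {d | Finsupp.weight w d = μ})

/-- monomials of large degree lie in an ideal containing powers of the variables -/
theorem exists_ge_of_weight {t : ℕ} (hn : 0 < n) (β : Fin n →₀ ℕ)
    (h : ∑ j, t • w j ≤ Finsupp.weight w β) : ∃ j, t ≤ β j := by
  by_contra hcon
  push Not at hcon
  rw [Finsupp.weight_apply, Finsupp.sum_fintype _ _ (by simp)] at h
  have : ∑ j, β j • w j < ∑ j, t • w j := by
    have : Nonempty (Fin n) := ⟨⟨0, hn⟩⟩
    refine Finset.sum_lt_sum_of_nonempty Finset.univ_nonempty fun j _ => ?_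
    have := hcon j
    have h2 := hw j
    simp only [nsmul_eq_mul]
    have h3 : (β j : ℤ) < t := by exact_mod_cast this
    nlinarith
  omega

omit hw in
theorem monomial_mem_of_ge {t : ℕ} {I : Ideal (MvPolynomial (Fin n) R)} {j : Fin n}
    (hI : X j ^ t ∈ I) (β : Fin n →₀ ℕ) (hβ : t ≤ β j) (r : R) : monomial β r ∈ I := by
  classical
  have : monomial β r = monomial (β - Finsupp.single j t) r * X j ^ t := by
    rw [X_pow_eq_monomial, monomial_mul, mul_one, tsub_add_cancel_of_le]
    exact Finsupp.single_le_iff.mpr hβ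
  rw [this]
  exact Ideal.mul_mem_left _ _ hI

omit hw in
theorem exists_common_pow {I : Ideal (MvPolynomial (Fin n) R)}
    (hX : ∀ i, XX R n i ∈ I.radical) : ∃ t : ℕ, ∀ i, (X i : MvPolynomial (Fin n) R) ^ t ∈ I := by
  choose t ht using hX
  refine ⟨∑ i, t i, fun i => ?_⟩
  exact Ideal.mem_of_dvd _ (pow_dvd_pow _ (Finset.single_le_sum (f := t) (fun _ _ => Nat.zero_le _)
    (Finset.mem_univ i))) (ht i)

theorem rad_nak [IsLocalRing R] {J : Ideal (MvPolynomial (Fin n) R)} (hJ : hid w J)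
    (hX : ∀ i, XX R n i ∈ (J ⊔ (IsLocalRing.maximalIdeal R).map C).radical) (i : Fin n) :
    XX R n i ∈ J.radical := by
  classical
  have hn : 0 < n := i.pos
  obtain ⟨t, ht⟩ := exists_common_pow hX
  obtain ⟨s, hs⟩ := Int.eq_ofNat_of_zero_le (show 0 ≤ ∑ j, t • w j from
    Finset.sum_nonneg fun j _ => by have := (hw j).le; positivity)
  refine ⟨s, ?_⟩
  let μ : ℤ := s * w i
  have hμ : ∑ j, t • w j ≤ μ := by
    rw [hs]
    have := hw i
    have h2 : (0 : ℤ) ≤ s := Int.natCast_nonneg s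
    change (s : ℤ) ≤ s * w i
    nlinarith
  have hle : weightedHomogeneousSubmodule R w μ ≤ J.restrictScalars R := by
    refine Submodule.le_of_le_smul_of_le_jacobson_bot (I := IsLocalRing.maximalIdeal R)
      (homSub_fg hw μ) (IsLocalRing.maximalIdeal_le_jacobson _) ?_
    intro f hf
    have h1 : f ∈ J ⊔ (IsLocalRing.maximalIdeal R).map C := by
      rw [f.as_sum]
      refine Ideal.sum_mem _ fun β hβ => ?_
      obtain ⟨j, hj⟩ := exists_ge_of_weight hw (t := t) hn β (by
        rw [hf (mem_support_iff.mp hβ)]; exact hμ)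
      exact monomial_mem_of_ge (ht j) β hj _
    obtain ⟨g, hg, h, hh, hgh⟩ := Submodule.mem_sup.mp h1
    have h2 : f = weightedHomogeneousComponent w μ g + weightedHomogeneousComponent w μ h := by
      rw [← map_add, hgh]
      exact (IsWeightedHomogeneous.weightedHomogeneousComponent_same hf).symm
    rw [h2]
    refine Submodule.add_mem_sup (hJ g hg μ) ?_
    rw [(weightedHomogeneousComponent w μ h).as_sum]
    refine Submodule.sum_mem _ fun β hβ => ?_
    rw [mem_support_iff, coeff_weightedHomogeneousComponent] at hβ
    split_ifs at hβ with hwt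
    · have h3 : monomial β (coeff β (weightedHomogeneousComponent w μ h)) =
        (coeff β h) • monomial β (1 : R) := by
        rw [coeff_weightedHomogeneousComponent, if_pos hwt, smul_monomial, smul_eq_mul, mul_one]
      rw [h3]
      refine Submodule.smul_mem_smul (mem_map_C_iff.mp hh β) ?_
      exact isWeightedHomogeneous_monomial w β 1 hwt
    · exact absurd rfl hβ
  apply hle
  have := (isWeightedHomogeneous_X R w i).pow s
  rw [nsmul_eq_mul] at this
  exact this

end Nak

section ModPar

open MvPolynomial TensorProduct

variable {R : Type} [CommRing R] {n : ℕ} {w : Fin n → ℤ}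
  {M : Type} [AddCommGroup M] [Module (MvPolynomial (Fin n) R) M] [Module R M]
  [IsScalarTower R (MvPolynomial (Fin n) R) M]

theorem hid_ann (G : GS (R := R) w M) :
    hid w (Module.annihilator (MvPolynomial (Fin n) R) M) := by
  classical
  intro f hf μ
  rw [Module.mem_annihilator] at hf ⊢
  intro m
  obtain ⟨s, hs⟩ := G.p_sum m
  rw [← hs, Finset.smul_sum]
  refine Finset.sum_eq_zero fun ν _ => ?_
  obtain ⟨u, hu⟩ := sum_comp w f
  have h1 := hf (G.p ν m)
  rw [← hu (insert μ u) (Finset.subset_insert _ _), Finset.sum_smul] at h1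
  have h2 := congrArg (G.p (ν + μ)) h1
  have h4 : ∀ μ', weightedHomogeneousComponent w μ' f • G.p ν m =
      G.p (ν + μ') (weightedHomogeneousComponent w μ' f • G.p ν m) := by
    intro μ'
    rw [G.p_hom (weightedHomogeneousComponent_isWeightedHomogeneous μ' f), G.p_p, if_pos rfl]
  rw [map_zero, map_sum, Finset.sum_eq_single_of_mem μ (Finset.mem_insert_self _ _), ← h4] at h2
  · exact h2
  · intro μ' _ hne
    rw [h4, G.p_p, if_neg (by omega)]

theorem map_C_le_ann (I : Ideal R) :
    I.map C ≤ Module.annihilator (MvPolynomial (Fin n) R) (M ⊗[R] (R ⧸ I)) := by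
  rw [Ideal.map_le_iff_le_comap]
  intro r hr
  rw [Ideal.mem_comap, Module.mem_annihilator]
  intro z
  obtain ⟨m, rfl⟩ := sfib_surjective (A := MvPolynomial (Fin n) R) I z
  rw [← map_smul]
  exact sfib_smul I hr m

theorem ann_le_rad [Module.Finite (MvPolynomial (Fin n) R) M] (I : Ideal R) :
    Module.annihilator (MvPolynomial (Fin n) R) (M ⊗[R] (R ⧸ I)) ≤
      (Module.annihilator (MvPolynomial (Fin n) R) M ⊔ I.map C).radical := by
  intro f hf
  have hrange : LinearMap.range (LinearMap.lsmul (MvPolynomial (Fin n) R) M f) ≤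
      (I.map C : Ideal (MvPolynomial (Fin n) R)) • ⊤ := by
    rintro _ ⟨m, rfl⟩
    have h1 : sfib (A := MvPolynomial (Fin n) R) I (f • m) = 0 := by
      rw [map_smul]
      exact Module.mem_annihilator.mp hf _
    have h2 := sfib_eq_zero I _ h1
    have h3 : I • (⊤ : Submodule R M) ≤
        ((I.map C : Ideal (MvPolynomial (Fin n) R)) • (⊤ : Submodule (MvPolynomial (Fin n) R) M)
          ).restrictScalars R := by
      refine Submodule.smul_le.mpr fun r hr m _ => ?_
      have e : r • m = (C r : MvPolynomial (Fin n) R) • m :=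
        (algebraMap_smul (MvPolynomial (Fin n) R) r m).symm
      rw [Submodule.restrictScalars_mem, e]
      exact Submodule.smul_mem_smul (Ideal.mem_map_of_mem C hr) Submodule.mem_top
    exact h3 h2
  obtain ⟨p, hp, -, hc, h0⟩ :=
    LinearMap.exists_monic_and_natDegree_eq_and_coeff_mem_pow_and_aeval_eq_zero
      (MvPolynomial (Fin n) R) (LinearMap.lsmul (MvPolynomial (Fin n) R) M f) _ hrange
  refine ⟨p.natDegree, ?_⟩
  have h1 : p.eval f ∈ Module.annihilator (MvPolynomial (Fin n) R) M := by
    rw [Module.mem_annihilator]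
    intro m
    have h2 := LinearMap.congr_fun h0 m
    have h3 : (Polynomial.aeval (LinearMap.lsmul (MvPolynomial (Fin n) R) M f)) p =
        LinearMap.lsmul (MvPolynomial (Fin n) R) M (p.eval f) := by
      have := Polynomial.aeval_algHom_apply
        (Algebra.lsmul (MvPolynomial (Fin n) R) (MvPolynomial (Fin n) R) M) f p
      rw [Polynomial.coe_aeval_eq_eval] at this
      exact this
    rw [h3] at h2
    exact h2
  have h2 : f ^ p.natDegree = p.eval f -
      ∑ k ∈ Finset.range p.natDegree, p.coeff k * f ^ k := by
    rw [Polynomial.eval_eq_sum_range, Finset.sum_range_succ, hp.coeff_natDegree]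
    ring
  rw [h2]
  refine Ideal.sub_mem _ (Ideal.mem_sup_left h1) (Ideal.mem_sup_right ?_)
  refine Ideal.sum_mem _ fun k hk => Ideal.mul_mem_right _ _ ?_
  exact Ideal.pow_le_self (by have := Finset.mem_range.mp hk; omega) (hc k)

theorem module_param (hw : ∀ i, 0 < w i) [IsLocalRing R] [IsNoetherianRing R]
    [Module.Finite (MvPolynomial (Fin n) R) M] (G : GS (R := R) w M) (d : ℕ)
    (hd : ringKrullDim (MvPolynomial (Fin n) R ⧸ Module.annihilator (MvPolynomial (Fin n) R)
      (M ⊗[R] (R ⧸ IsLocalRing.maximalIdeal R))) = d) :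
      ∃ (y : Fin d → MvPolynomial (Fin n) R) (δ : Fin d → ℤ), (∀ j, 0 < δ j) ∧
        (∀ j, IsWeightedHomogeneous w (y j) (δ j)) ∧
        (∀ j, y j ∈ Ideal.span (Set.range (XX R n))) ∧
        ∀ i, XX R n i ∈ (Ideal.span (Set.range y) ⊔
          Module.annihilator (MvPolynomial (Fin n) R) M).radical := by
  obtain ⟨y, δ, h1, h2, h3, h4⟩ := param hw d _ (hid_ann (G.tens _)) (map_C_le_ann _) hd.le
  refine ⟨y, δ, h1, h2, h3, rad_nak hw (hid_sup w (hid_span w ?_) (hid_ann G)) fun i => ?_⟩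
  · rintro _ ⟨j, rfl⟩
    exact ⟨_, h2 j⟩
  · rw [← Ideal.radical_idem]
    refine Ideal.radical_mono (sup_le ?_ ?_) (h4 i)
    · exact (le_sup_of_le_left le_sup_left).trans Ideal.le_radical
    · refine (ann_le_rad _).trans (Ideal.radical_mono ?_)
      rw [sup_assoc]
      exact le_sup_right

end ModPar


/-! ### Part 8: nonvanishing of the top cohomology -/

section TopNonvanish

variable {A : Type} [CommRing A]

theorem CV_top_eq {d : ℕ} (y : Fin d → A) {N : Type} [AddCommGroup N] [Module A N]
    (h : CV y N d) (z : N) (t : ℕ) :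
    ∃ (s : ℕ) (v : Fin d → N), (∏ i, y i) ^ s • z = ∑ j, y j ^ (t + s) • v j := by
  classical
  obtain ⟨b, hb⟩ := h (fun T => dv y T.1 z t) (by
    funext T
    have := Finset.card_le_univ T.1
    rw [T.2, Fintype.card_fin] at this
    omega)
  have hb' := congrFun hb ⟨Finset.univ, by simp⟩
  cases d with
  | zero =>
    have h0 : dv y (Finset.univ : Finset (Fin 0)) z t = dv y Finset.univ 0 t := by
      rw [dv_zero]
      exact hb'.symm
    obtain ⟨j, hj⟩ := (dv_eq_iff y _ _ _ _ _).mp h0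
    refine ⟨0, fun _ => 0, ?_⟩
    simpa using hj
  | succ q =>
    have hc : ∃ k, ∀ j : Fin (q+1), ∃ m, b ⟨Finset.univ.erase j, by simp⟩ =
        dv y (Finset.univ.erase j) m k := by
      choose m k hk using fun j : Fin (q+1) => exists_dv y _ (b ⟨Finset.univ.erase j, by simp⟩)
      refine ⟨∑ j, k j, fun j => ⟨(∏ i ∈ Finset.univ.erase j, y i) ^ (∑ j, k j - k j) • m j, ?_⟩⟩
      rw [hk j]
      have h1 : k j ≤ ∑ j, k j := Finset.single_le_sum (fun _ _ => Nat.zero_le _) (Finset.mem_univ j)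
      have h2 := dv_shift y (Finset.univ.erase j) (m j) (k j) (∑ j, k j - k j)
      rw [Nat.add_sub_cancel' h1] at h2
      exact h2.symm
    obtain ⟨k, hk⟩ := hc
    choose m hm using hk
    have e1 : dv y Finset.univ z t = dv y Finset.univ
        (∑ j, ((-1 : A) ^ (Finset.univ.filter (fun a => a < j)).card) • y j ^ k • m j) k := by
      rw [← hb']
      change cechD A y N q b _ = _
      rw [cechD_def, Finset.sum_attach Finset.univ (fun j => ((-1 : A) ^ (Finset.univ.filter (fun a => a < j)).card) •
        (cechMap A y N (Finset.univ.erase j) Finset.univ (Finset.erase_subset _ _))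
          (b ⟨Finset.univ.erase j, by simp⟩))]
      have hs : ∀ (s : Finset (Fin (q+1))) (f : Fin (q+1) → N), dv y Finset.univ (∑ j ∈ s, f j) k =
          ∑ j ∈ s, dv y Finset.univ (f j) k := by
        intro s f
        induction s using Finset.induction_on with
        | empty => simp [dv_zero]
        | insert a s ha ih => rw [Finset.sum_insert ha, Finset.sum_insert ha, ← dv_add, ih]
      rw [hs]
      refine Finset.sum_congr rfl fun j _ => ?_
      rw [hm j, cechMap_dv, dv_smul]
      have : (Finset.univ \ Finset.univ.erase j) = {j} := by
        ext i
        simp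
      rw [this, Finset.prod_singleton]
    obtain ⟨u, hu⟩ := (dv_eq_iff y _ _ _ _ _).mp e1
    refine ⟨u + k, fun j => ((∏ i ∈ Finset.univ.erase j, y i) ^ (u + t) *
      (-1 : A) ^ (Finset.univ.filter (fun a => a < j)).card) • m j, ?_⟩
    rw [hu, Finset.smul_sum]
    refine Finset.sum_congr rfl fun j _ => ?_
    rw [smul_smul, smul_smul, smul_smul, ← Finset.mul_prod_erase _ y (Finset.mem_univ j)]
    congr 1
    ring

theorem exists_functional {B : Type} [CommRing B] [IsDomain B] {N : Type} [AddCommGroup N]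
    [Module B N] [Module.Finite B N] (hf : ∀ b : B, (∀ z : N, b • z = 0) → b = 0) :
    ∃ φ : N →ₗ[B] B, φ ≠ 0 := by
  classical
  let K := FractionRing B
  let L := LocalizedModule (nonZeroDivisors B) N
  let ι : N →ₗ[B] L := LocalizedModule.mkLinearMap (nonZeroDivisors B) N
  obtain ⟨s, hs⟩ := Module.Finite.fg_top (R := B) (M := N)
  have h1 : ∃ z : N, ι z ≠ 0 := by
    by_contra! hcon
    have : ∀ z : N, ∃ c : nonZeroDivisors B, c • z = 0 := fun z =>
      (IsLocalizedModule.eq_zero_iff (nonZeroDivisors B) ι).mp (hcon z)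
    choose c hc using this
    have h0 : ((∏ z ∈ s, c z : nonZeroDivisors B) : B) = 0 := by
      apply hf
      intro z
      have hz : z ∈ Submodule.span B (s : Set N) := by rw [hs]; trivial
      induction hz using Submodule.span_induction with
      | mem z hz =>
        rw [← Finset.mul_prod_erase s c hz, mul_comm, Submonoid.coe_mul, mul_smul]
        have := hc z
        rw [Submonoid.smul_def] at this
        rw [this, smul_zero]
      | zero => simp
      | add a b _ _ ha hb => rw [smul_add, ha, hb, add_zero]
      | smul r a _ ha => rw [smul_comm, ha, smul_zero]
    exact nonZeroDivisors.coe_ne_zero _ h0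
  obtain ⟨z, hz⟩ := h1
  obtain ⟨f, hfz⟩ := Module.Projective.exists_dual_ne_zero K hz
  obtain ⟨b, hb⟩ := IsLocalization.exist_integer_multiples_of_finset (nonZeroDivisors B)
    (S := K) (s.image fun z => f (ι z))
  let g : N →ₗ[B] K := (b : B) • (f.restrictScalars B ∘ₗ ι)
  have hg : ∀ z, g z ∈ LinearMap.range (Algebra.linearMap B K) := by
    intro z
    have hz : z ∈ Submodule.span B (s : Set N) := by rw [hs]; trivial
    have hle : Submodule.span B (s : Set N) ≤ (LinearMap.range (Algebra.linearMap B K)).comap g := by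
      rw [Submodule.span_le]
      intro z hz
      obtain ⟨r, hr⟩ := hb (f (ι z)) (Finset.mem_image_of_mem _ hz)
      exact ⟨r, hr⟩
    exact hle hz
  have hinj : Function.Injective (Algebra.linearMap B K) := IsFractionRing.injective B K
  refine ⟨(LinearEquiv.ofInjective _ hinj).symm.toLinearMap ∘ₗ g.codRestrict _ hg, ?_⟩
  intro h
  have h2 := LinearMap.congr_fun h z
  simp only [LinearMap.comp_apply, LinearEquiv.coe_coe, LinearMap.zero_apply,
    LinearEquiv.map_eq_zero_iff] at h2
  have h3 : g z = 0 := congrArg Subtype.val h2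
  have h4 : (b : B) • f (ι z) = 0 := h3
  rw [Algebra.smul_def, mul_eq_zero] at h4
  rcases h4 with h4 | h4
  · exact nonZeroDivisors.coe_ne_zero b ((map_eq_zero_iff _ (IsFractionRing.injective B K)).mp h4)
  · exact hfz h4

open MvPolynomial in
theorem poly_contra {k : Type} [Field k] {d : ℕ} (h : MvPolynomial (Fin d) k) (h0 : h ≠ 0) :
    ∃ t : ℕ, ∀ (s : ℕ) (v : Fin d → MvPolynomial (Fin d) k),
      (∏ i, (X i : MvPolynomial (Fin d) k)) ^ s * h ≠ ∑ j, X j ^ (t + s) * v j := by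
  classical
  obtain ⟨α, hα⟩ := ne_zero_iff.mp h0
  refine ⟨∑ j, α j + 1, fun s v he => hα ?_⟩
  have e : (∏ i, (X i : MvPolynomial (Fin d) k)) ^ s = monomial (Finsupp.equivFunOnFinite.symm fun _ => s) 1 := by
    rw [monomial_eq, ← Finset.prod_pow, Finsupp.prod_fintype]
    · simp
    · simp
  have h1 := congrArg (coeff (Finsupp.equivFunOnFinite.symm (fun _ => s) + α)) he
  rw [e, coeff_monomial_mul, one_mul] at h1
  rw [h1, coeff_sum]
  refine Finset.sum_eq_zero fun j _ => ?_
  rw [X_pow_eq_monomial, coeff_monomial_mul', if_neg]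
  intro hle
  have := hle j
  have h2 : α j ≤ ∑ j, α j := Finset.single_le_sum (fun _ _ => Nat.zero_le _) (Finset.mem_univ j)
  simp at this
  omega

/-- A finite faithful module over a polynomial ring has nonvanishing top cohomology. -/
theorem not_CV_top {k : Type} [Field k] {d : ℕ} (y : Fin d → A) {N : Type} [AddCommGroup N]
    [Module A N] [Module (MvPolynomial (Fin d) k) N] [Module.Finite (MvPolynomial (Fin d) k) N]
    (hy : ∀ j (z : N), (MvPolynomial.X j : MvPolynomial (Fin d) k) • z = y j • z)
    (hf : ∀ b : MvPolynomial (Fin d) k, (∀ z : N, b • z = 0) → b = 0) : ¬ CV y N d := by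
  intro h
  obtain ⟨φ, hφ⟩ := exists_functional hf
  obtain ⟨z, hz⟩ : ∃ z, φ z ≠ 0 := by
    by_contra! hc
    exact hφ (LinearMap.ext hc)
  obtain ⟨t, ht⟩ := poly_contra (φ z) hz
  obtain ⟨s, v, e⟩ := CV_top_eq y h z t
  have hpow : ∀ j (m : ℕ) (z : N), (MvPolynomial.X j : MvPolynomial (Fin d) k) ^ m • z = y j ^ m • z := by
    intro j m
    induction m with
    | zero => simp
    | succ m ih => intro z; rw [pow_succ, pow_succ, mul_smul, mul_smul, hy, ih]
  have hprod : ∀ (S : Finset (Fin d)) (z : N),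
      (∏ i ∈ S, (MvPolynomial.X i : MvPolynomial (Fin d) k)) • z = (∏ i ∈ S, y i) • z := by
    classical
    intro S
    induction S using Finset.induction_on with
    | empty => simp
    | insert a S ha ih => intro z; rw [Finset.prod_insert ha, Finset.prod_insert ha, mul_smul, mul_smul, ih, hy]
  have hpp : ∀ (m : ℕ) (z : N),
      (∏ i, (MvPolynomial.X i : MvPolynomial (Fin d) k)) ^ m • z = (∏ i, y i) ^ m • z := by
    intro m
    induction m with
    | zero => simp
    | succ m ih => intro z; rw [pow_succ, pow_succ, mul_smul, mul_smul, hprod, ih]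
  refine ht s (fun j => φ (v j)) ?_
  have h2 := congrArg φ e
  rw [← hpp, map_smul, map_sum] at h2
  rw [← smul_eq_mul, h2]
  refine Finset.sum_congr rfl fun j _ => ?_
  rw [← hpow, map_smul, smul_eq_mul]

/-- The Krull dimension does not go up along integral extensions. -/
theorem dim_le_of_integral {B E : Type} [CommRing B] [CommRing E] [Algebra B E]
    [Algebra.IsIntegral B E] : ringKrullDim E ≤ ringKrullDim B := by
  refine Order.krullDim_le_of_strictMono
    (fun p : PrimeSpectrum E => PrimeSpectrum.comap (algebraMap B E) p) ?_
  intro p q hpq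
  change (p.asIdeal.comap (algebraMap B E)) < (q.asIdeal.comap (algebraMap B E))
  exact Ideal.IsIntegral.comap_lt_comap (I := p.asIdeal) (J := q.asIdeal) hpq

theorem inj_of_dim {k : Type} [Field k] {d : ℕ} {E : Type} [CommRing E]
    [Algebra (MvPolynomial (Fin d) k) E] [Algebra.IsIntegral (MvPolynomial (Fin d) k) E]
    (hd : ringKrullDim E = d) : Function.Injective (algebraMap (MvPolynomial (Fin d) k) E) := by
  rw [injective_iff_map_eq_zero]
  intro b hb
  by_contra hb0
  let I := RingHom.ker (algebraMap (MvPolynomial (Fin d) k) E)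
  let _ : Algebra (MvPolynomial (Fin d) k ⧸ I) E := (RingHom.kerLift _).toAlgebra
  have hin : Algebra.IsIntegral (MvPolynomial (Fin d) k ⧸ I) E := by
    refine ⟨fun x => RingHom.IsIntegral.tower_top (Ideal.Quotient.mk I) (RingHom.kerLift _) ?_ x⟩
    intro x
    exact Algebra.IsIntegral.isIntegral (R := MvPolynomial (Fin d) k) x
  have h1 := dim_le_of_integral (B := MvPolynomial (Fin d) k ⧸ I) (E := E)
  have h2 := ringKrullDim_succ_le_of_surjective (Ideal.Quotient.mk I) Ideal.Quotient.mk_surjective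
    (mem_nonZeroDivisors_of_ne_zero hb0) (Ideal.Quotient.eq_zero_iff_mem.mpr hb)
  rw [MvPolynomial.ringKrullDim_of_isNoetherianRing, ringKrullDim_eq_zero_of_field] at h2
  rw [hd] at h1
  have h3 := (add_le_add_left h1 1).trans h2
  rw [zero_add] at h3
  norm_cast at h3
  simp at h3

end TopNonvanish


/-! ### Part 9: finiteness over the polynomial ring in the parameters -/

section ParamFinite

open MvPolynomial

variable {R : Type} [CommRing R] {n : ℕ} {w : Fin n → ℤ}

theorem param_finite (hw : ∀ i, 0 < w i) {d : ℕ} (y : Fin d → MvPolynomial (Fin n) R) (δ : Fin d → ℤ)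
    (hδ : ∀ j, 0 < δ j) (hy : ∀ j, IsWeightedHomogeneous w (y j) (δ j))
    (J : Ideal (MvPolynomial (Fin n) R)) (hJ : hid w J)
    (hX : ∀ i, XX R n i ∈ (Ideal.span (Set.range y) ⊔ J).radical) :
    ((Ideal.Quotient.mk J).comp (aeval y : MvPolynomial (Fin d) R →ₐ[R] _).toRingHom).Finite := by
  classical
  obtain ⟨t, ht⟩ := exists_common_pow hX
  let θ := (Ideal.Quotient.mk J).comp (aeval y : MvPolynomial (Fin d) R →ₐ[R] _).toRingHom
  let _ : Algebra (MvPolynomial (Fin d) R) (MvPolynomial (Fin n) R ⧸ J) := θ.toAlgebra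
  let F : Set (Fin n →₀ ℕ) := {β | ∀ i, β i < t}
  have hF : F.Finite := by
    refine Set.Finite.subset (Set.finite_Iic (Finsupp.equivFunOnFinite.symm fun _ => t)) ?_
    intro β hβ i
    exact (hβ i).le
  let Q : Submodule (MvPolynomial (Fin d) R) (MvPolynomial (Fin n) R ⧸ J) :=
    Submodule.span _ (Set.image (fun β => Ideal.Quotient.mk J (monomial β 1)) F)
  have hC : ∀ r f, Ideal.Quotient.mk J f ∈ Q → Ideal.Quotient.mk J (C r * f) ∈ Q := by
    intro r f hf
    have := Q.smul_mem (C r) hf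
    rw [Algebra.smul_def, RingHom.algebraMap_toAlgebra] at this
    simpa [θ] using this
  have hyQ : ∀ j f, Ideal.Quotient.mk J f ∈ Q → Ideal.Quotient.mk J (f * y j) ∈ Q := by
    intro j f hf
    have := Q.smul_mem (X j) hf
    rw [Algebra.smul_def, RingHom.algebraMap_toAlgebra] at this
    rw [mul_comm]
    simpa [θ] using this
  have main : ∀ (N : ℕ) (f : MvPolynomial (Fin n) R),
      (∀ β ∈ f.support, Finsupp.weight w β < N) → Ideal.Quotient.mk J f ∈ Q := by
    intro N
    induction N with
    | zero =>
      intro f hf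
      have : f = 0 := by
        rw [← support_eq_empty, Finset.eq_empty_iff_forall_notMem]
        intro β hβ
        have h1 := hf β hβ
        have h2 := weight_nonneg hw β
        simp at h1
        omega
      rw [this, map_zero]
      exact Q.zero_mem
    | succ N ih =>
      intro f hf
      rw [f.as_sum, map_sum]
      refine Q.sum_mem fun β hβ => ?_
      have hβN := hf β hβ
      have e : monomial β (coeff β f) = C (coeff β f) * monomial β 1 := by
        rw [C_mul_monomial, mul_one]
      rw [e]
      apply hC
      by_cases hβF : β ∈ F
      · exact Submodule.subset_span ⟨β, hβF, rfl⟩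
      · have hβF' : ∃ i, t ≤ β i := by
          by_contra! hc
          exact hβF hc
        obtain ⟨i, hi⟩ := hβF'
        have hm : (monomial β 1 : MvPolynomial (Fin n) R) ∈ Ideal.span (Set.range y) ⊔ J :=
          monomial_mem_of_ge (ht i) β hi 1
        obtain ⟨u, hu, h, hh, hs⟩ := Submodule.mem_sup.mp hm
        obtain ⟨a, rfl⟩ := (Submodule.mem_span_range_iff_exists_fun _).mp hu
        have hs2 := congrArg (weightedHomogeneousComponent w (Finsupp.weight w β)) hs
        rw [(isWeightedHomogeneous_monomial w β (1 : R) rfl).weightedHomogeneousComponent_same,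
          map_add, map_sum] at hs2
        rw [← hs2, map_add, map_sum]
        refine Q.add_mem (Q.sum_mem fun j _ => ?_) ?_
        · have e2 : weightedHomogeneousComponent w (Finsupp.weight w β) (a j • y j) =
              weightedHomogeneousComponent w (Finsupp.weight w β - δ j) (a j) * y j := by
            rw [mul_comm, ← comp_mul (hy j), smul_eq_mul, mul_comm, sub_add_cancel]
          rw [e2]
          apply hyQ
          apply ih
          intro γ hγ
          have := weightedHomogeneousComponent_isWeightedHomogeneous (w := w)
            (Finsupp.weight w β - δ j) (a j) (mem_support_iff.mp hγ)
          rw [this]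
          have := hδ j
          push_cast at hβN
          omega
        · rw [Ideal.Quotient.eq_zero_iff_mem.mpr (hJ h hh _)]
          exact Q.zero_mem
  have htop : Q = ⊤ := by
    rw [eq_top_iff]
    rintro x -
    obtain ⟨f, rfl⟩ := Ideal.Quotient.mk_surjective x
    refine main ((∑ β ∈ f.support, Finsupp.weight w β).toNat + 1) f fun β hβ => ?_
    have := Finset.single_le_sum (f := fun β => Finsupp.weight w β)
      (fun β _ => weight_nonneg hw β) hβ
    push_cast
    omega
  change Module.Finite (MvPolynomial (Fin d) R) (MvPolynomial (Fin n) R ⧸ J)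
  refine ⟨⟨(hF.image (fun β => Ideal.Quotient.mk J (monomial β 1))).toFinset, ?_⟩⟩
  rw [Set.Finite.coe_toFinset]
  exact htop

theorem not_CV_fiber (hw : ∀ i, 0 < w i) [IsLocalRing R] {N : Type} [AddCommGroup N]
    [Module (MvPolynomial (Fin n) R) N] [Module.Finite (MvPolynomial (Fin n) R) N] {d : ℕ}
    (hd : ringKrullDim (MvPolynomial (Fin n) R ⧸
      Module.annihilator (MvPolynomial (Fin n) R) N) = d)
    (hJ : hid w (Module.annihilator (MvPolynomial (Fin n) R) N))
    (hm : (IsLocalRing.maximalIdeal R).map C ≤ Module.annihilator (MvPolynomial (Fin n) R) N)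
    (y : Fin d → MvPolynomial (Fin n) R) (δ : Fin d → ℤ)
    (hδ : ∀ j, 0 < δ j) (hy : ∀ j, IsWeightedHomogeneous w (y j) (δ j))
    (hX : ∀ i, XX R n i ∈ (Ideal.span (Set.range y) ⊔
      Module.annihilator (MvPolynomial (Fin n) R) N).radical) : ¬ CV y N d := by
  classical
  have hfin := param_finite hw y δ hδ hy _ hJ hX
  set J := Module.annihilator (MvPolynomial (Fin n) R) N with hJdef
  let k := R ⧸ IsLocalRing.maximalIdeal R
  let _ : Field k := Ideal.Quotient.field _
  let σ : k →+* MvPolynomial (Fin n) R ⧸ J :=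
    Ideal.Quotient.lift _ ((Ideal.Quotient.mk J).comp C) fun a ha =>
      Ideal.Quotient.eq_zero_iff_mem.mpr (hm (Ideal.mem_map_of_mem _ ha))
  let θ : MvPolynomial (Fin d) k →+* MvPolynomial (Fin n) R ⧸ J :=
    eval₂Hom σ (fun j => Ideal.Quotient.mk J (y j))
  have hθX : ∀ j, θ (X j) = Ideal.Quotient.mk J (y j) := fun j => by simp [θ]
  have hθfin : θ.Finite := by
    have e : θ.comp (MvPolynomial.map (Ideal.Quotient.mk (IsLocalRing.maximalIdeal R))) =
        (Ideal.Quotient.mk J).comp (aeval y : MvPolynomial (Fin d) R →ₐ[R] _).toRingHom := by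
      apply MvPolynomial.ringHom_ext
      · intro r
        simp [θ, σ]
        rfl
      · intro j
        simp [θ]
    rw [← e] at hfin
    exact RingHom.Finite.of_comp_finite hfin
  let _ : Algebra (MvPolynomial (Fin d) k) (MvPolynomial (Fin n) R ⧸ J) := θ.toAlgebra
  have hfinE : Module.Finite (MvPolynomial (Fin d) k) (MvPolynomial (Fin n) R ⧸ J) := hθfin
  have hintg : Algebra.IsIntegral (MvPolynomial (Fin d) k) (MvPolynomial (Fin n) R ⧸ J) :=
    Algebra.IsIntegral.of_finite _ _
  have hinj : Function.Injective θ := inj_of_dim hd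
  let hTB := Module.isTorsionBySet_annihilator (MvPolynomial (Fin n) R) N
  let _ : Module (MvPolynomial (Fin n) R ⧸ J) N := hTB.module
  have : IsScalarTower (MvPolynomial (Fin n) R) (MvPolynomial (Fin n) R ⧸ J) N := hTB.isScalarTower
  have hNfin : Module.Finite (MvPolynomial (Fin n) R ⧸ J) N := by
    exact Module.Finite.of_restrictScalars_finite (MvPolynomial (Fin n) R) _ N
  let _ : Module (MvPolynomial (Fin d) k) N := Module.compHom N θ
  have hsm : ∀ (b : MvPolynomial (Fin d) k) (z : N), b • z = θ b • z := fun _ _ => rfl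
  have hst : IsScalarTower (MvPolynomial (Fin d) k) (MvPolynomial (Fin n) R ⧸ J) N := by
    refine ⟨fun b e z => ?_⟩
    rw [hsm, Algebra.smul_def, mul_smul]
    rfl
  have hBfin : Module.Finite (MvPolynomial (Fin d) k) N :=
    Module.Finite.trans (MvPolynomial (Fin n) R ⧸ J) N
  refine not_CV_top y (k := k) ?_ ?_
  · intro j z
    rw [hsm, hθX]
    rfl
  · intro b hb
    apply hinj
    rw [map_zero]
    obtain ⟨f, hf⟩ := Ideal.Quotient.mk_surjective (θ b)
    rw [← hf, Ideal.Quotient.eq_zero_iff_mem, hJdef, Module.mem_annihilator]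
    intro z
    have := hb z
    rw [hsm, ← hf] at this
    exact this

end ParamFinite


open MvPolynomial in
/-- **Cohomology of the special fiber.**  Let `(R, 𝔪, k)` be a Noetherian local ring,
`S := R[X_1, …, X_n]` graded with `deg X_i = w i > 0`, `M` a finitely generated graded
`S`-module, `M̄ := M ⊗_R k` and `d := dim M̄`.  Then (local cohomology being computed by
the Čech complex on the variables):
* the natural graded map `H^d_{S₊}(M) ⊗_R k → H^d_{S₊}(M̄)`, characterized on cocycles
  by `z ⊗ c ↦ (class of the cocycle `T ↦ (z_T) ⊗ c`)`, is an isomorphism;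
* `d = max { i | H^i_{S₊}(M) ≠ 0 }` (in particular `H^i_{S₊}(M) = 0` for `i > d`);
* `a^d(M) = a^d(M̄) ∈ ℤ`. -/
theorem cohomology_special_fiber
    (R : Type) [CommRing R] [IsNoetherianRing R] [IsLocalRing R]
    {n : ℕ} (w : Fin n → ℤ) (hw : ∀ i, 0 < w i)
    (M : Type) [AddCommGroup M]
    [Module (MvPolynomial (Fin n) R) M] [Module R M]
    [IsScalarTower R (MvPolynomial (Fin n) R) M]
    [Module.Finite (MvPolynomial (Fin n) R) M]
    (ℳ : ℤ → AddSubgroup M) [DirectSum.Decomposition ℳ]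
    [SetLike.GradedSMul (weightedHomogeneousSubmodule R w) ℳ]
    (d : ℕ)
    (hd : ringKrullDim ((MvPolynomial (Fin n) R) ⧸
      Module.annihilator (MvPolynomial (Fin n) R)
        (TensorProduct R M (R ⧸ IsLocalRing.maximalIdeal R))) = (d : WithBot (WithTop ℕ))) :
    (∃ g : TensorProduct R
        (RestrictScalars R (MvPolynomial (Fin n) R)
          (lcMod (MvPolynomial (Fin n) R) (fun j : Fin n => (X j : MvPolynomial (Fin n) R)) M d))
        (R ⧸ IsLocalRing.maximalIdeal R) →ₗ[R]
      RestrictScalars R (MvPolynomial (Fin n) R)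
        (lcMod (MvPolynomial (Fin n) R) (fun j : Fin n => (X j : MvPolynomial (Fin n) R))
          (TensorProduct R M (R ⧸ IsLocalRing.maximalIdeal R)) d),
      (∀ (z : ↥(LinearMap.ker (cechD (MvPolynomial (Fin n) R)
            (fun j : Fin n => (X j : MvPolynomial (Fin n) R)) M d)))
        (c : R ⧸ IsLocalRing.maximalIdeal R),
        ∃ zz : ↥(LinearMap.ker (cechD (MvPolynomial (Fin n) R)
            (fun j : Fin n => (X j : MvPolynomial (Fin n) R))
            (TensorProduct R M (R ⧸ IsLocalRing.maximalIdeal R)) d)),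
          (∀ T, (zz : cechC (MvPolynomial (Fin n) R)
              (fun j : Fin n => (X j : MvPolynomial (Fin n) R))
              (TensorProduct R M (R ⧸ IsLocalRing.maximalIdeal R)) d) T =
            cechTmul R (MvPolynomial (Fin n) R) M (R ⧸ IsLocalRing.maximalIdeal R)
              (fun j : Fin n => (X j : MvPolynomial (Fin n) R)) T.1
              ((z : cechC (MvPolynomial (Fin n) R)
                (fun j : Fin n => (X j : MvPolynomial (Fin n) R)) M d) T) c) ∧
          g ((Submodule.Quotient.mk z :
              lcMod (MvPolynomial (Fin n) R)
                (fun j : Fin n => (X j : MvPolynomial (Fin n) R)) M d) ⊗ₜ[R] c) =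
            (Submodule.Quotient.mk zz :
              lcMod (MvPolynomial (Fin n) R)
                (fun j : Fin n => (X j : MvPolynomial (Fin n) R))
                (TensorProduct R M (R ⧸ IsLocalRing.maximalIdeal R)) d)) ∧
      Function.Bijective g) ∧
    (Nontrivial (lcMod (MvPolynomial (Fin n) R)
        (fun j : Fin n => (X j : MvPolynomial (Fin n) R)) M d) ∧
      ∀ i : ℕ, d < i → Subsingleton (lcMod (MvPolynomial (Fin n) R)
        (fun j : Fin n => (X j : MvPolynomial (Fin n) R)) M i)) ∧
    (∃ e : ℤ,
      IsGreatest {μ : ℤ | lcGradeNonzero (MvPolynomial (Fin n) R)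
        (fun j : Fin n => (X j : MvPolynomial (Fin n) R)) M ℳ w d μ} e ∧
      IsGreatest {μ : ℤ | lcGradeNonzero (MvPolynomial (Fin n) R)
        (fun j : Fin n => (X j : MvPolynomial (Fin n) R))
        (TensorProduct R M (R ⧸ IsLocalRing.maximalIdeal R))
        (fun ν => AddSubgroup.closure
          {z : TensorProduct R M (R ⧸ IsLocalRing.maximalIdeal R) |
            ∃ m ∈ ℳ ν, ∃ c, z = m ⊗ₜ[R] c}) w d μ} e) := by
  obtain ⟨y, δ, hδ, hy, hyX, hX⟩ := module_param hw (GS.ofDecomp (R := R) (w := w) ℳ) d hd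
  have hJ : ∀ a ∈ Module.annihilator (MvPolynomial (Fin n) R) M, ∀ m : M, a • m = 0 :=
    fun a ha m => Module.mem_annihilator.mp ha m
  have hy' : ∀ J : Ideal (MvPolynomial (Fin n) R), ∀ j,
      y j ∈ (Ideal.span (Set.range (XX R n)) ⊔ J).radical :=
    fun J j => Ideal.le_radical (le_sup_left (a := Ideal.span (Set.range (XX R n))) (hyX j))
  have hvan : ∀ i, d < i → ∀ (K : Type) [AddCommGroup K] [Module (MvPolynomial (Fin n) R) K],
      (∀ a ∈ Module.annihilator (MvPolynomial (Fin n) R) M, ∀ m : K, a • m = 0) →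
        CV (XX R n) K i := by
    intro i hi K _ _ hK
    exact (CV_compare (XX R n) y _ hX (hy' _) i K hK).mpr (CV_of_card_lt y K i hi)
  have hvan1 := hvan (d + 1) (Nat.lt_succ_self d)
  have hle : Module.annihilator (MvPolynomial (Fin n) R) M ≤
      Module.annihilator (MvPolynomial (Fin n) R)
        (TensorProduct R M (R ⧸ IsLocalRing.maximalIdeal R)) := by
    intro a ha
    rw [Module.mem_annihilator]
    intro z
    obtain ⟨m, rfl⟩ := sfib_surjective (A := MvPolynomial (Fin n) R) (IsLocalRing.maximalIdeal R) z
    rw [← map_smul, hJ a ha, map_zero]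
  have hX' : ∀ i, XX R n i ∈ (Ideal.span (Set.range y) ⊔
      Module.annihilator (MvPolynomial (Fin n) R)
        (TensorProduct R M (R ⧸ IsLocalRing.maximalIdeal R))).radical :=
    fun i => Ideal.radical_mono (sup_le_sup_left hle _) (hX i)
  have hfinT : Module.Finite (MvPolynomial (Fin n) R)
      (TensorProduct R M (R ⧸ IsLocalRing.maximalIdeal R)) :=
    Module.Finite.of_surjective _
      (sfib_surjective (A := MvPolynomial (Fin n) R) (M := M) (IsLocalRing.maximalIdeal R))
  have hnT : ¬ CV (XX R n) (TensorProduct R M (R ⧸ IsLocalRing.maximalIdeal R)) d := by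
    intro h
    refine not_CV_fiber hw hd
      (hid_ann ((GS.ofDecomp (R := R) (w := w) ℳ).tens (R ⧸ IsLocalRing.maximalIdeal R)))
      (map_C_le_ann _) y δ hδ hy hX' ?_
    exact (CV_compare (XX R n) y _ hX' (hy' _) d _
      (fun a ha m => Module.mem_annihilator.mp ha m)).mp h
  have hnM : ¬ CV (XX R n) M d := by
    intro h
    apply hnT
    intro z hz
    obtain ⟨b, hb, rfl⟩ := sfib_lift (XX R n) (IsLocalRing.maximalIdeal R) d _ hJ hvan1 z hz
    obtain ⟨c, rfl⟩ := h b hb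
    exact ⟨cechF (XX R n) (d - 1) (sfib (IsLocalRing.maximalIdeal R)) c,
      cechDprev_cechF (XX R n) d _ c⟩
  refine ⟨special_iso (XX R n) (IsLocalRing.maximalIdeal R) d _ hJ hvan1, ⟨?_, ?_⟩, ?_⟩
  · rw [← not_subsingleton_iff_nontrivial]
    intro hs
    exact hnM (CV_of_subsingleton (XX R n) d)
  · intro i hi
    exact subsingleton_lcMod (XX R n) i (hvan i hi M hJ)
  · obtain ⟨hfg, a, ha⟩ := FG_bound d y δ hδ hy hyX _ hX M (GS.ofDecomp (R := R) (w := w) ℳ) hJ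
    obtain ⟨e, he, hmax⟩ := Int.exists_greatest_of_bdd
      (P := fun μ => Hgr (GS.ofDecomp (R := R) (w := w) ℳ) d μ ≠ ⊥)
      ⟨a, fun μ hμ => by
        by_contra hc
        exact hμ (ha μ (not_le.mp hc).le)⟩
      (by
        by_contra! hc
        exact hnM (exists_Hgr_ne_bot _ d hc))
    have h1 := lcGradeNonzero_iff (GS.ofDecomp (R := R) (w := w) ℳ) ℳ (GS.ofDecomp_mem ℳ) d
    have h2 := lcGradeNonzero_iff
      ((GS.ofDecomp (R := R) (w := w) ℳ).tens (R ⧸ IsLocalRing.maximalIdeal R)) _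
      (GS.tens_mem (GS.ofDecomp (R := R) (w := w) ℳ) ℳ (GS.ofDecomp_mem ℳ)
        (R ⧸ IsLocalRing.maximalIdeal R)) d
    have h3 := fun μ => special_graded (GS.ofDecomp (R := R) (w := w) ℳ) d _ hJ hvan1 μ (hfg μ)
    refine ⟨e, ⟨(h1 e).mpr he, fun μ hμ => hmax μ ((h1 μ).mp hμ)⟩,
      ⟨(h2 e).mpr fun hc => he ((h3 e).mpr hc), fun μ hμ => hmax μ fun hc => ?_⟩⟩
    exact (h2 μ).mp hμ ((h3 μ).mp hc)
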